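/- arXiv:2105.08860 — 2 statements merged into one kernel-verified Lean document; each statement's English description precedes it below -/
import Mathlib

section
/- Fix a square-free integer n > 7. Then for all but finitely many totally real biquadratic fields K (subfields of ℝ) with √n ∈ K, the Pythagoras number of the ring of integers O_K is at least 6; that is, the set of totally real biquadratic fields K containing √n for which every sum of squares in O_K is a sum of 5 squares in O_K is finite. -/
/-!
The argument starts from an integer `α` of `ℚ(√n)` that is a sum of five squares of integers but
not of four (`exists_length_five`). For most `n` one can take `α = 7 + (1 + √n)²` or
`α = 7 + ((1 + √n)/2)²`, according to `n` modulo `4`: the size of `α` forces a representation by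
four squares to have exactly one summand involving `√n`, which leaves `7` as a sum of three integer
squares. The field `ℚ(√13)` needs a separate element.

A biquadratic field containing `√n` is `ℚ(√n, √m)` for some squarefree `m ≠ n`
(`exists_biqField_eq`), so it is enough to treat all large `m`. Among the integers `u + v√m` of
this field with `v ≠ 0`, choose one, `w`, minimising the trace of `v²`, and translate `u` by an
element of `ℤ[√n]` so that the conjugates `u - v√m` are bounded in terms of `n` alone. Then
`α + w²` is a sum of six squares. Suppose that it equals `∑ (uᵢ + vᵢ√m)²` with five terms.
Under `√m ↦ -√m` this element stays bounded, so the `uᵢ - vᵢ√m` are bounded, and comparing the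
coefficients of `√m` gives `∑ vᵢ² - v² = O(1/√m)` in both real embeddings of `ℚ(√n)`
(`real_close`). The coordinates of `∑ vᵢ² - v²` have denominators bounded independently of `m`
(`BQ.im_coords`), so for large `m` this difference is zero. Minimality of `v` now forces one `vᵢ`
to be `± v` and the others to vanish; then `uᵢ² = u²` for that index, and `α` is the sum of the
four remaining squares, a contradiction (`core_algebra`, `core`).

The computations take place in the coordinate models `QF n` and `BQ n m` of the two fields, and the
result is carried to subfields of `ℝ` by the injective map `BQ.emb`.
-/

/-- The totally real biquadratic field `ℚ(√p, √q)` as a subfield of `ℝ`. -/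
noncomputable def biqField (p q : ℕ) : IntermediateField ℚ ℝ :=
  IntermediateField.adjoin ℚ {Real.sqrt p, Real.sqrt q}

/-- The ring of integers of a subfield `K` of `ℝ`, viewed as the set of elements
of `K` that are integral over `ℤ`. -/
def ringOfInt (K : IntermediateField ℚ ℝ) : Set ℝ :=
  {x : ℝ | x ∈ K ∧ IsIntegral ℤ x}

/-- `α` is a sum of `n` squares of elements of `S`. -/
def SumOfNSquaresIn (S : Set ℝ) (n : ℕ) (α : ℝ) : Prop :=
  ∃ x : Fin n → ℝ, (∀ i, x i ∈ S) ∧ α = ∑ i, x i ^ 2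

/-- `α` is a sum of squares of elements of `S`. -/
def IsSumOfSquaresIn (S : Set ℝ) (α : ℝ) : Prop := ∃ n, SumOfNSquaresIn S n α

/-- `K` is a totally real biquadratic field. -/
def IsBiquadratic (K : IntermediateField ℚ ℝ) : Prop :=
  ∃ p q : ℕ, Squarefree p ∧ Squarefree q ∧ 1 < p ∧ 1 < q ∧ p ≠ q ∧ K = biqField p q

/-! ### Coordinate models of the fields and their integers -/

/-- The quadratic field `ℚ(√n)` in coordinates: `⟨a, b⟩` stands for `a + b√n`. -/
abbrev QF (n : ℕ) : Type := QuadraticAlgebra ℚ (n : ℚ) 0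

/-- The biquadratic field `ℚ(√n, √m)` in coordinates over `ℚ(√n)`: `⟨u, v⟩` stands for
`u + v√m`. -/
abbrev BQ (n m : ℕ) : Type := QuadraticAlgebra (QF n) (m : QF n) 0

lemma rat_int_of_squarefree {m : ℕ} (hm : Squarefree m) {q : ℚ} {k : ℤ}
    (h : (m : ℚ) * q ^ 2 = k) : ∃ l : ℤ, q = l := by
  have hd : (q.den : ℚ) ≠ 0 := by exact_mod_cast q.den_nz
  have h1 : (m : ℤ) * q.num ^ 2 = k * (q.den : ℤ) ^ 2 := by
    have : (m : ℚ) * (q.num : ℚ) ^ 2 = k * (q.den : ℚ) ^ 2 := by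
      rw [← h]
      nth_rewrite 2 [← Rat.num_div_den q]
      field_simp
    exact_mod_cast this
  have hcop : IsCoprime ((q.den : ℤ) ^ 2) (q.num ^ 2) := by
    apply IsCoprime.pow
    rw [Int.isCoprime_iff_gcd_eq_one]
    simpa [Int.gcd, Nat.Coprime, Nat.gcd_comm] using q.reduced
  have h2 : ((q.den : ℤ) ^ 2) ∣ (m : ℤ) :=
    hcop.dvd_of_dvd_mul_right ⟨k, by rw [h1]; ring⟩
  have h3 : q.den * q.den ∣ m := by
    rw [← sq]; exact_mod_cast h2
  have h4 : q.den = 1 := Nat.isUnit_iff.mp (hm _ h3)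
  exact ⟨q.num, (Rat.den_eq_one_iff q).mp h4 |>.symm⟩

lemma rat_int_of_sq {q : ℚ} {k : ℤ} (h : q ^ 2 = k) : ∃ l : ℤ, q = l :=
  rat_int_of_squarefree (m := 1) squarefree_one (k := k) (by simpa using h)

lemma eq_of_mul_sq_eq {n m : ℕ} (hn : Squarefree n) (hm : Squarefree m) {q : ℚ}
    (h : (n : ℚ) * q ^ 2 = m) : n = m := by
  obtain ⟨l, rfl⟩ := rat_int_of_squarefree hn (k := m) (by simpa using h)
  have h1 : (n : ℤ) * l ^ 2 = m := by exact_mod_cast h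
  have h2 : n * (l.natAbs * l.natAbs) = m := by
    have : ((n * (l.natAbs * l.natAbs) : ℕ) : ℤ) = m := by
      push_cast
      rw [← h1, ← sq, sq_abs]
    exact_mod_cast this
  have h3 := Nat.isUnit_iff.mp (hm l.natAbs ⟨n, by rw [← h2]; ring⟩)
  simpa [h3] using h2

lemma not_sq_of_squarefree {n : ℕ} (hn : Squarefree n) (h1 : 1 < n) (q : ℚ) : q ^ 2 ≠ n :=
  fun h => h1.ne (eq_of_mul_sq_eq squarefree_one hn (q := q) (by simpa using h))

lemma fact_QF {n : ℕ} (hn : Squarefree n) (h1 : 1 < n) :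
    Fact (∀ r : ℚ, r ^ 2 ≠ (n : ℚ) + 0 * r) :=
  ⟨fun r => by simpa using not_sq_of_squarefree hn h1 r⟩

lemma QF.sq_eq_natCast {n m : ℕ} {z : QF n} (h : z ^ 2 = (m : QF n)) :
    z.re ^ 2 = m ∨ (n : ℚ) * z.im ^ 2 = m := by
  have h1 := congrArg QuadraticAlgebra.re h
  have h2 := congrArg QuadraticAlgebra.im h
  simp [sq] at h1 h2
  have h3 : z.re * z.im = 0 := by linarith
  rcases mul_eq_zero.mp h3 with h | h
  · right; rw [h] at h1; linarith
  · left; rw [h] at h1; linarith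

lemma fact_BQ {n m : ℕ} (hn : Squarefree n) (hm : Squarefree m) (h1m : 1 < m)
    (hnm : m ≠ n) : Fact (∀ r : QF n, r ^ 2 ≠ (m : QF n) + 0 * r) :=
  ⟨fun r h => by
    rw [zero_mul, add_zero] at h
    rcases QF.sq_eq_natCast h with h | h
    · exact not_sq_of_squarefree hm h1m _ h
    · exact hnm (eq_of_mul_sq_eq hn hm h).symm⟩

lemma rat_int_of_isIntegral {q : ℚ} (h : IsIntegral ℤ q) : ∃ l : ℤ, q = l := by
  obtain ⟨l, hl⟩ := IsIntegrallyClosed.isIntegral_iff.mp h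
  exact ⟨l, by simpa using hl.symm⟩

lemma isIntegral_star {R : Type*} [CommRing R] {a : R} {z : QuadraticAlgebra R a 0}
    (h : IsIntegral ℤ z) : IsIntegral ℤ (star z) :=
  h.map ((starRingEnd (QuadraticAlgebra R a 0)).toIntAlgHom)

lemma isIntegral_two_re {R : Type*} [CommRing R] {a : R} {z : QuadraticAlgebra R a 0}
    (h : IsIntegral ℤ z) : IsIntegral ℤ (2 * z.re) := by
  have h1 := h.add (isIntegral_star h)
  have h2 : z + star z = algebraMap R _ (2 * z.re) := by
    ext <;> simp; ring
  rw [h2] at h1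
  exact (isIntegral_algebraMap_iff QuadraticAlgebra.algebraMap_injective).mp h1

lemma isIntegral_norm {R : Type*} [CommRing R] {a : R} {z : QuadraticAlgebra R a 0}
    (h : IsIntegral ℤ z) : IsIntegral ℤ (z.re ^ 2 - a * z.im ^ 2) := by
  have h1 := h.mul (isIntegral_star h)
  have h2 : z * star z = algebraMap R _ (z.re ^ 2 - a * z.im ^ 2) := by
    ext
    · simp only [QuadraticAlgebra.re_mul, QuadraticAlgebra.re_star, QuadraticAlgebra.im_star,
        QuadraticAlgebra.algebraMap_re]
      ring
    · simp only [QuadraticAlgebra.im_mul, QuadraticAlgebra.re_star, QuadraticAlgebra.im_star,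
        QuadraticAlgebra.algebraMap_im]
      ring
  rw [h2] at h1
  exact (isIntegral_algebraMap_iff QuadraticAlgebra.algebraMap_injective).mp h1

/-- An algebraic integer of `ℚ(√n)` has half-integral coordinates and integral norm. -/
lemma QF.coords {n : ℕ} (hn : Squarefree n) {z : QF n} (h : IsIntegral ℤ z) :
    ∃ k l j : ℤ, 2 * z.re = k ∧ 2 * z.im = l ∧ z.re ^ 2 - n * z.im ^ 2 = j := by
  obtain ⟨k, hk⟩ := rat_int_of_isIntegral (isIntegral_two_re h)
  obtain ⟨j, hj⟩ := rat_int_of_isIntegral (isIntegral_norm h)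
  obtain ⟨l, hl⟩ := rat_int_of_squarefree hn (q := 2 * z.im) (k := k ^ 2 - 4 * j) (by
    push_cast; rw [← hk, ← hj]; ring)
  exact ⟨k, l, j, hk, hl, hj⟩

/-- The converse criterion: an element is integral as soon as its trace and norm are. -/
lemma isIntegral_of_trace_norm {n : ℕ} {z : QF n} {k j : ℤ} (hk : 2 * z.re = k)
    (hj : z.re ^ 2 - n * z.im ^ 2 = j) : IsIntegral ℤ z := by
  refine ⟨Polynomial.X ^ 2 - Polynomial.C k * Polynomial.X + Polynomial.C j, ?_, ?_⟩
  · monicity!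
  · simp only [Polynomial.eval₂_add, Polynomial.eval₂_sub, Polynomial.eval₂_mul,
      Polynomial.eval₂_pow, Polynomial.eval₂_X, Polynomial.eval₂_C]
    simp only [eq_intCast]
    ext
    · simp [sq, ← hk, ← hj]; ring
    · simp [sq, ← hk]; ring

/-- The `√m`-part `c + d√n` of an algebraic integer of `ℚ(√n, √m)` has coordinates `c`, `d` of
denominator bounded independently of `m`; this is where squarefreeness of `m` enters. -/
lemma BQ.im_coords {n m : ℕ} (hm : Squarefree m) {y : BQ n m}
    (h : IsIntegral ℤ y) :
    ∃ k l : ℤ, 4 * y.im.re = k ∧ 4 * n * y.im.im = l := by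
  have h1 := h.sub (isIntegral_star h)
  have h2 : IsIntegral ℤ ((y.im + y.im) ^ 2 * (m : QF n)) := by
    have h3 := h1.pow 2
    have h4 : (y - star y) ^ 2 = algebraMap (QF n) _ ((y.im + y.im) ^ 2 * (m : QF n)) := by
      ext1 <;> simp [sq]; ring
    rw [h4] at h3
    exact (isIntegral_algebraMap_iff QuadraticAlgebra.algebraMap_injective).mp h3
  obtain ⟨k, hk⟩ := rat_int_of_isIntegral (isIntegral_two_re h2)
  obtain ⟨j, hj⟩ := rat_int_of_isIntegral (isIntegral_norm h2)
  obtain ⟨i, hi⟩ := rat_int_of_sq (q := 4 * m * (y.im.re ^ 2 - n * y.im.im ^ 2)) (k := j) (by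
    rw [← hj]; simp [sq]; ring)
  simp [sq] at hk
  obtain ⟨a, ha⟩ := rat_int_of_squarefree hm (q := 4 * y.im.re) (k := k + 2 * i) (by
    push_cast; rw [← hk, ← hi]; ring)
  obtain ⟨b, hb⟩ := rat_int_of_squarefree hm (q := 4 * n * y.im.im) (k := n * (k - 2 * i)) (by
    push_cast; rw [← hk, ← hi]; ring)
  exact ⟨a, b, ha, hb⟩

/-! ### Sums of five squares in quadratic fields that are not sums of four -/

lemma three_sq_ne_seven (a b c : ℤ) : a ^ 2 + b ^ 2 + c ^ 2 ≠ 7 := by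
  intro h
  have h8 : ((a : ZMod 8)) ^ 2 + (b : ZMod 8) ^ 2 + (c : ZMod 8) ^ 2 = 7 := by
    have := congrArg (fun t : ℤ => (t : ZMod 8)) h
    push_cast at this
    exact this
  revert h8
  generalize (a : ZMod 8) = x
  generalize (b : ZMod 8) = y
  generalize (c : ZMod 8) = z
  revert x y z
  decide

lemma four_sq_eq_one {a b c d : ℤ} (h : a ^ 2 + b ^ 2 + c ^ 2 + d ^ 2 = 1) :
    (a ^ 2 = 1 ∧ b = 0 ∧ c = 0 ∧ d = 0) ∨ (b ^ 2 = 1 ∧ a = 0 ∧ c = 0 ∧ d = 0) ∨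
    (c ^ 2 = 1 ∧ a = 0 ∧ b = 0 ∧ d = 0) ∨ (d ^ 2 = 1 ∧ a = 0 ∧ b = 0 ∧ c = 0) := by
  have key : ∀ x : ℤ, x ^ 2 ≤ 1 → x = 0 ∨ x ^ 2 = 1 := fun x hx => by
    have h1 : -1 ≤ x := by nlinarith
    have h2 : x ≤ 1 := by nlinarith
    interval_cases x <;> simp
  have ha := key a (by nlinarith [sq_nonneg a, sq_nonneg b, sq_nonneg c, sq_nonneg d])
  have hb := key b (by nlinarith [sq_nonneg a, sq_nonneg b, sq_nonneg c, sq_nonneg d])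
  have hc := key c (by nlinarith [sq_nonneg a, sq_nonneg b, sq_nonneg c, sq_nonneg d])
  have hd := key d (by nlinarith [sq_nonneg a, sq_nonneg b, sq_nonneg c, sq_nonneg d])
  clear key
  rcases ha with ha | ha <;> rcases hb with hb | hb <;> rcases hc with hc | hc <;>
    rcases hd with hd | hd <;> simp [ha, hb, hc, hd] at h ⊢

lemma four_sq_eq_two {a b c d : ℤ} (h : a ^ 2 + b ^ 2 + c ^ 2 + d ^ 2 = 2) :
    (a ^ 2 = 1 ∧ b ^ 2 = 1 ∧ c = 0 ∧ d = 0) ∨ (a ^ 2 = 1 ∧ c ^ 2 = 1 ∧ b = 0 ∧ d = 0) ∨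
    (a ^ 2 = 1 ∧ d ^ 2 = 1 ∧ b = 0 ∧ c = 0) ∨ (b ^ 2 = 1 ∧ c ^ 2 = 1 ∧ a = 0 ∧ d = 0) ∨
    (b ^ 2 = 1 ∧ d ^ 2 = 1 ∧ a = 0 ∧ c = 0) ∨ (c ^ 2 = 1 ∧ d ^ 2 = 1 ∧ a = 0 ∧ b = 0) := by
  have key : ∀ x : ℤ, x ^ 2 ≤ 2 → x = 0 ∨ x ^ 2 = 1 := fun x hx => by
    have h1 : -1 ≤ x := by nlinarith
    have h2 : x ≤ 1 := by nlinarith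
    interval_cases x <;> simp
  have ha := key a (by nlinarith [sq_nonneg a, sq_nonneg b, sq_nonneg c, sq_nonneg d])
  have hb := key b (by nlinarith [sq_nonneg a, sq_nonneg b, sq_nonneg c, sq_nonneg d])
  have hc := key c (by nlinarith [sq_nonneg a, sq_nonneg b, sq_nonneg c, sq_nonneg d])
  have hd := key d (by nlinarith [sq_nonneg a, sq_nonneg b, sq_nonneg c, sq_nonneg d])
  clear key
  rcases ha with ha | ha <;> rcases hb with hb | hb <;> rcases hc with hc | hc <;>
    rcases hd with hd | hd <;> simp [ha, hb, hc, hd] at h ⊢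

/-- The arithmetic core when the integers of `ℚ(√n)` are `ℤ[√n]`: the element `7 + (1 + √n)²`
is not a sum of four squares. -/
lemma no_four_of_ne_one {n : ℕ} (hn : 10 ≤ n) (a b : Fin 4 → ℤ)
    (h1 : ∑ i, (a i ^ 2 + n * b i ^ 2) = 8 + n) (h2 : ∑ i, a i * b i = 1) : False := by
  simp only [Fin.sum_univ_four] at h1 h2
  generalize a 0 = a0 at *
  generalize a 1 = a1 at *
  generalize a 2 = a2 at *
  generalize a 3 = a3 at *
  generalize b 0 = b0 at *
  generalize b 1 = b1 at *
  generalize b 2 = b2 at *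
  generalize b 3 = b3 at *
  have hn' : (10 : ℤ) ≤ n := by exact_mod_cast hn
  have hB : b0 ^ 2 + b1 ^ 2 + b2 ^ 2 + b3 ^ 2 = 1 := by
    set B := b0 ^ 2 + b1 ^ 2 + b2 ^ 2 + b3 ^ 2 with hBd
    have h0 : 0 ≤ B := by positivity
    have hne : B ≠ 0 := by
      intro h
      have e0 : b0 = 0 := by nlinarith [sq_nonneg b0, sq_nonneg b1, sq_nonneg b2, sq_nonneg b3]
      have e1 : b1 = 0 := by nlinarith [sq_nonneg b0, sq_nonneg b1, sq_nonneg b2, sq_nonneg b3]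
      have e2 : b2 = 0 := by nlinarith [sq_nonneg b0, sq_nonneg b1, sq_nonneg b2, sq_nonneg b3]
      have e3 : b3 = 0 := by nlinarith [sq_nonneg b0, sq_nonneg b1, sq_nonneg b2, sq_nonneg b3]
      simp [e0, e1, e2, e3] at h2
    have hle : B < 2 := by
      by_contra! h
      nlinarith [sq_nonneg a0, sq_nonneg a1, sq_nonneg a2, sq_nonneg a3]
    lia
  have hA : a0 ^ 2 + a1 ^ 2 + a2 ^ 2 + a3 ^ 2 = 8 := by linear_combination h1 - n * hB
  have unit : ∀ x y : ℤ, x * y = 1 → x ^ 2 = 1 := fun x y h => by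
    rcases Int.isUnit_iff.mp (IsUnit.of_mul_eq_one y h) with h | h <;> simp [h]
  rcases four_sq_eq_one hB with ⟨_, e1, e2, e3⟩ | ⟨_, e1, e2, e3⟩ | ⟨_, e1, e2, e3⟩ |
    ⟨_, e1, e2, e3⟩ <;> simp only [e1, e2, e3, mul_zero, zero_add, add_zero] at h2 <;>
    have hu := unit _ _ h2
  · exact three_sq_ne_seven a1 a2 a3 (by linarith)
  · exact three_sq_ne_seven a0 a2 a3 (by linarith)
  · exact three_sq_ne_seven a0 a1 a3 (by linarith)
  · exact three_sq_ne_seven a0 a1 a2 (by linarith)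

/-- The arithmetic core for `n ≡ 1 mod 4`, `n ≥ 17`, in doubled coordinates: the element
`7 + ((1 + √n)/2)²` is not a sum of four squares. -/
lemma no_four_of_eq_one {n : ℕ} (hn : 17 ≤ n) (a b : Fin 4 → ℤ)
    (hp : ∀ i, (2 : ℤ) ∣ a i - b i)
    (h1 : ∑ i, (a i ^ 2 + n * b i ^ 2) = 29 + n) (h2 : ∑ i, a i * b i = 1) : False := by
  have p0 := hp 0
  have p1 := hp 1
  have p2 := hp 2
  have p3 := hp 3
  clear hp
  simp only [Fin.sum_univ_four] at h1 h2
  generalize a 0 = a0 at *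
  generalize a 1 = a1 at *
  generalize a 2 = a2 at *
  generalize a 3 = a3 at *
  generalize b 0 = b0 at *
  generalize b 1 = b1 at *
  generalize b 2 = b2 at *
  generalize b 3 = b3 at *
  have hn' : (17 : ℤ) ≤ n := by exact_mod_cast hn
  have hB : b0 ^ 2 + b1 ^ 2 + b2 ^ 2 + b3 ^ 2 = 1 := by
    -- `∑ b² ≡ ∑ a b = 1` modulo `2`, so `∑ b²` is odd
    have hodd : (2 : ℤ) ∣ 1 - (b0 ^ 2 + b1 ^ 2 + b2 ^ 2 + b3 ^ 2) := by
      have : 1 - (b0 ^ 2 + b1 ^ 2 + b2 ^ 2 + b3 ^ 2) =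
        (a0 - b0) * b0 + (a1 - b1) * b1 + (a2 - b2) * b2 + (a3 - b3) * b3 := by
        rw [← h2]; ring
      rw [this]
      exact dvd_add (dvd_add (dvd_add (p0.mul_right _) (p1.mul_right _)) (p2.mul_right _))
        (p3.mul_right _)
    set B := b0 ^ 2 + b1 ^ 2 + b2 ^ 2 + b3 ^ 2 with hBd
    have h0 : 0 ≤ B := by positivity
    have hle : B < 3 := by
      by_contra! h
      nlinarith [sq_nonneg a0, sq_nonneg a1, sq_nonneg a2, sq_nonneg a3]
    lia
  have hA : a0 ^ 2 + a1 ^ 2 + a2 ^ 2 + a3 ^ 2 = 29 := by linear_combination h1 - n * hB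
  have unit : ∀ x y : ℤ, x * y = 1 → x ^ 2 = 1 := fun x y h => by
    rcases Int.isUnit_iff.mp (IsUnit.of_mul_eq_one y h) with h | h <;> simp [h]
  have fin : ∀ x y z : ℤ, 2 ∣ x → 2 ∣ y → 2 ∣ z → x ^ 2 + y ^ 2 + z ^ 2 = 28 → False := by
    rintro _ _ _ ⟨x, rfl⟩ ⟨y, rfl⟩ ⟨z, rfl⟩ h
    exact three_sq_ne_seven x y z (by linarith)
  rcases four_sq_eq_one hB with ⟨_, e1, e2, e3⟩ | ⟨_, e1, e2, e3⟩ | ⟨_, e1, e2, e3⟩ |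
    ⟨_, e1, e2, e3⟩ <;> simp only [e1, e2, e3, mul_zero, zero_add, add_zero, sub_zero] at * <;>
    have hu := unit _ _ h2
  · exact fin a1 a2 a3 p1 p2 p3 (by linarith)
  · exact fin a0 a2 a3 p0 p2 p3 (by linarith)
  · exact fin a0 a1 a3 p0 p1 p3 (by linarith)
  · exact fin a0 a1 a2 p0 p1 p2 (by linarith)

/-- The field `ℚ(√13)` needs its own element, `3 + ((1 + √13)/2)² + ((3 + √13)/2)²`, because
`7 + ((1 + √13)/2)²` is a sum of three squares. -/
lemma no_four_of_thirteen (a b : Fin 4 → ℤ) (hp : ∀ i, (2 : ℤ) ∣ a i - b i)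
    (h1 : ∑ i, (a i ^ 2 + 13 * b i ^ 2) = 48) (h2 : ∑ i, a i * b i = 4) : False := by
  have p0 := hp 0
  have p1 := hp 1
  have p2 := hp 2
  have p3 := hp 3
  clear hp
  simp only [Fin.sum_univ_four] at h1 h2
  generalize a 0 = a0 at *
  generalize a 1 = a1 at *
  generalize a 2 = a2 at *
  generalize a 3 = a3 at *
  generalize b 0 = b0 at *
  generalize b 1 = b1 at *
  generalize b 2 = b2 at *
  generalize b 3 = b3 at *
  have fin : ∀ w x y z s t : ℤ, w * s + x * t = 4 → s ^ 2 = 1 → t ^ 2 = 1 → 2 ∣ y → 2 ∣ z →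
      w ^ 2 + x ^ 2 + y ^ 2 + z ^ 2 = 22 → False := by
    rintro w x _ _ s t h hs ht ⟨e, rfl⟩ ⟨f, rfl⟩ h22
    -- eliminating `w` leaves `g² + 2 e² + 2 f² = 7` with `g = 2 - x t`, impossible modulo `8`
    have h7 : (2 - x * t) ^ 2 + 2 * e ^ 2 + 2 * f ^ 2 = 7 := by
      have hw : w ^ 2 = (4 - x * t) ^ 2 := by
        rw [← h]; linear_combination - w ^ 2 * hs
      nlinarith
    have h8 := congrArg (fun t : ℤ => (t : ZMod 8)) h7
    push_cast at h8
    revert h8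
    generalize (x : ZMod 8) * t = g
    generalize (e : ZMod 8) = e
    generalize (f : ZMod 8) = f
    revert g e f
    decide
  have hB : b0 ^ 2 + b1 ^ 2 + b2 ^ 2 + b3 ^ 2 = 2 := by
    have hodd : (2 : ℤ) ∣ 4 - (b0 ^ 2 + b1 ^ 2 + b2 ^ 2 + b3 ^ 2) := by
      have : 4 - (b0 ^ 2 + b1 ^ 2 + b2 ^ 2 + b3 ^ 2) =
        (a0 - b0) * b0 + (a1 - b1) * b1 + (a2 - b2) * b2 + (a3 - b3) * b3 := by
        rw [← h2]; ring
      rw [this]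
      exact dvd_add (dvd_add (dvd_add (p0.mul_right _) (p1.mul_right _)) (p2.mul_right _))
        (p3.mul_right _)
    have hne : b0 ^ 2 + b1 ^ 2 + b2 ^ 2 + b3 ^ 2 ≠ 0 := by
      intro h
      have e0 : b0 = 0 := by nlinarith [sq_nonneg b0, sq_nonneg b1, sq_nonneg b2, sq_nonneg b3]
      have e1 : b1 = 0 := by nlinarith [sq_nonneg b0, sq_nonneg b1, sq_nonneg b2, sq_nonneg b3]
      have e2 : b2 = 0 := by nlinarith [sq_nonneg b0, sq_nonneg b1, sq_nonneg b2, sq_nonneg b3]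
      have e3 : b3 = 0 := by nlinarith [sq_nonneg b0, sq_nonneg b1, sq_nonneg b2, sq_nonneg b3]
      simp [e0, e1, e2, e3] at h2
    set B := b0 ^ 2 + b1 ^ 2 + b2 ^ 2 + b3 ^ 2 with hBd
    have h0 : 0 ≤ B := by positivity
    have hle : B < 4 := by
      by_contra! h
      nlinarith [sq_nonneg a0, sq_nonneg a1, sq_nonneg a2, sq_nonneg a3]
    lia
  have hA : a0 ^ 2 + a1 ^ 2 + a2 ^ 2 + a3 ^ 2 = 22 := by linear_combination h1 - 13 * hB
  rcases four_sq_eq_two hB with ⟨s, t, e, f⟩ | ⟨s, t, e, f⟩ | ⟨s, t, e, f⟩ | ⟨s, t, e, f⟩ |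
    ⟨s, t, e, f⟩ | ⟨s, t, e, f⟩ <;>
    simp only [e, f, mul_zero, zero_add, add_zero, sub_zero] at *
  · exact fin a0 a1 a2 a3 _ _ h2 s t p2 p3 (by linarith)
  · exact fin a0 a2 a1 a3 _ _ h2 s t p1 p3 (by linarith)
  · exact fin a0 a3 a1 a2 _ _ h2 s t p1 p2 (by linarith)
  · exact fin a1 a2 a0 a3 _ _ h2 s t p0 p3 (by linarith)
  · exact fin a1 a3 a0 a2 _ _ h2 s t p0 p2 (by linarith)
  · exact fin a2 a3 a0 a1 _ _ h2 s t p0 p1 (by linarith)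

/-- For `n ≡ 2, 3 mod 4` the algebraic integers of `ℚ(√n)` are `ℤ[√n]`. -/
lemma QF.coords_of_ne_one {n : ℕ} (hn : Squarefree n) (h4 : n % 4 ≠ 1) {z : QF n}
    (h : IsIntegral ℤ z) : ∃ a b : ℤ, z.re = a ∧ z.im = b := by
  obtain ⟨k, l, j, hk, hl, hj⟩ := QF.coords hn h
  have h0 : n % 4 ≠ 0 := fun h => by
    have := Nat.isUnit_iff.mp (hn 2 (by norm_num; exact Nat.dvd_of_mod_eq_zero h))
    lia
  have hn4 : (n : ZMod 4) = 2 ∨ (n : ZMod 4) = 3 := by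
    have : n % 4 = 2 ∨ n % 4 = 3 := by lia
    rcases this with h | h
    · left; exact (ZMod.natCast_eq_natCast_iff' n 2 4).mpr h
    · right; exact (ZMod.natCast_eq_natCast_iff' n 3 4).mpr h
  have hZ : k ^ 2 - n * l ^ 2 = 4 * j := by
    have : (k : ℚ) ^ 2 - n * l ^ 2 = 4 * j := by rw [← hk, ← hl, ← hj]; ring
    exact_mod_cast this
  have hM := congrArg (fun t : ℤ => (t : ZMod 4)) hZ
  have h40 : (4 : ZMod 4) = 0 := by decide
  push_cast at hM
  rw [h40, zero_mul] at hM
  have key : ∀ n k l : ZMod 4, n = 2 ∨ n = 3 → k ^ 2 - n * l ^ 2 = 0 →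
      2 * k = 0 ∧ 2 * l = 0 := by decide
  obtain ⟨e1, e2⟩ := key _ _ _ hn4 hM
  have d1 : (4 : ℤ) ∣ 2 * k := (ZMod.intCast_zmod_eq_zero_iff_dvd _ 4).mp (by push_cast; exact e1)
  have d2 : (4 : ℤ) ∣ 2 * l := (ZMod.intCast_zmod_eq_zero_iff_dvd _ 4).mp (by push_cast; exact e2)
  obtain ⟨a, ha⟩ : ∃ a, k = 2 * a := ⟨k / 2, by omega⟩
  obtain ⟨b, hb⟩ : ∃ b, l = 2 * b := ⟨l / 2, by omega⟩
  refine ⟨a, b, ?_, ?_⟩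
  · rw [ha] at hk; push_cast at hk; linarith
  · rw [hb] at hl; push_cast at hl; linarith

/-- For `n ≡ 1 mod 4` the algebraic integers of `ℚ(√n)` are `(a + b√n)/2` with `a ≡ b mod 2`. -/
lemma QF.coords_of_eq_one {n : ℕ} (hn : Squarefree n) (h4 : n % 4 = 1) {z : QF n}
    (h : IsIntegral ℤ z) : ∃ a b : ℤ, 2 * z.re = a ∧ 2 * z.im = b ∧ (2 : ℤ) ∣ a - b := by
  obtain ⟨k, l, j, hk, hl, hj⟩ := QF.coords hn h
  have hn4 : (n : ZMod 4) = 1 := by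
    simpa using (ZMod.natCast_eq_natCast_iff' n 1 4).mpr h4
  have hZ : k ^ 2 - n * l ^ 2 = 4 * j := by
    have : (k : ℚ) ^ 2 - n * l ^ 2 = 4 * j := by rw [← hk, ← hl, ← hj]; ring
    exact_mod_cast this
  have hM := congrArg (fun t : ℤ => (t : ZMod 4)) hZ
  have h40 : (4 : ZMod 4) = 0 := by decide
  push_cast at hM
  rw [h40, zero_mul, hn4, one_mul] at hM
  have key : ∀ k l : ZMod 4, k ^ 2 - l ^ 2 = 0 → 2 * (k - l) = 0 := by decide
  have d1 : (4 : ℤ) ∣ 2 * (k - l) :=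
    (ZMod.intCast_zmod_eq_zero_iff_dvd _ 4).mp (by push_cast; exact key _ _ hM)
  exact ⟨k, l, hk, hl, by omega⟩

lemma QF.sum_re {n : ℕ} {ι : Type*} (s : Finset ι) (f : ι → QF n) :
    (∑ i ∈ s, f i).re = ∑ i ∈ s, (f i).re :=
  map_sum (QuadraticAlgebra.reₗ (R := ℚ) (n : ℚ) 0) f s

lemma QF.sum_im {n : ℕ} {ι : Type*} (s : Finset ι) (f : ι → QF n) :
    (∑ i ∈ s, f i).im = ∑ i ∈ s, (f i).im :=
  map_sum (QuadraticAlgebra.imₗ (R := ℚ) (n : ℚ) 0) f s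

/-- The ring of integers of `ℚ(√n)`, `n > 7`, contains a sum of five squares that is not a sum
of four. -/
lemma exists_length_five {n : ℕ} (hn : Squarefree n) (h7 : 7 < n) :
    ∃ f : Fin 5 → QF n, (∀ i, IsIntegral ℤ (f i)) ∧
      ∀ g : Fin 4 → QF n, (∀ i, IsIntegral ℤ (g i)) → ∑ i, g i ^ 2 ≠ ∑ i, f i ^ 2 := by
  have h8 : n ≠ 8 := by
    rintro rfl
    have := Nat.isUnit_iff.mp (hn 2 (by norm_num))
    lia
  have h9 : n ≠ 9 := by
    rintro rfl
    have := Nat.isUnit_iff.mp (hn 3 (by norm_num))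
    lia
  have expand : ∀ g : Fin 4 → QF n, ∀ f : Fin 5 → QF n, ∑ i, g i ^ 2 = ∑ i, f i ^ 2 →
      (∑ i, ((g i).re ^ 2 + n * (g i).im ^ 2) = ∑ i, ((f i).re ^ 2 + n * (f i).im ^ 2)) ∧
      (∑ i, (g i).re * (g i).im = ∑ i, (f i).re * (f i).im) := by
    intro g f h
    have h1 := congrArg QuadraticAlgebra.re h
    have h2 := congrArg QuadraticAlgebra.im h
    rw [QF.sum_re, QF.sum_re] at h1
    rw [QF.sum_im, QF.sum_im] at h2
    simp only [Fin.sum_univ_four, Fin.sum_univ_five, sq, QuadraticAlgebra.re_mul,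
      QuadraticAlgebra.im_mul] at h1 h2 ⊢
    constructor
    · linarith
    · linarith
  by_cases h4 : n % 4 = 1
  · by_cases h13 : n = 13
    · subst h13
      refine ⟨![⟨1, 0⟩, ⟨1, 0⟩, ⟨1, 0⟩, ⟨1 / 2, 1 / 2⟩, ⟨3 / 2, 1 / 2⟩], ?_, ?_⟩
      · intro i
        fin_cases i
        · exact isIntegral_of_trace_norm (k := 2) (j := 1) (by norm_num) (by norm_num)
        · exact isIntegral_of_trace_norm (k := 2) (j := 1) (by norm_num) (by norm_num)
        · exact isIntegral_of_trace_norm (k := 2) (j := 1) (by norm_num) (by norm_num)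
        · exact isIntegral_of_trace_norm (k := 1) (j := -3) (by norm_num) (by norm_num)
        · exact isIntegral_of_trace_norm (k := 3) (j := -1) (by norm_num) (by norm_num)
      · intro g hg h
        obtain ⟨h1, h2⟩ := expand g _ h
        choose a b ha hb hp using fun i => QF.coords_of_eq_one hn h4 (hg i)
        refine no_four_of_thirteen a b hp ?_ ?_
        · have : ∑ i, ((a i : ℚ) ^ 2 + 13 * b i ^ 2) = 48 := by
            simp only [← ha, ← hb]
            simp [Fin.sum_univ_four, Fin.sum_univ_five] at h1 ⊢
            linarith
          exact_mod_cast this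
        · have : ∑ i, (a i : ℚ) * b i = 4 := by
            simp only [← ha, ← hb]
            simp [Fin.sum_univ_four, Fin.sum_univ_five] at h2 ⊢
            linarith
          exact_mod_cast this
    · obtain ⟨t, ht⟩ : ∃ t, n = 4 * t + 1 := ⟨n / 4, by lia⟩
      have htQ : (n : ℚ) = 4 * t + 1 := by rw [ht]; push_cast; ring
      refine ⟨![⟨2, 0⟩, ⟨1, 0⟩, ⟨1, 0⟩, ⟨1, 0⟩, ⟨1 / 2, 1 / 2⟩], ?_, ?_⟩
      · intro i
        fin_cases i
        · exact isIntegral_of_trace_norm (k := 4) (j := 4) (by norm_num) (by norm_num)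
        · exact isIntegral_of_trace_norm (k := 2) (j := 1) (by norm_num) (by norm_num)
        · exact isIntegral_of_trace_norm (k := 2) (j := 1) (by norm_num) (by norm_num)
        · exact isIntegral_of_trace_norm (k := 2) (j := 1) (by norm_num) (by norm_num)
        · exact isIntegral_of_trace_norm (k := 1) (j := -t) (by norm_num)
            (by simp [htQ]; ring)
      · intro g hg h
        obtain ⟨h1, h2⟩ := expand g _ h
        choose a b ha hb hp using fun i => QF.coords_of_eq_one hn h4 (hg i)
        refine no_four_of_eq_one (n := n) (by lia) a b hp ?_ ?_
        · have : ∑ i, ((a i : ℚ) ^ 2 + n * b i ^ 2) = 29 + n := by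
            simp only [← ha, ← hb]
            simp [Fin.sum_univ_four, Fin.sum_univ_five] at h1 ⊢
            linarith
          exact_mod_cast this
        · have : ∑ i, (a i : ℚ) * b i = 1 := by
            simp only [← ha, ← hb]
            simp [Fin.sum_univ_four, Fin.sum_univ_five] at h2 ⊢
            linarith
          exact_mod_cast this
  · refine ⟨![⟨2, 0⟩, ⟨1, 0⟩, ⟨1, 0⟩, ⟨1, 0⟩, ⟨1, 1⟩], ?_, ?_⟩
    · intro i
      fin_cases i
      · exact isIntegral_of_trace_norm (k := 4) (j := 4) (by norm_num) (by norm_num)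
      · exact isIntegral_of_trace_norm (k := 2) (j := 1) (by norm_num) (by norm_num)
      · exact isIntegral_of_trace_norm (k := 2) (j := 1) (by norm_num) (by norm_num)
      · exact isIntegral_of_trace_norm (k := 2) (j := 1) (by norm_num) (by norm_num)
      · exact isIntegral_of_trace_norm (k := 2) (j := 1 - n) (by norm_num) (by simp)
    · intro g hg h
      obtain ⟨h1, h2⟩ := expand g _ h
      choose a b ha hb using fun i => QF.coords_of_ne_one hn h4 (hg i)
      refine no_four_of_ne_one (n := n) (by lia) a b ?_ ?_
      · have : ∑ i, ((a i : ℚ) ^ 2 + n * b i ^ 2) = 8 + n := by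
          simp only [← ha, ← hb]
          simp [Fin.sum_univ_four, Fin.sum_univ_five] at h1 ⊢
          linarith
        exact_mod_cast this
      · have : ∑ i, (a i : ℚ) * b i = 1 := by
          simp only [← ha, ← hb]
          simp [Fin.sum_univ_four, Fin.sum_univ_five] at h2 ⊢
          linarith
        exact_mod_cast this

/-! ### Real embeddings and shortest `√m`-parts -/

/-- The ring homomorphism `ℚ(√n) → ℝ` sending `√n` to a chosen real square root `s` of `n`. -/
def QF.emb {n : ℕ} (s : ℝ) (hs : s * s = n) : QF n →+* ℝ where
  toFun z := z.re + z.im * s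
  map_zero' := by simp
  map_one' := by simp [QuadraticAlgebra.re_one, QuadraticAlgebra.im_one]
  map_add' x y := by simp; ring
  map_mul' x y := by
    simp only [QuadraticAlgebra.re_mul, QuadraticAlgebra.im_mul]
    push_cast
    linear_combination (-(x.im : ℝ) * y.im) * hs

lemma QF.emb_apply {n : ℕ} (s : ℝ) (hs : s * s = n) (z : QF n) :
    QF.emb s hs z = z.re + z.im * s := rfl

/-- The positive definite form `a² + n b²` on `a + b√n`, i.e. half the trace of the square. -/
def QF.form {n : ℕ} (z : QF n) : ℚ := z.re ^ 2 + n * z.im ^ 2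

lemma QF.form_nonneg {n : ℕ} (z : QF n) : 0 ≤ z.form := by unfold QF.form; positivity

lemma QF.form_pos {n : ℕ} (hn : 0 < n) {z : QF n} (hz : z ≠ 0) : 0 < z.form := by
  have hn' : (0 : ℚ) < n := by exact_mod_cast hn
  refine lt_of_le_of_ne (QF.form_nonneg z) fun h => hz ?_
  unfold QF.form at h
  have h1 : z.re = 0 := by
    have : z.re ^ 2 = 0 := by nlinarith [sq_nonneg z.re, mul_nonneg hn'.le (sq_nonneg z.im)]
    simpa using this
  have h2 : z.im = 0 := by
    have : (n : ℚ) * z.im ^ 2 = 0 := by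
      nlinarith [sq_nonneg z.re, mul_nonneg hn'.le (sq_nonneg z.im)]
    rcases mul_eq_zero.mp this with h | h
    · exact absurd h hn'.ne'
    · simpa using h
  ext <;> simp [h1, h2]

/-- Among the algebraic integers `u + v√m` with `v ≠ 0` there is one minimising the form of `v`.
The integer `√m` shows that the minimum is at most `1`, whatever `m` is. -/
lemma exists_shortest (n : ℕ) (hn : 0 < n) {m : ℕ} (hm : Squarefree m) :
    ∃ y : BQ n m, IsIntegral ℤ y ∧ y.im ≠ 0 ∧ y.im.form ≤ 1 ∧
      ∀ y' : BQ n m, IsIntegral ℤ y' → y'.im ≠ 0 → y.im.form ≤ y'.im.form := by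
  classical
  have hn' : (0 : ℚ) < n := by exact_mod_cast hn
  have nat : ∀ y : BQ n m, IsIntegral ℤ y → ∃ k : ℕ, 16 * n ^ 2 * y.im.form = k := by
    intro y hy
    obtain ⟨k, l, hk, hl⟩ := BQ.im_coords hm hy
    refine ⟨(n ^ 2 * k ^ 2 + n * l ^ 2).toNat, ?_⟩
    have h0 : 0 ≤ (n ^ 2 * k ^ 2 + n * l ^ 2 : ℤ) := by positivity
    have h1 : (((n ^ 2 * k ^ 2 + n * l ^ 2 : ℤ).toNat : ℤ) : ℚ) =
      ((n ^ 2 * k ^ 2 + n * l ^ 2 : ℤ) : ℚ) := by rw [Int.toNat_of_nonneg h0]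
    rw [Int.cast_natCast] at h1
    rw [h1]
    push_cast
    rw [← hk, ← hl, QF.form]
    ring
  have hω : IsIntegral ℤ (⟨0, 1⟩ : BQ n m) := by
    refine ⟨Polynomial.X ^ 2 - Polynomial.C (m : ℤ), by monicity!, ?_⟩
    simp only [Polynomial.eval₂_sub, Polynomial.eval₂_pow, Polynomial.eval₂_X, Polynomial.eval₂_C]
    simp only [eq_intCast]
    ext1 <;> simp [sq]
  have hex : ∃ k : ℕ, ∃ y : BQ n m, IsIntegral ℤ y ∧ y.im ≠ 0 ∧ 16 * n ^ 2 * y.im.form = k := by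
    obtain ⟨k, hk⟩ := nat _ hω
    exact ⟨k, _, hω, by simp, hk⟩
  obtain ⟨y, hy, hy0, hyk⟩ := Nat.find_spec hex
  have hmin : ∀ y' : BQ n m, IsIntegral ℤ y' → y'.im ≠ 0 → y.im.form ≤ y'.im.form := by
    intro y' hy' hy'0
    obtain ⟨k, hk⟩ := nat y' hy'
    have h1 : Nat.find hex ≤ k := Nat.find_min' hex ⟨y', hy', hy'0, hk⟩
    have h2 : (16 * n ^ 2 : ℚ) * y.im.form ≤ 16 * n ^ 2 * y'.im.form := by
      rw [hyk, hk]; exact_mod_cast h1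
    exact le_of_mul_le_mul_left h2 (by positivity)
  refine ⟨y, hy, hy0, ?_, hmin⟩
  refine (hmin _ hω (by simp)).trans (le_of_eq ?_)
  simp [QF.form, QuadraticAlgebra.re_one, QuadraticAlgebra.im_one]

/-- If `∑ (Uᵢ + Vᵢ√m)² = α + (u + v√m)²` formally and the conjugate `u - v√m` is small, then
`∑ Vᵢ²` is within `O(1/√m)` of `v²`. -/
lemma real_close (U V : Fin 5 → ℝ) {u v α m r C : ℝ} (hr : r ^ 2 = m) (hr0 : 0 ≤ r)
    (h1 : ∑ i, U i ^ 2 + m * ∑ i, V i ^ 2 = α + u ^ 2 + m * v ^ 2)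
    (h2 : ∑ i, U i * V i = u * v) (hα : 0 ≤ α) (hC : α + (u - v * r) ^ 2 ≤ C) (hv : v ^ 2 ≤ 2) :
    |∑ i, V i ^ 2 - v ^ 2| * (r - 1 / 2) ≤ C + 2 := by
  set e := u - v * r with he
  set S := ∑ i, V i ^ 2 with hS
  have hE : ∑ i, (U i - V i * r) ^ 2 = α + e ^ 2 := by
    have : ∑ i, (U i - V i * r) ^ 2 = ∑ i, U i ^ 2 - 2 * r * ∑ i, U i * V i + r ^ 2 * S := by
      rw [hS, Finset.mul_sum, Finset.mul_sum, ← Finset.sum_sub_distrib, ← Finset.sum_add_distrib]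
      exact Finset.sum_congr rfl fun i _ => by ring
    rw [this, h2, he]
    subst hr
    linear_combination h1
  have hEV : r * (S - v ^ 2) = e * v - ∑ i, (U i - V i * r) * V i := by
    have : ∑ i, (U i - V i * r) * V i = ∑ i, U i * V i - r * S := by
      rw [hS, Finset.mul_sum, ← Finset.sum_sub_distrib]
      exact Finset.sum_congr rfl fun i _ => by ring
    rw [this, h2, he]
    ring
  have hcs : |∑ i, (U i - V i * r) * V i| ≤ (∑ i, (U i - V i * r) ^ 2 + S) / 2 := by
    refine (Finset.abs_sum_le_sum_abs _ _).trans ?_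
    rw [hS, ← Finset.sum_add_distrib, Finset.sum_div]
    refine Finset.sum_le_sum fun i _ => ?_
    rw [abs_le]
    constructor <;> nlinarith [sq_nonneg (U i - V i * r + V i), sq_nonneg (U i - V i * r - V i)]
  have hev : |e * v| ≤ (e ^ 2 + v ^ 2) / 2 := by
    rw [abs_le]
    constructor <;> nlinarith [sq_nonneg (e + v), sq_nonneg (e - v)]
  have hmain : r * |S - v ^ 2| ≤ (e ^ 2 + v ^ 2) / 2 + (α + e ^ 2 + S) / 2 := by
    rw [← abs_of_nonneg hr0, ← abs_mul, hEV]
    refine (abs_sub _ _).trans ?_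
    rw [← hE]
    exact add_le_add hev hcs
  nlinarith [le_abs_self (S - v ^ 2)]

/-! ### An element that is not a sum of five squares -/

lemma BQ.sum_re {n m : ℕ} {ι : Type*} (s : Finset ι) (f : ι → BQ n m) :
    (∑ i ∈ s, f i).re = ∑ i ∈ s, (f i).re :=
  map_sum (QuadraticAlgebra.reₗ (R := QF n) (m : QF n) 0) f s

lemma BQ.sum_im {n m : ℕ} {ι : Type*} (s : Finset ι) (f : ι → BQ n m) :
    (∑ i ∈ s, f i).im = ∑ i ∈ s, (f i).im :=
  map_sum (QuadraticAlgebra.imₗ (R := QF n) (m : QF n) 0) f s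

lemma BQ.sum_sq_coords {n m : ℕ} {x : Fin 5 → BQ n m} {w : BQ n m} {α : QF n}
    (h : ∑ i, x i ^ 2 = algebraMap (QF n) (BQ n m) α + w ^ 2) :
    (∑ i, (x i).re ^ 2 + (m : QF n) * ∑ i, (x i).im ^ 2 = α + w.re ^ 2 + (m : QF n) * w.im ^ 2) ∧
      ∑ i, (x i).re * (x i).im = w.re * w.im := by
  have h1 := congrArg QuadraticAlgebra.re h
  have h2 := congrArg QuadraticAlgebra.im h
  rw [BQ.sum_re] at h1
  rw [BQ.sum_im] at h2
  simp only [Fin.sum_univ_five, sq, QuadraticAlgebra.re_mul, QuadraticAlgebra.re_add,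
      QuadraticAlgebra.im_add, QuadraticAlgebra.algebraMap_re, QuadraticAlgebra.algebraMap_im,
      QuadraticAlgebra.im_mul] at h1 h2 ⊢
  constructor
  · linear_combination h1
  · have h3 : (2 : QF n) * ((x 0).re * (x 0).im + (x 1).re * (x 1).im + (x 2).re * (x 2).im +
      (x 3).re * (x 3).im + (x 4).re * (x 4).im) = 2 * (w.re * w.im) := by
      linear_combination h2
    have h4 : ∀ a b : QF n, 2 * a = 2 * b → a = b := by
      intro a b hab
      rw [two_mul, two_mul] at hab
      have e1 := congrArg QuadraticAlgebra.re hab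
      have e2 := congrArg QuadraticAlgebra.im hab
      simp only [QuadraticAlgebra.re_add, QuadraticAlgebra.im_add] at e1 e2
      ext <;> linarith
    exact h4 _ _ h3

/-- The algebraic end of the argument: once the `√m`-parts `vᵢ` of the five summands satisfy
`∑ vᵢ² = v²` with `v` shortest, one of them is `± v` and the others vanish, so that `α` becomes
a sum of the remaining four squares. -/
lemma core_algebra {n m : ℕ} (hn : Squarefree n) (h1n : 1 < n) {α : QF n}
    (hα : ∀ g : Fin 4 → QF n, (∀ i, IsIntegral ℤ (g i)) → ∑ i, g i ^ 2 ≠ α)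
    {w : BQ n m} (hw0 : w.im ≠ 0)
    (hmin : ∀ y' : BQ n m, IsIntegral ℤ y' → y'.im ≠ 0 → w.im.form ≤ y'.im.form)
    {x : Fin 5 → BQ n m} (hx : ∀ i, IsIntegral ℤ (x i))
    (h : ∑ i, x i ^ 2 = algebraMap (QF n) (BQ n m) α + w ^ 2)
    (hS : ∑ i, (x i).im ^ 2 = w.im ^ 2) : False := by
  have := fact_QF hn h1n
  obtain ⟨e1, e2⟩ := BQ.sum_sq_coords h
  have hpos : 0 < w.im.form := QF.form_pos (by lia) hw0
  have hform : ∀ z : QF n, (z ^ 2).re = z.form := fun z => by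
    simp only [sq, QuadraticAlgebra.re_mul, QF.form]; ring
  have hT : ∑ i, (x i).im.form = w.im.form := by
    have := congrArg QuadraticAlgebra.re hS
    rw [QF.sum_re] at this
    simpa only [hform] using this
  obtain ⟨i, hi⟩ : ∃ i, (x i).im ≠ 0 := by
    by_contra! hall
    simp only [hall] at hT
    simp [QF.form] at hT
    exact hpos.ne (by simpa [QF.form] using hT)
  have hother : ∀ j, (x (i.succAbove j)).im = 0 := by
    intro j
    by_contra hj
    rw [Fin.sum_univ_succAbove _ i] at hT
    have h1 := hmin _ (hx i) hi
    have h2 := hmin _ (hx _) hj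
    have h3 := Finset.single_le_sum (f := fun j => (x (i.succAbove j)).im.form)
      (fun j _ => QF.form_nonneg _) (Finset.mem_univ j)
    linarith
  have hSS := hS
  rw [Fin.sum_univ_succAbove _ i] at hS e2
  simp only [hother] at hS e2
  simp at hS e2
  have hu : (x i).re ^ 2 = w.re ^ 2 := by
    have h3 : (x i).re ^ 2 * w.im ^ 2 = w.re ^ 2 * w.im ^ 2 := by
      linear_combination (-(x i).re ^ 2) * hS + ((x i).re * (x i).im + w.re * w.im) * e2
    exact mul_right_cancel₀ (pow_ne_zero 2 hw0) h3
  rw [hSS, Fin.sum_univ_succAbove _ i, hu] at e1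
  refine hα (fun j => (x (i.succAbove j)).re) (fun j => ?_) (by linear_combination e1)
  have h4 : x (i.succAbove j) = algebraMap (QF n) (BQ n m) (x (i.succAbove j)).re := by
    ext1 <;> simp [hother]
  have h5 := hx (i.succAbove j)
  rw [h4] at h5
  exact (isIntegral_algebraMap_iff QuadraticAlgebra.algebraMap_injective).mp h5

lemma int_eq_zero_of_abs_lt {D q b : ℝ} {k : ℤ} (hk : D * q = k) (hD : 0 < D)
    (hq : |q| ≤ b) (hb : D * b < 1) : q = 0 := by
  have h1 : |(k : ℝ)| < 1 := by
    rw [← hk, abs_mul, abs_of_pos hD]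
    nlinarith
  have h2 : k = 0 := by
    have : |k| < 1 := by exact_mod_cast h1
    exact Int.abs_lt_one_iff.mp this
  rw [h2, Int.cast_zero] at hk
  exact (mul_eq_zero.mp hk).resolve_left hD.ne'

/-- An algebraic integer `u + v√m` can be translated by an element of `ℤ[√n]` so that its
conjugate `u - v√m` becomes bounded, by a constant depending only on `n`, in both embeddings. -/
lemma exists_translate {n m : ℕ} {y : BQ n m} (hy : IsIntegral ℤ y) (r : ℝ) :
    ∃ w : BQ n m, IsIntegral ℤ w ∧ w.im = y.im ∧
      ∀ s : ℝ, ∀ hs : s * s = n, (QF.emb s hs w.re - QF.emb s hs w.im * r) ^ 2 ≤ 2 * (1 + n) := by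
  set k : ℤ := ⌊(y.im.re : ℝ) * r - y.re.re⌋ with hk
  set l : ℤ := ⌊(y.im.im : ℝ) * r - y.re.im⌋ with hl
  have hkl : IsIntegral ℤ (⟨k, l⟩ : QF n) :=
    isIntegral_of_trace_norm (k := 2 * k) (j := k ^ 2 - n * l ^ 2) (by simp) (by simp)
  refine ⟨y + algebraMap (QF n) (BQ n m) ⟨k, l⟩, hy.add hkl.algebraMap, by simp, ?_⟩
  intro s hs
  have h1 := Int.floor_le ((y.im.re : ℝ) * r - y.re.re)
  have h2 := Int.lt_floor_add_one ((y.im.re : ℝ) * r - y.re.re)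
  have h3 := Int.floor_le ((y.im.im : ℝ) * r - y.re.im)
  have h4 := Int.lt_floor_add_one ((y.im.im : ℝ) * r - y.re.im)
  rw [← hk] at h1 h2
  rw [← hl] at h3 h4
  simp only [QF.emb_apply, QuadraticAlgebra.re_add, QuadraticAlgebra.im_add,
    QuadraticAlgebra.algebraMap_re, QuadraticAlgebra.algebraMap_im, add_zero]
  push_cast
  set A : ℝ := y.re.re + k - y.im.re * r with hA
  set B : ℝ := y.re.im + l - y.im.im * r with hB
  have hA1 : A ^ 2 ≤ 1 := by
    have : -1 ≤ A := by rw [hA]; linarith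
    have : A ≤ 1 := by rw [hA]; linarith
    nlinarith
  have hB1 : B ^ 2 ≤ 1 := by
    have : -1 ≤ B := by rw [hB]; linarith
    have : B ≤ 1 := by rw [hB]; linarith
    nlinarith
  have hn0 : (0 : ℝ) ≤ n := Nat.cast_nonneg n
  have e : ((y.re.re : ℝ) + k + (y.re.im + l) * s - (y.im.re + y.im.im * s) * r) = A + B * s := by
    rw [hA, hB]; ring
  rw [e]
  have : (B * s) ^ 2 ≤ n := by
    rw [mul_pow, sq s, hs]; nlinarith
  nlinarith [sq_nonneg (A - B * s)]

/-- For all large `m`, the integer `α + w²` of `ℚ(√n, √m)` is not a sum of five squares, where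
`w = u + v√m` has shortest possible `v` and `u` close to `v√m`. -/
lemma core {n : ℕ} (hn : Squarefree n) (h1n : 1 < n) {f : Fin 5 → QF n}
    (hα : ∀ g : Fin 4 → QF n, (∀ i, IsIntegral ℤ (g i)) → ∑ i, g i ^ 2 ≠ ∑ i, f i ^ 2) :
    ∃ B : ℕ, ∀ m : ℕ, Squarefree m → B < m → ∃ w : BQ n m, IsIntegral ℤ w ∧
      ∀ x : Fin 5 → BQ n m, (∀ i, IsIntegral ℤ (x i)) →
        ∑ i, x i ^ 2 ≠ algebraMap (QF n) (BQ n m) (∑ i, f i ^ 2) + w ^ 2 := by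
  set α := ∑ i, f i ^ 2 with hαdef
  have hn0 : (0 : ℝ) < n := by exact_mod_cast (by lia : 0 < n)
  have hs1 : √(n : ℝ) * √(n : ℝ) = n := Real.mul_self_sqrt hn0.le
  have hs2 : (-√(n : ℝ)) * (-√(n : ℝ)) = n := by rw [neg_mul_neg, hs1]
  set C : ℝ := QF.emb _ hs1 α + QF.emb _ hs2 α + 2 * (1 + n) with hC
  have hpos : ∀ s : ℝ, ∀ hs : s * s = n, 0 ≤ QF.emb s hs α := by
    intro s hs
    rw [hαdef, map_sum]
    exact Finset.sum_nonneg fun i _ => by rw [map_pow]; positivity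
  have hC0 : 0 ≤ C := by have := hpos _ hs1; have := hpos _ hs2; positivity
  obtain ⟨B, hB⟩ := exists_nat_gt ((16 * n ^ 2 * (C + 2) + 1 : ℝ) ^ 2)
  refine ⟨B, fun m hm hBm => ?_⟩
  set r : ℝ := √(m : ℝ) with hr
  have hr2 : r ^ 2 = m := Real.sq_sqrt (Nat.cast_nonneg m)
  have hrbig : 16 * n ^ 2 * (C + 2) + 1 < r := by
    apply Real.lt_sqrt_of_sq_lt
    have : (B : ℝ) < m := by exact_mod_cast hBm
    linarith
  have hr1 : 1 < r := lt_of_le_of_lt (by have : 0 ≤ 16 * n ^ 2 * (C + 2) := by positivity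
                                         linarith) hrbig
  obtain ⟨y, hy, hy0, hy1, hmin⟩ := exists_shortest n (by lia) hm
  obtain ⟨w, hw, hwy, hwr⟩ := exists_translate hy r
  rw [← hwy] at hy0 hy1 hmin
  refine ⟨w, hw, fun x hx h => ?_⟩
  refine core_algebra hn h1n hα hy0 hmin hx h ?_
  obtain ⟨e1, e2⟩ := BQ.sum_sq_coords h
  set b : ℝ := (C + 2) / (r - 1 / 2) with hb
  -- the difference of both sides, read in either real embedding, is at most `b`
  have hclose : ∀ s : ℝ, ∀ hs : s * s = n, QF.emb s hs α + 2 * (1 + n) ≤ C →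
      |QF.emb s hs (∑ i, (x i).im ^ 2 - w.im ^ 2)| ≤ b := by
    intro s hs hsC
    have g1 := congrArg (QF.emb s hs) e1
    have g2 := congrArg (QF.emb s hs) e2
    simp only [map_add, map_mul, map_sum, map_pow, map_natCast] at g1 g2
    have hv : (QF.emb s hs w.im) ^ 2 ≤ 2 := by
      rw [QF.emb_apply]
      have h5 : ((w.im.re : ℝ)) ^ 2 + n * (w.im.im : ℝ) ^ 2 ≤ 1 := by
        unfold QF.form at hy1
        exact_mod_cast hy1
      have h6 : ((w.im.im : ℝ) * s) ^ 2 = n * (w.im.im : ℝ) ^ 2 := by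
        rw [mul_pow, sq s, hs]; ring
      nlinarith [sq_nonneg ((w.im.re : ℝ) - w.im.im * s)]
    have := real_close (fun i => QF.emb s hs (x i).re) (fun i => QF.emb s hs (x i).im)
      hr2 (by linarith) g1 g2 (hpos s hs) (C := C) (by have := hwr s hs; linarith) hv
    rw [hb, le_div_iff₀ (by linarith)]
    simpa only [map_sub, map_sum, map_pow] using this
  have hDb : 16 * (n : ℝ) ^ 2 * b < 1 := by
    rw [hb, ← mul_div_assoc, div_lt_one (by linarith)]
    linarith
  have c1 := hclose _ hs1 (by have := hpos _ hs2; linarith)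
  have c2 := hclose _ hs2 (by have := hpos _ hs1; linarith)
  set d := ∑ i, (x i).im ^ 2 - w.im ^ 2 with hd
  rw [QF.emb_apply, abs_le] at c1 c2
  have hre : |(d.re : ℝ)| ≤ b := by rw [abs_le]; constructor <;> linarith
  have him : |(d.im : ℝ)| ≤ b := by
    have hsq : 1 ≤ √(n : ℝ) := Real.one_le_sqrt.mpr (by exact_mod_cast h1n.le)
    have : |(d.im : ℝ) * √(n : ℝ)| ≤ b := by rw [abs_le]; constructor <;> linarith
    rw [abs_mul, abs_of_nonneg (Real.sqrt_nonneg _)] at this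
    nlinarith [abs_nonneg (d.im : ℝ)]
  -- the coordinates of the difference have denominator dividing `16 n²`
  have hden : ∀ z : BQ n m, IsIntegral ℤ z → ∃ k l : ℤ,
      16 * (n : ℚ) ^ 2 * (z.im ^ 2).re = k ∧ 16 * (n : ℚ) ^ 2 * (z.im ^ 2).im = l := by
    intro z hz
    obtain ⟨k, l, hk, hl⟩ := BQ.im_coords hm hz
    refine ⟨n ^ 2 * k ^ 2 + n * l ^ 2, 2 * n * k * l, ?_, ?_⟩
    · push_cast
      rw [← hk, ← hl, sq z.im, QuadraticAlgebra.re_mul]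
      ring
    · push_cast
      rw [← hk, ← hl, sq z.im, QuadraticAlgebra.im_mul]
      ring
  choose K L hK hL using fun i => hden (x i) (hx i)
  obtain ⟨K', L', hK', hL'⟩ := hden w hw
  have hdre : 16 * (n : ℚ) ^ 2 * d.re = ((∑ i, K i - K' : ℤ) : ℚ) := by
    rw [hd, QuadraticAlgebra.re_sub, QF.sum_re, mul_sub, Finset.mul_sum, hK']
    simp only [hK]
    push_cast
    rfl
  have hdim : 16 * (n : ℚ) ^ 2 * d.im = ((∑ i, L i - L' : ℤ) : ℚ) := by
    rw [hd, QuadraticAlgebra.im_sub, QF.sum_im, mul_sub, Finset.mul_sum, hL']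
    simp only [hL]
    push_cast
    rfl
  have z1 := int_eq_zero_of_abs_lt (D := 16 * (n : ℝ) ^ 2) (q := d.re) (by exact_mod_cast hdre)
    (by positivity) hre hDb
  have z2 := int_eq_zero_of_abs_lt (D := 16 * (n : ℝ) ^ 2) (q := d.im) (by exact_mod_cast hdim)
    (by positivity) him hDb
  have hd0 : d = 0 := by
    ext
    · simpa using z1
    · simpa using z2
  exact sub_eq_zero.mp hd0

/-! ### Subfields of the real numbers -/

/-- The embedding of `ℚ(√n)(√m)` into `ℝ` sending both square roots to the positive ones. -/
noncomputable def BQ.emb (n m : ℕ) : BQ n m →+* ℝ where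
  toFun y := QF.emb (√(n : ℝ)) (Real.mul_self_sqrt (Nat.cast_nonneg n)) y.re +
    QF.emb (√(n : ℝ)) (Real.mul_self_sqrt (Nat.cast_nonneg n)) y.im * √(m : ℝ)
  map_zero' := by simp
  map_one' := by simp [QuadraticAlgebra.re_one, QuadraticAlgebra.im_one]
  map_add' x y := by simp only [QuadraticAlgebra.re_add, QuadraticAlgebra.im_add, map_add]; ring
  map_mul' x y := by
    have hs : √(m : ℝ) * √(m : ℝ) = m := Real.mul_self_sqrt (Nat.cast_nonneg m)
    simp only [QuadraticAlgebra.re_mul, QuadraticAlgebra.im_mul, map_add, map_mul, map_natCast,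
      map_zero]
    linear_combination (-(QF.emb _ _ x.im) * (QF.emb _ _ y.im)) * hs

lemma BQ.emb_apply {n m : ℕ} (y : BQ n m) :
    BQ.emb n m y = (y.re.re + y.re.im * √(n : ℝ)) + (y.im.re + y.im.im * √(n : ℝ)) * √(m : ℝ) :=
  rfl

lemma BQ.emb_injective {n m : ℕ} (hn : Squarefree n) (hm : Squarefree m) (h1n : 1 < n)
    (h1m : 1 < m) (hmn : m ≠ n) : Function.Injective (BQ.emb n m) := by
  have := fact_QF hn h1n
  have := fact_BQ hn hm h1m hmn
  exact (BQ.emb n m).injective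

lemma sqrt_left_mem (p q : ℕ) : √(p : ℝ) ∈ biqField p q :=
  IntermediateField.subset_adjoin ℚ _ (by simp)

lemma sqrt_right_mem (p q : ℕ) : √(q : ℝ) ∈ biqField p q :=
  IntermediateField.subset_adjoin ℚ _ (by simp)

lemma biqField_le {p q : ℕ} {K : IntermediateField ℚ ℝ} (hp : √(p : ℝ) ∈ K)
    (hq : √(q : ℝ) ∈ K) : biqField p q ≤ K := by
  unfold biqField
  rw [IntermediateField.adjoin_le_iff]
  rintro x (rfl | rfl)
  · exact hp
  · exact hq

lemma BQ.emb_mem {n m : ℕ} (y : BQ n m) : BQ.emb n m y ∈ biqField n m := by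
  have hr : ∀ c : ℚ, (c : ℝ) ∈ biqField n m := fun c => (biqField n m).algebraMap_mem c
  have h1 := sqrt_left_mem n m
  have h2 := sqrt_right_mem n m
  rw [BQ.emb_apply]
  exact add_mem (add_mem (hr _) (mul_mem (hr _) h1))
    (mul_mem (add_mem (hr _) (mul_mem (hr _) h1)) h2)

lemma BQ.exists_emb_eq {n m : ℕ} (hn : Squarefree n) (hm : Squarefree m) (h1n : 1 < n)
    (h1m : 1 < m) (hmn : m ≠ n) {x : ℝ} (hx : x ∈ biqField n m) : ∃ y, BQ.emb n m y = x := by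
  have := fact_QF hn h1n
  have := fact_BQ hn hm h1m hmn
  let F : IntermediateField ℚ ℝ :=
    { (BQ.emb n m).fieldRange with
      algebraMap_mem' := fun c => ⟨⟨⟨c, 0⟩, 0⟩, by simp [BQ.emb_apply]⟩ }
  have hF : biqField n m ≤ F := by
    apply biqField_le
    · exact ⟨⟨⟨0, 1⟩, 0⟩, by simp [BQ.emb_apply]⟩
    · exact ⟨⟨0, 1⟩, by
        simp [BQ.emb_apply, QuadraticAlgebra.re_one, QuadraticAlgebra.im_one]⟩
  exact hF hx

lemma BQ.isIntegral_emb {n m : ℕ} (hinj : Function.Injective (BQ.emb n m)) {y : BQ n m} :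
    IsIntegral ℤ (BQ.emb n m y) ↔ IsIntegral ℤ y :=
  isIntegral_algHom_iff (BQ.emb n m).toIntAlgHom hinj

/-- A biquadratic field containing `√n` can be written as `ℚ(√n, √m)`. The square roots of
squarefree integers in `ℚ(√p, √q)` lie on the three lines through `√p`, `√q`, `√p√q`. -/
lemma exists_biqField_eq {n : ℕ} (hn : Squarefree n) (h1n : 1 < n) {K : IntermediateField ℚ ℝ}
    (hK : IsBiquadratic K) (hnK : √(n : ℝ) ∈ K) :
    ∃ m, Squarefree m ∧ 1 < m ∧ m ≠ n ∧ K = biqField n m := by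
  obtain ⟨p, q, hp, hq, h1p, h1q, hpq, rfl⟩ := hK
  have := fact_QF hp h1p
  obtain ⟨y, hy⟩ := BQ.exists_emb_eq hp hq h1p h1q hpq.symm hnK
  have hy2 : y ^ 2 = (n : BQ p q) := by
    apply BQ.emb_injective hp hq h1p h1q hpq.symm
    rw [map_pow, hy, map_natCast, Real.sq_sqrt (Nat.cast_nonneg n)]
  have e1 := congrArg QuadraticAlgebra.re hy2
  have e2 := congrArg QuadraticAlgebra.im hy2
  rw [sq, QuadraticAlgebra.re_mul, QuadraticAlgebra.re_natCast] at e1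
  rw [sq, QuadraticAlgebra.im_mul, QuadraticAlgebra.im_natCast] at e2
  have e3 : (2 : QF p) * (y.re * y.im) = 0 := by linear_combination e2
  have h2 : (2 : QF p) ≠ 0 := by
    intro h
    rw [← one_add_one_eq_two] at h
    have := congrArg QuadraticAlgebra.re h
    rw [QuadraticAlgebra.re_add, QuadraticAlgebra.re_one, QuadraticAlgebra.re_zero] at this
    norm_num at this
  rcases mul_eq_zero.mp ((mul_eq_zero.mp e3).resolve_left h2) with h | h
  · have e4 : (q : QF p) * y.im ^ 2 = (n : QF p) := by rw [h] at e1; linear_combination e1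
    have e5 : ((q : QF p) * y.im) ^ 2 = ((q * n : ℕ) : QF p) := by
      push_cast; linear_combination (q : QF p) * e4
    have hq0 : (q : ℚ) ≠ 0 := by exact_mod_cast (by lia : q ≠ 0)
    have hp0 : (p : ℚ) ≠ 0 := by exact_mod_cast (by lia : p ≠ 0)
    have hre : ((q : QF p) * y.im).re = q * y.im.re := by simp
    have him : ((q : QF p) * y.im).im = q * y.im.im := by simp
    rcases QF.sq_eq_natCast e5 with h3 | h3
    · rw [hre] at h3
      have : (q : ℚ) * y.im.re ^ 2 = n := by
        apply mul_left_cancel₀ hq0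
        push_cast at h3
        linear_combination h3
      obtain rfl := eq_of_mul_sq_eq hq hn this
      exact ⟨p, hp, h1p, hpq, by rw [biqField, biqField, Set.pair_comm]⟩
    · rw [him] at h3
      have h4 : (p : ℚ) * q * y.im.im ^ 2 = n := by
        apply mul_left_cancel₀ hq0
        push_cast at h3
        linear_combination h3
      have hpn : p ≠ n := by
        rintro rfl
        have : (q : ℚ) * y.im.im ^ 2 = (1 : ℕ) := by
          apply mul_left_cancel₀ hp0
          push_cast
          linear_combination h4
        have := eq_of_mul_sq_eq hq squarefree_one this
        lia
      refine ⟨p, hp, h1p, hpn, le_antisymm ?_ (biqField_le hnK (sqrt_left_mem p q))⟩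
      refine biqField_le (sqrt_right_mem n p) ?_
      have hps : √(p : ℝ) ≠ 0 := Real.sqrt_ne_zero'.mpr (by exact_mod_cast (by lia : 0 < p))
      have hns : (n : ℚ) ≠ 0 := by exact_mod_cast (by lia : n ≠ 0)
      have hd : |(y.im.im : ℝ)| ≠ 0 := by
        rw [abs_ne_zero]
        intro h0
        have h0' : y.im.im = 0 := by exact_mod_cast h0
        rw [h0'] at h4
        exact hns (by linear_combination -h4)
      have h5 : √(n : ℝ) = √(p : ℝ) * √(q : ℝ) * |(y.im.im : ℝ)| := by
        have h6 : (n : ℝ) = p * q * (y.im.im : ℝ) ^ 2 := by exact_mod_cast h4.symm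
        rw [h6, Real.sqrt_mul (by positivity), Real.sqrt_mul (by positivity), Real.sqrt_sq_eq_abs]
      have h7 : √(q : ℝ) = √(n : ℝ) / (√(p : ℝ) * ((|y.im.im| : ℚ) : ℝ)) := by
        rw [h5]; push_cast; field_simp
      rw [h7]
      exact div_mem (sqrt_left_mem n p)
        (mul_mem (sqrt_right_mem n p) ((biqField n p).algebraMap_mem _))
  · have e4 : y.re ^ 2 = (n : QF p) := by rw [h] at e1; linear_combination e1
    rcases QF.sq_eq_natCast e4 with h3 | h3
    · exact absurd h3 (not_sq_of_squarefree hn h1n _)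
    · obtain rfl := eq_of_mul_sq_eq hp hn h3
      exact ⟨q, hq, h1q, hpq.symm, rfl⟩

/-- Fix a squarefree `n > 7`. Then the set of totally real biquadratic
fields `K` containing `√n` whose ring of integers has Pythagoras number at most `5`
(i.e. every sum of squares in `O_K` is a sum of `5` squares in `O_K`) is finite. -/
theorem pythagoras_ge_six_almost_always
    (n : ℕ) (hn : Squarefree n) (hn7 : 7 < n) :
    {K : IntermediateField ℚ ℝ | IsBiquadratic K ∧ Real.sqrt n ∈ K ∧
      ∀ α ∈ ringOfInt K, IsSumOfSquaresIn (ringOfInt K) α →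
        SumOfNSquaresIn (ringOfInt K) 5 α}.Finite := by
  have h1n : 1 < n := by lia
  obtain ⟨f, hf, hα⟩ := exists_length_five hn hn7
  obtain ⟨B, hB⟩ := core hn h1n hα
  refine ((Set.finite_Iic B).image (biqField n)).subset ?_
  rintro K ⟨hK, hnK, hsum⟩
  obtain ⟨m, hm, h1m, hmn, rfl⟩ := exists_biqField_eq hn h1n hK hnK
  refine ⟨m, ?_, rfl⟩
  by_contra hBm
  obtain ⟨w, hw, hno⟩ := hB m hm (not_le.mp hBm)
  have hinj := BQ.emb_injective hn hm h1n h1m hmn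
  have hO : ∀ y : BQ n m, IsIntegral ℤ y → BQ.emb n m y ∈ ringOfInt (biqField n m) :=
    fun y hy => ⟨BQ.emb_mem y, (BQ.isIntegral_emb hinj).mpr hy⟩
  have hfi : ∀ i, IsIntegral ℤ (algebraMap (QF n) (BQ n m) (f i)) := fun i => (hf i).algebraMap
  let F : Fin 6 → ℝ :=
    Fin.cons (BQ.emb n m w) fun i => BQ.emb n m (algebraMap (QF n) (BQ n m) (f i))
  obtain ⟨x, hx, hxs⟩ := hsum
    (BQ.emb n m (algebraMap (QF n) (BQ n m) (∑ i, f i ^ 2) + w ^ 2))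
    (hO _ (((IsIntegral.sum _ fun i _ => (hf i).pow 2).algebraMap).add (hw.pow 2)))
    ⟨6, F, Fin.cases (hO _ hw) fun i => hO _ (hfi i), by
      simp only [map_add, map_sum, map_pow]
      rw [add_comm]
      exact (Fin.sum_univ_succ fun i => F i ^ 2).symm⟩
  choose y hy using fun i => BQ.exists_emb_eq hn hm h1n h1m hmn (hx i).1
  refine hno y (fun i => (BQ.isIntegral_emb hinj).mp (by rw [hy]; exact (hx i).2)) (hinj ?_)
  rw [hxs, map_sum]
  simp only [map_pow, hy]
end

section
/- Let K ⊆ ℝ be a number field that is a quadratic extension of ℚ(√5) (so [K : ℚ] = 4), and let O be any order in K (a subring of K that is a ℤ-module of rank 4) containing (1+√5)/2. Then the Pythagoras number of O is at most 5: every element of O that is a sum of squares of elements of O is a sum of 5 squares of elements of O. -/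
/-! ### Arithmetic of `ℤ[φ]` -/

namespace Pyth5
open QuadraticAlgebra

/-- The ring `ℤ[φ] = ℤ[X] / (X² - X - 1)`; the element `a + b φ` has `re = a` and `im = b`. -/
abbrev ZP : Type := QuadraticAlgebra ℤ 1 1

local notation "φ" => Real.goldenRatio
local notation "ψ" => Real.goldenConj

/-- The norm of `ℤ[φ]` over `ℤ`. -/
def nm (x : ZP) : ℤ := x.re ^ 2 + x.re * x.im - x.im ^ 2

theorem nm_mul (x y : ZP) : nm (x * y) = nm x * nm y := by
  simp only [nm, re_mul, im_mul]; ring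

theorem nm_one : nm 1 = 1 := by simp [nm]
theorem nm_zero : nm 0 = 0 := by simp [nm]
theorem nm_neg (x : ZP) : nm (-x) = nm x := by simp [nm]
theorem nm_pow (x : ZP) (n : ℕ) : nm (x ^ n) = nm x ^ n := by
  induction n with
  | zero => simp [nm_one]
  | succ n ih => rw [pow_succ, pow_succ, nm_mul, ih]
theorem nm_intCast (n : ℤ) : nm (n : ZP) = n ^ 2 := by simp [nm]

/-- The trace of `ℤ[φ]` over `ℤ`. -/
def tr (x : ZP) : ℤ := 2 * x.re + x.im

/-- The nontrivial automorphism of `ℤ[φ]`, sending `φ` to `1 - φ`. -/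
def cj (x : ZP) : ZP := ⟨x.re + x.im, -x.im⟩

theorem mul_cj (x : ZP) : x * cj x = ((nm x : ℤ) : ZP) := by
  ext
  · simp only [re_mul, cj, re_intCast, nm, Int.cast_id]; ring
  · simp only [im_mul, cj, im_intCast]; ring
theorem add_cj (x : ZP) : x + cj x = ((tr x : ℤ) : ZP) := by
  ext <;> simp [cj, tr] <;> ring

/-- The real embedding sending the generator to the golden ratio. -/
noncomputable def e1 : ZP →+* ℝ where
  toFun x := x.re + x.im * φ
  map_zero' := by simp
  map_one' := by simp
  map_add' x y := by simp; ring
  map_mul' x y := by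
    simp only [re_mul, im_mul]; push_cast
    linear_combination (-(x.im : ℝ) * y.im) * Real.goldenRatio_sq

/-- The real embedding sending the generator to the conjugate of the golden ratio. -/
noncomputable def e2 : ZP →+* ℝ where
  toFun x := x.re + x.im * ψ
  map_zero' := by simp
  map_one' := by simp
  map_add' x y := by simp; ring
  map_mul' x y := by
    simp only [re_mul, im_mul]; push_cast
    linear_combination (-(x.im : ℝ) * y.im) * Real.goldenConj_sq

theorem e1_apply (x : ZP) : e1 x = x.re + x.im * φ := rfl
theorem e2_apply (x : ZP) : e2 x = x.re + x.im * ψ := rfl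

theorem e1_mul_e2 (x : ZP) : e1 x * e2 x = nm x := by
  simp only [e1_apply, e2_apply, nm]; push_cast
  linear_combination ((x.im : ℝ) ^ 2) * Real.goldenRatio_mul_goldenConj
    + ((x.re : ℝ) * x.im) * Real.goldenRatio_add_goldenConj
theorem e1_add_e2 (x : ZP) : e1 x + e2 x = tr x := by
  simp only [e1_apply, e2_apply, tr]; push_cast
  linear_combination (x.im : ℝ) * Real.goldenRatio_add_goldenConj

theorem eq_zero_of_irr {α : ℝ} (h : Irrational α) {a b : ℤ} (h0 : (a : ℝ) + b * α = 0) :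
    a = 0 ∧ b = 0 := by
  have hb : b = 0 := by
    by_contra hb
    apply (h.intCast_mul hb).intCast_add a
    exact ⟨0, by simp [h0]⟩
  subst hb
  exact ⟨by simpa using h0, rfl⟩

theorem e1_eq_zero {x : ZP} : e1 x = 0 ↔ x = 0 := by
  refine ⟨fun h => ?_, fun h => by simp [h]⟩
  obtain ⟨h1, h2⟩ := eq_zero_of_irr Real.goldenRatio_irrational h
  ext <;> assumption
theorem e2_eq_zero {x : ZP} : e2 x = 0 ↔ x = 0 := by
  refine ⟨fun h => ?_, fun h => by simp [h]⟩
  obtain ⟨h1, h2⟩ := eq_zero_of_irr Real.goldenConj_irrational h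
  ext <;> assumption
theorem nm_eq_zero {x : ZP} : nm x = 0 ↔ x = 0 := by
  refine ⟨fun h => ?_, fun h => by simp [h, nm_zero]⟩
  have := e1_mul_e2 x
  rw [h, Int.cast_zero, mul_eq_zero, e1_eq_zero, e2_eq_zero] at this
  tauto

theorem exists_round (a : ℤ) {n : ℤ} (hn : n ≠ 0) : ∃ q : ℤ, 2 * |a - n * q| ≤ |n| := by
  refine ⟨round ((a : ℚ) / n), ?_⟩
  have h := abs_sub_round ((a : ℚ) / n)
  have hn' : (n : ℚ) ≠ 0 := by exact_mod_cast hn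
  have : (a : ℚ) - n * round ((a : ℚ) / n) = n * ((a : ℚ) / n - round ((a : ℚ) / n)) := by
    field_simp
  have h2 : 2 * |(a : ℚ) - n * round ((a : ℚ) / n)| ≤ |(n : ℚ)| := by
    rw [this, abs_mul]
    have := abs_nonneg (n : ℚ)
    nlinarith
  exact_mod_cast h2

/-- Division with remainder in `ℤ[φ]`: rounding both coordinates of the quotient gives a remainder of norm
at most `5/16` of that of the divisor. -/
theorem exists_div (x y : ZP) (hy : y ≠ 0) : ∃ q : ZP, (nm (x - y * q)).natAbs < (nm y).natAbs := by
  have hn : nm y ≠ 0 := by rwa [Ne, nm_eq_zero]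
  obtain ⟨q1, h1⟩ := exists_round (x * cj y).re hn
  obtain ⟨q2, h2⟩ := exists_round (x * cj y).im hn
  refine ⟨⟨q1, q2⟩, ?_⟩
  have key : nm (x - y * ⟨q1, q2⟩) * nm y = nm ⟨(x * cj y).re - nm y * q1, (x * cj y).im - nm y * q2⟩ := by
    have : nm y = nm (cj y) := by simp [nm, cj]; ring
    nth_rewrite 1 [this]
    rw [← nm_mul]
    congr 1
    have h : (x - y * ⟨q1, q2⟩) * cj y = x * cj y - (nm y : ZP) * ⟨q1, q2⟩ := by
      rw [← mul_cj]; ring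
    rw [h]
    ext <;> simp
  set a := (x * cj y).re - nm y * q1
  set b := (x * cj y).im - nm y * q2
  set n := nm y
  have hlt : |nm (⟨a, b⟩ : ZP)| < n ^ 2 := by
    simp only [nm]
    have hnp : 0 < |n| := abs_pos.mpr hn
    rw [← sq_abs n]
    set m := |n|
    obtain ⟨ha1, ha2⟩ := abs_le.mp (show |2 * a| ≤ m by rwa [abs_mul, abs_two])
    obtain ⟨hb1, hb2⟩ := abs_le.mp (show |2 * b| ≤ m by rwa [abs_mul, abs_two])
    rw [abs_lt]
    constructor <;> nlinarith [mul_nonneg (sub_nonneg.2 ha1) (sub_nonneg.2 ha2), mul_nonneg (sub_nonneg.2 hb1) (sub_nonneg.2 hb2),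
      mul_pos hnp hnp, sq_nonneg (a-b),
      sq_nonneg (a+b), mul_nonneg (sub_nonneg.2 ha1) (sub_nonneg.2 hb2),
      mul_nonneg (sub_nonneg.2 ha1) (sub_nonneg.2 hb1), mul_nonneg (sub_nonneg.2 ha2) (sub_nonneg.2 hb2),
      mul_nonneg (sub_nonneg.2 ha2) (sub_nonneg.2 hb1)]
  rw [← key, abs_mul, ← sq_abs n, sq] at hlt
  have := lt_of_mul_lt_mul_right hlt (abs_nonneg n)
  rw [Int.abs_eq_natAbs, Int.abs_eq_natAbs] at this
  exact_mod_cast this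

open Classical in
noncomputable instance : EuclideanDomain ZP :=
  { (inferInstance : CommRing ZP), (inferInstance : Nontrivial ZP) with
    quotient := fun x y => if h : y = 0 then 0 else Classical.choose (exists_div x y h)
    quotient_zero := fun x => by simp
    remainder := fun x y => x - y * (if h : y = 0 then 0 else Classical.choose (exists_div x y h))
    quotient_mul_add_remainder_eq := fun x y => by ring
    r := fun x y => (nm x).natAbs < (nm y).natAbs
    r_wellFounded := (measure fun x : ZP => (nm x).natAbs).wf
    remainder_lt := fun x y hy => by
      simp only [dif_neg hy]
      exact Classical.choose_spec (exists_div x y hy)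
    mul_left_not_lt := fun x y hy => by
      rw [nm_mul, Int.natAbs_mul, not_lt]
      exact Nat.le_mul_of_pos_right _ (Int.natAbs_pos.mpr (by rwa [Ne, nm_eq_zero])) }


theorem isUnit_iff_nm {x : ZP} : IsUnit x ↔ nm x = 1 ∨ nm x = -1 := by
  constructor
  · rintro ⟨u, rfl⟩
    have : nm (u : ZP) * nm ((u⁻¹ : ZPˣ) : ZP) = 1 := by rw [← nm_mul, Units.mul_inv, nm_one]
    exact Int.isUnit_iff.mp (IsUnit.of_mul_eq_one _ this)
  · intro h
    have hm := mul_cj x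
    rcases h with h | h <;> rw [h] at hm
    · exact IsUnit.of_mul_eq_one (cj x) (by simpa using hm)
    · exact IsUnit.of_mul_eq_one (-cj x) (by rw [mul_neg, hm]; simp)

theorem two_dvd_iff' {x : ZP} : (2 : ZP) ∣ x ↔ (2 ∣ x.re ∧ 2 ∣ x.im) := by
  constructor
  · rintro ⟨y, rfl⟩; exact ⟨⟨y.re, by simp⟩, ⟨y.im, by simp⟩⟩
  · rintro ⟨⟨a, ha⟩, ⟨b, hb⟩⟩
    exact ⟨⟨a, b⟩, by ext <;> simp [ha, hb]⟩

/-- As `2` is inert in `ℤ[φ]`, divisibility by `2` is detected by the parity of the norm. -/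
theorem two_dvd_iff {x : ZP} : (2 : ZP) ∣ x ↔ Even (nm x) := by
  rw [two_dvd_iff', nm, ← even_iff_two_dvd, ← even_iff_two_dvd]
  simp only [Int.even_sub, Int.even_add, Int.even_mul, sq]
  tauto

theorem prime_two : Prime (2 : ZP) := by
  refine ⟨two_ne_zero, ?_, ?_⟩
  · rw [isUnit_iff_nm]; simp [nm]
  · intro a b h
    rw [two_dvd_iff, nm_mul, Int.even_mul] at h
    rwa [two_dvd_iff, two_dvd_iff]

theorem nm_mod_five (x : ZP) : nm x % 5 = 0 ∨ nm x % 5 = 1 ∨ nm x % 5 = 4 := by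
  have h : nm x % 5 = ((x.re % 5) ^ 2 + (x.re % 5) * (x.im % 5) - (x.im % 5) ^ 2) % 5 := by
    simp [nm, Int.sub_emod, Int.add_emod, Int.mul_emod, pow_two]
  have h1 := Int.emod_nonneg x.re (show (5 : ℤ) ≠ 0 by norm_num)
  have h2 := Int.emod_lt_of_pos x.re (show (0 : ℤ) < 5 by norm_num)
  have h3 := Int.emod_nonneg x.im (show (5 : ℤ) ≠ 0 by norm_num)
  have h4 := Int.emod_lt_of_pos x.im (show (0 : ℤ) < 5 by norm_num)
  rw [h]
  generalize x.re % 5 = a at *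
  generalize x.im % 5 = b at *
  interval_cases a <;> interval_cases b <;> simp

/-- Total positivity. -/
def TP (x : ZP) : Prop := 0 < e1 x ∧ 0 < e2 x

theorem TP.ne_zero {x : ZP} (h : TP x) : x ≠ 0 := fun h0 => by simp [TP, h0] at h
theorem TP.nm_pos {x : ZP} (h : TP x) : 0 < nm x := by
  have := mul_pos h.1 h.2
  rw [e1_mul_e2] at this; exact_mod_cast this
theorem TP.tr_pos {x : ZP} (h : TP x) : 0 < tr x := by
  have := add_pos h.1 h.2
  rw [e1_add_e2] at this; exact_mod_cast this
theorem TP.mul {x y : ZP} (hx : TP x) (hy : TP y) : TP (x * y) := by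
  simp only [TP, map_mul]; exact ⟨mul_pos hx.1 hy.1, mul_pos hx.2 hy.2⟩
theorem TP.add {x y : ZP} (hx : TP x) (hy : TP y) : TP (x + y) := by
  simp only [TP, map_add]; exact ⟨add_pos hx.1 hy.1, add_pos hx.2 hy.2⟩
theorem TP.of_mul {x y : ZP} (hx : TP x) (hxy : TP (x * y)) : TP y := by
  simp only [TP, map_mul] at hxy
  exact ⟨pos_of_mul_pos_right hxy.1 hx.1.le, pos_of_mul_pos_right hxy.2 hx.2.le⟩
theorem TP_sq {x : ZP} (hx : x ≠ 0) : TP (x ^ 2) := by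
  simp only [TP, map_pow]
  exact ⟨by have := mt e1_eq_zero.1 hx; positivity, by have := mt e2_eq_zero.1 hx; positivity⟩
theorem TP_intCast {n : ℤ} (h : 0 < n) : TP (n : ZP) := by
  simp only [TP, map_intCast]; exact ⟨by exact_mod_cast h, by exact_mod_cast h⟩
theorem TP_one : TP 1 := by simp [TP]

/-- Total nonnegativity. -/
def TNN (x : ZP) : Prop := 0 ≤ e1 x ∧ 0 ≤ e2 x
theorem TNN.add {x y : ZP} (hx : TNN x) (hy : TNN y) : TNN (x + y) := by
  simp only [TNN, map_add]; exact ⟨add_nonneg hx.1 hy.1, add_nonneg hx.2 hy.2⟩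
theorem TNN_sq (x : ZP) : TNN (x ^ 2) := by
  simp only [TNN, map_pow]; exact ⟨sq_nonneg _, sq_nonneg _⟩
theorem TNN.eq_zero_or_TP {x : ZP} (h : TNN x) : x = 0 ∨ TP x := by
  by_cases h0 : x = 0
  · exact Or.inl h0
  · refine Or.inr ⟨lt_of_le_of_ne h.1 ?_, lt_of_le_of_ne h.2 ?_⟩
    · exact fun h' => h0 (e1_eq_zero.1 h'.symm)
    · exact fun h' => h0 (e2_eq_zero.1 h'.symm)
theorem TP.add_TNN {x y : ZP} (hx : TP x) (hy : TNN y) : TP (x + y) := by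
  simp only [TP, map_add]; exact ⟨add_pos_of_pos_of_nonneg hx.1 hy.1, add_pos_of_pos_of_nonneg hx.2 hy.2⟩

/-- The fundamental unit `φ` of `ℤ[φ]`. -/
def phiU : ZPˣ where
  val := ⟨0, 1⟩
  inv := ⟨-1, 1⟩
  val_inv := by ext <;> simp
  inv_val := by ext <;> simp

theorem e1_phiU_zpow (j : ℤ) : e1 ((phiU ^ j : ZPˣ) : ZP) = φ ^ j := by
  have : e1 ((phiU ^ j : ZPˣ) : ZP) = ((Units.map (e1 : ZP →* ℝ) phiU ^ j : ℝˣ) : ℝ) := by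
    rw [← map_zpow]; rfl
  rw [this, Units.val_zpow_eq_zpow_val]
  simp [phiU, e1_apply]
theorem e2_phiU_zpow (j : ℤ) : e2 ((phiU ^ j : ZPˣ) : ZP) = ψ ^ j := by
  have : e2 ((phiU ^ j : ZPˣ) : ZP) = ((Units.map (e2 : ZP →* ℝ) phiU ^ j : ℝˣ) : ℝ) := by
    rw [← map_zpow]; rfl
  rw [this, Units.val_zpow_eq_zpow_val]
  simp [phiU, e2_apply]

/-- Multiplying by `ε²` with `ε = φ ^ j` balances the two embeddings. -/
theorem exists_balance {r s : ℝ} (hr : 0 < r) (hs : 0 < s) : ∃ ε : ZPˣ,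
    r * e1 ε ^ 2 ≤ φ ^ 2 * (s * e2 ε ^ 2) ∧ s * e2 ε ^ 2 ≤ φ ^ 2 * (r * e1 ε ^ 2) ∧
    e1 ε ^ 2 * e2 ε ^ 2 = 1 := by
  have h1 : 1 < φ ^ 4 := one_lt_pow₀ Real.one_lt_goldenRatio (by norm_num)
  -- choose `j` with `φ ^ (4 j) ≤ φ ^ 2 r / s < φ ^ (4 j + 4)` and use `ε = φ ^ (-j)`
  obtain ⟨j, hj1, hj2⟩ := exists_mem_Ico_zpow (x := φ ^ 2 * (r / s)) (y := φ ^ 4)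
    (by have := Real.goldenRatio_pos; positivity) h1
  refine ⟨phiU ^ (-j), ?_⟩
  rw [e1_phiU_zpow, e2_phiU_zpow]
  have hpos := Real.goldenRatio_pos
  set p : ℝ := φ ^ (-j) with hp
  have hp0 : 0 < p := zpow_pos hpos _
  have hq : (ψ ^ (-j)) ^ 2 = (p ^ 2)⁻¹ := by
    have : ψ = - φ⁻¹ := by rw [Real.inv_goldenRatio]; ring
    have h2 : ((ψ ^ (-j)) ^ 2 : ℝ) = (ψ ^ 2) ^ (-j) := by
      rw [← zpow_natCast, ← zpow_natCast, ← zpow_mul, ← zpow_mul, mul_comm]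
    rw [h2, this, neg_sq, hp, inv_pow, inv_zpow, ← zpow_natCast, ← zpow_natCast, ← zpow_mul, ← zpow_mul, mul_comm]
  have hp4 : (φ ^ 4) ^ j = (p ^ 4)⁻¹ := by
    rw [hp, ← zpow_natCast, ← zpow_natCast, ← zpow_mul, ← zpow_mul, ← zpow_neg]; congr 1; push_cast; ring
  rw [hq]
  rw [hp4] at hj1
  rw [zpow_add_one₀ (by positivity), hp4] at hj2
  set g := φ
  refine ⟨?_, ?_, by field_simp⟩
  · have : g ^ 2 * (r / s) ≤ (p ^ 4)⁻¹ * g ^ 4 := hj2.le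
    have h3 : r * p ^ 2 = (g ^ 2 * (r / s)) * (s * p ^ 2 / g ^ 2) := by field_simp
    have h4 : g ^ 2 * (s * (p ^ 2)⁻¹) = ((p ^ 4)⁻¹ * g ^ 4) * (s * p ^ 2 / g ^ 2) := by field_simp
    rw [h3, h4]
    gcongr
  · have h3 : s * (p ^ 2)⁻¹ = (p ^ 4)⁻¹ * (s * p ^ 2) := by field_simp
    have h4 : g ^ 2 * (r * p ^ 2) = (g ^ 2 * (r / s)) * (s * p ^ 2) := by field_simp
    rw [h3, h4]
    gcongr

/-- A totally positive unit of `ℤ[φ]` is the square of a unit. -/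
theorem unit_sq {x : ZP} (hx : TP x) (hn : nm x = 1) : ∃ u : ZPˣ, x = (u : ZP) ^ 2 := by
  obtain ⟨ε, h1, h2, h3⟩ := exists_balance hx.1 hx.2
  have hε : (ε : ZP) ≠ 0 := ε.ne_zero
  set y : ZP := x * ε ^ 2 with hy
  have hyp : TP y := hx.mul (TP_sq hε)
  have hny : nm y = 1 := by
    rw [hy, nm_mul, hn, nm_pow, one_mul]
    rcases isUnit_iff_nm.1 ε.isUnit with h | h <;> simp [h]
  have e1y : e1 x * e1 ε ^ 2 = e1 y := by simp [hy]
  have e2y : e2 x * e2 ε ^ 2 = e2 y := by simp [hy]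
  rw [e1y, e2y] at h1 h2
  have hmul : e1 y * e2 y = 1 := by rw [e1_mul_e2, hny]; simp
  have hadd := e1_add_e2 y
  have hlt : tr y < 3 := by
    have : (tr y : ℝ) < 3 := by
      rw [← hadd]
      have hφ := Real.goldenRatio_sq
      have h2' : φ < 5 / 3 := by
        by_contra h
        nlinarith [Real.goldenRatio_lt_two]
      have hsq : (e1 y - e2 y) ^ 2 < 5 := by
        have ha : e1 y ^ 2 ≤ φ ^ 2 := by nlinarith [hyp.1]
        have hb : e2 y ^ 2 ≤ φ ^ 2 := by nlinarith [hyp.2]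
        nlinarith
      nlinarith [hyp.1, hyp.2]
    exact_mod_cast this
  have hgt : 0 < tr y := hyp.tr_pos
  have hd : 4 * nm y = tr y ^ 2 - 5 * y.im ^ 2 := by simp only [nm, tr]; ring
  rw [hny] at hd
  have hy1 : y = 1 := by
    have ht : tr y = 2 := by
      interval_cases h : tr y
      · exfalso; nlinarith [sq_nonneg y.im]
      · rfl
    rw [ht] at hd
    have him : y.im = 0 := by nlinarith [sq_nonneg y.im]
    have hre : y.re = 1 := by simp only [tr, him] at ht; omega
    ext <;> simp [him, hre]
  refine ⟨ε⁻¹, ?_⟩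
  have : x * ε ^ 2 * (ε⁻¹ : ZPˣ) ^ 2 = x := by
    rw [mul_assoc, ← mul_pow, Units.mul_inv]; simp
  rw [← this, ← hy, hy1, one_mul]

end Pyth5

/-! ### Reduction of ternary forms of determinant one -/

namespace Pyth5
open QuadraticAlgebra
local notation "φ" => Real.goldenRatio
local notation "ψ" => Real.goldenConj

theorem phi_bounds : (1.618 : ℝ) < φ ∧ φ < 1.6181 := by
  have h := Real.goldenRatio_sq
  have h1 := Real.one_lt_goldenRatio
  constructor
  · by_contra h2; nlinarith
  · by_contra h2; nlinarith

/-- A point of a triangle is close to one of its vertices: the mean of the squared distances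
with barycentric weights bounds the minimum. -/
theorem exists_vertex {m n X Y : ℝ} (hX : 0 ≤ X) (hY : 0 ≤ Y) (hXY : X + Y ≤ 1)
    (h : n ≤ 12.39 ∧ 9 + n - m ≤ 14.62 ∨ n ≤ 14.62 ∧ 9 + n - m ≤ 12.39) :
    ∃ a b : ℤ, 9 * (X - a) ^ 2 + m * ((X - a) * (Y - b)) + n * (Y - b) ^ 2 ≤ 4.1 := by
  have hz : 0 ≤ 1 - X - Y := by linarith
  have hYz := mul_nonneg hY hz
  have hXY' := mul_nonneg hX hY
  have key : 9 * (X * (1 - X - Y)) + n * (Y * (1 - X - Y)) + (9 + n - m) * (X * Y) ≤ 4.1 := by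
    rcases h with ⟨h1, h2⟩ | ⟨h1, h2⟩
    · have : 9 * (X * (1 - X - Y)) + 12.39 * (Y * (1 - X - Y)) + 14.62 * (X * Y) ≤ 4.1 := by
        nlinarith [sq_nonneg (18 * X + 6.77 * Y - 9), sq_nonneg (Y - 0.405)]
      nlinarith
    · have : 9 * (X * (1 - X - Y)) + 14.62 * (Y * (1 - X - Y)) + 12.39 * (X * Y) ≤ 4.1 := by
        nlinarith [sq_nonneg (18 * X + 11.23 * Y - 9), sq_nonneg (Y - 0.405)]
      nlinarith
  by_contra hcon
  push Not at hcon
  have h0 := hcon 0 0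
  have h1 := hcon 1 0
  have h2 := hcon 0 1
  push_cast at h0 h1 h2
  have : 4.1 * ((1 - X - Y) + X + Y) < (1 - X - Y) * (9 * (X - 0) ^ 2 + m * ((X - 0) * (Y - 0)) + n * (Y - 0) ^ 2)
    + X * (9 * (X - 1) ^ 2 + m * ((X - 1) * (Y - 0)) + n * (Y - 0) ^ 2)
    + Y * (9 * (X - 0) ^ 2 + m * ((X - 0) * (Y - 1)) + n * (Y - 1) ^ 2) := by
    rcases hX.eq_or_lt with h | h
    · rcases hY.eq_or_lt with h' | h'
      · rw [← h, ← h'] at h0 ⊢; linarith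
      · nlinarith
    · have := mul_lt_mul_of_pos_left h1 h
      have := mul_le_mul_of_nonneg_left h0.le hz
      have := mul_le_mul_of_nonneg_left h2.le hY
      linarith
  nlinarith

/-- With respect to the quadratic form `4 X² + 5 Y²` or `5 X² + 4 Y²` the lattice `ℤ[φ] ⊆ ℝ²` has squared
covering radius at most `4.1`. -/
theorem covering {α β : ℝ} (h : α = 4 ∧ β = 5 ∨ α = 5 ∧ β = 4) (u v : ℝ) :
    ∃ x : ZP, α * (u - e1 x) ^ 2 + β * (v - e2 x) ^ 2 ≤ 4.1 := by
  obtain ⟨hb1, hb2⟩ := phi_bounds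
  have hφ := Real.goldenRatio_sq
  have hψ : ψ = 1 - φ := Real.one_sub_goldenConj.symm
  set m := 2 * (α * φ + β * ψ) with hm
  set n := α * φ ^ 2 + β * ψ ^ 2 with hn
  have hαβ : α + β = 9 := by rcases h with h | h <;> rw [h.1, h.2] <;> norm_num
  have hmn : n ≤ 12.39 ∧ 9 + n - m ≤ 14.62 ∨ n ≤ 14.62 ∧ 9 + n - m ≤ 12.39 := by
    rcases h with ⟨rfl, rfl⟩ | ⟨rfl, rfl⟩
    · left; constructor <;> nlinarith
    · right; constructor <;> nlinarith
  have main : ∀ p q : ℝ, ∃ a b : ℤ, 9 * (p - a) ^ 2 + m * ((p - a) * (q - b)) + n * (q - b) ^ 2 ≤ 4.1 := by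
    intro p q
    rcases le_total (Int.fract p + Int.fract q) 1 with h1 | h1
    · obtain ⟨a, b, hab⟩ := exists_vertex (Int.fract_nonneg p) (Int.fract_nonneg q) h1 hmn
      refine ⟨⌊p⌋ + a, ⌊q⌋ + b, ?_⟩
      rw [Int.fract, Int.fract] at hab
      push_cast
      convert hab using 1; ring
    · obtain ⟨a, b, hab⟩ := exists_vertex (X := 1 - Int.fract p) (Y := 1 - Int.fract q)
        (by linarith [Int.fract_lt_one p]) (by linarith [Int.fract_lt_one q]) (by linarith) hmn
      refine ⟨⌊p⌋ + 1 - a, ⌊q⌋ + 1 - b, ?_⟩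
      rw [Int.fract, Int.fract] at hab
      push_cast
      convert hab using 1; ring
  have hd : φ - ψ ≠ 0 := by rw [hψ]; intro h0; linarith
  obtain ⟨a, b, hab⟩ := main (u - (u - v) / (φ - ψ) * φ) ((u - v) / (φ - ψ))
  refine ⟨⟨a, b⟩, ?_⟩
  convert hab using 1
  rw [e1_apply, e2_apply, ← hαβ, hm, hn]
  set q := (u - v) / (φ - ψ) with hq
  have hv : v = u - q * (φ - ψ) := by rw [hq]; field_simp; ring
  rw [hv]
  push_cast
  ring

/-- Since `4.1 + 4.79 < √80`, the inequality between arithmetic and geometric means turns the additive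
bound of `covering` into a bound for the product. The unequal weights `4, 5` are needed because `ρ` and `σ`
may differ by a factor `φ²`. -/
theorem covering_mul {ρ σ : ℝ} (hρ : 0 < ρ) (hσ : 0 < σ) (h1 : ρ ≤ φ ^ 2 * σ) (h2 : σ ≤ φ ^ 2 * ρ)
    (h3 : ρ * σ ≤ 1 / 4) (u v : ℝ) :
    ∃ x : ZP, ((u - e1 x) ^ 2 + ρ) * ((v - e2 x) ^ 2 + σ) < 1 := by
  obtain ⟨hb1, hb2⟩ := phi_bounds
  have hφ := Real.goldenRatio_sq
  have hφ2 : φ ^ 2 ≤ 2.6181 := by rw [hφ]; linarith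
  have aux : ∀ {r s : ℝ}, 0 < r → 0 < s → s ≤ r → r ≤ 2.6181 * s → r * s ≤ 1 / 4 →
      4 * r + 5 * s ≤ 4.79 := by
    intro r s hr hs h h' h4
    have : (4 * r + 5 * s) ^ 2 ≤ 4.79 ^ 2 := by
      nlinarith [mul_nonneg (sub_nonneg.2 h) (sub_nonneg.2 h')]
    exact le_of_sq_le_sq this
  rcases le_total σ ρ with h | h
  · obtain ⟨x, hx⟩ := covering (Or.inl ⟨rfl, rfl⟩) u v
    refine ⟨x, ?_⟩
    have := aux hρ hσ h (by nlinarith) h3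
    set P := (u - e1 x) ^ 2 + ρ
    set Q := (v - e2 x) ^ 2 + σ
    have hP : 0 < P := by positivity
    have hQ : 0 < Q := by positivity
    have hPQ : 4 * P + 5 * Q ≤ 8.89 := by simp only [P, Q]; linarith
    nlinarith [sq_nonneg (4 * P - 5 * Q)]
  · obtain ⟨x, hx⟩ := covering (Or.inr ⟨rfl, rfl⟩) u v
    refine ⟨x, ?_⟩
    have := aux hσ hρ h (by nlinarith) (by linarith)
    set P := (u - e1 x) ^ 2 + ρ
    set Q := (v - e2 x) ^ 2 + σ
    have hP : 0 < P := by positivity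
    have hQ : 0 < Q := by positivity
    have hPQ : 5 * P + 4 * Q ≤ 8.89 := by simp only [P, Q]; linarith
    nlinarith [sq_nonneg (5 * P - 4 * Q)]
  where le_of_sq_le_sq {x : ℝ} (h : x ^ 2 ≤ 4.79 ^ 2) : x ≤ 4.79 := by nlinarith

/-- Reduction of binary forms: if the determinant of a totally positive form is small compared with its
leading coefficient `a`, the form takes a totally positive value of smaller norm at a vector `(x, ε)`
with `ε` a unit. Such a vector is the first column of an invertible matrix. -/
theorem binary_reduce {a b c : ZP} (ha : TP a) (hD : TP (a * c - b ^ 2))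
    (h : 4 * nm (a * c - b ^ 2) ≤ nm a ^ 2) :
    ∃ (x : ZP) (ε : ZPˣ), TP (a * x ^ 2 + 2 * b * x * ε + c * ε ^ 2) ∧
      nm (a * x ^ 2 + 2 * b * x * ε + c * ε ^ 2) < nm a := by
  set D := a * c - b ^ 2 with hDd
  have ha1 := ha.1
  have ha2 := ha.2
  obtain ⟨ε, h1, h2, h3⟩ := exists_balance (r := e1 D / e1 a ^ 2) (s := e2 D / e2 a ^ 2)
    (div_pos hD.1 (by positivity)) (div_pos hD.2 (by positivity))
  have he1 : e1 ε ≠ 0 := by rw [Ne, e1_eq_zero]; exact ε.ne_zero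
  have he2 : e2 ε ≠ 0 := by rw [Ne, e2_eq_zero]; exact ε.ne_zero
  have hD1 := hD.1
  have hD2 := hD.2
  have h4 : (e1 D / e1 a ^ 2 * e1 ε ^ 2) * (e2 D / e2 a ^ 2 * e2 ε ^ 2) ≤ 1 / 4 := by
    have : (e1 D / e1 a ^ 2 * e1 ε ^ 2) * (e2 D / e2 a ^ 2 * e2 ε ^ 2) =
        (e1 D * e2 D) / (e1 a * e2 a) ^ 2 * (e1 ε ^ 2 * e2 ε ^ 2) := by field_simp
    rw [this, h3, mul_one, e1_mul_e2, e1_mul_e2, div_le_iff₀ (by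
      have : (nm a : ℝ) ≠ 0 := by exact_mod_cast ha.nm_pos.ne'
      positivity)]
    have : (4 * nm D : ℝ) ≤ nm a ^ 2 := by exact_mod_cast h
    linarith
  obtain ⟨x, hx⟩ := covering_mul (by positivity) (by positivity) h1 h2 h4
    (-(e1 b * e1 ε / e1 a)) (-(e2 b * e2 ε / e2 a))
  have key : ∀ {f : ZP →+* ℝ}, 0 < f a → f (a * x ^ 2 + 2 * b * x * ε + c * ε ^ 2) =
      f a * ((-(f b * f ε / f a) - f x) ^ 2 + f D / f a ^ 2 * f ε ^ 2) := by
    intro f hf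
    rw [hDd]; simp only [map_add, map_mul, map_sub, map_pow, map_ofNat]
    field_simp; ring
  refine ⟨x, ε, ⟨?_, ?_⟩, ?_⟩
  · rw [key ha1]; positivity
  · rw [key ha2]; positivity
  · have : (nm (a * x ^ 2 + 2 * b * x * ε + c * ε ^ 2) : ℝ) < nm a := by
      rw [← e1_mul_e2, ← e1_mul_e2 a, key ha1, key ha2, mul_mul_mul_comm]
      exact mul_lt_of_lt_one_right (mul_pos ha1 ha2) hx
    exact_mod_cast this

/-- Sums of three squares in `ℤ[φ]`. -/
def S3 (x : ZP) : Prop := ∃ a b c : ZP, x = a ^ 2 + b ^ 2 + c ^ 2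

/-- The ternary quadratic form with Gram matrix `![![a, b, d], ![b, c, e], ![d, e, g]]`. -/
def tern (a b c d e g X Y Z : ZP) : ZP :=
  a * X ^ 2 + 2 * b * X * Y + c * Y ^ 2 + 2 * d * X * Z + 2 * e * Y * Z + g * Z ^ 2

/-- The determinant of the Gram matrix of `tern a b c d e g`. -/
def ternDet (a b c d e g : ZP) : ZP :=
  a * (c * g - e ^ 2) - b * (b * g - e * d) + d * (b * e - c * d)

theorem small_norm {m n : ℤ} (hm : 0 < m) (hn : 0 < n) (h1 : m ^ 2 < 4 * n) (h2 : n ^ 2 < 4 * m) :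
    m < 4 := by
  by_contra h
  push Not at h
  nlinarith [mul_pos hm hn]

/-- A totally positive ternary form of determinant one takes only sums of three squares as values. Either
`binary_reduce` lowers the norm of `a`, or, applied to the form of determinant `a` given by minors, it lowers
the norm of `a c - b²`; if neither applies, both are squares of units and completing squares finishes. -/
theorem tern_S3 (k : ℕ) : ∀ {a b c d e g : ZP}, ternDet a b c d e g = 1 → TP a → TP (a * c - b ^ 2) →
    nm a + nm (a * c - b ^ 2) ≤ k → ∀ X Y Z, S3 (tern a b c d e g X Y Z) := by
  induction k with
  | zero =>
    intro a b c d e g _ h1 h2 h3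
    have := h1.nm_pos; have := h2.nm_pos; push_cast at h3; omega
  | succ k ih =>
    intro a b c d e g hdet ha hA hk X Y Z
    by_cases h1 : 4 * nm (a * c - b ^ 2) ≤ nm a ^ 2
    · obtain ⟨x, ε, ht, hlt⟩ := binary_reduce ha hA h1
      set f : ZP := ((ε⁻¹ : ZPˣ) : ZP) with hf
      have hef : (ε : ZP) * f = 1 := Units.mul_inv ε
      generalize (ε : ZP) = w at *
      have hA' : (a * x ^ 2 + 2 * b * x * w + c * w ^ 2) * (f ^ 2 * a) - (f * (x * a + w * b)) ^ 2
          = a * c - b ^ 2 := by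
        have : (a * x ^ 2 + 2 * b * x * w + c * w ^ 2) * (f ^ 2 * a) - (f * (x * a + w * b)) ^ 2
          = (w * f) ^ 2 * (a * c - b ^ 2) := by ring
        rw [this, hef]; ring
      have hd' : ternDet (a * x ^ 2 + 2 * b * x * w + c * w ^ 2) (f * (x * a + w * b)) (f ^ 2 * a)
          (x * d + w * e) (f * d) g = 1 := by
        have : ternDet (a * x ^ 2 + 2 * b * x * w + c * w ^ 2) (f * (x * a + w * b)) (f ^ 2 * a)
          (x * d + w * e) (f * d) g = (w * f) ^ 2 * ternDet a b c d e g := by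
          simp only [ternDet]; ring
        rw [this, hef, hdet]; ring
      have := ih hd' ht (by rwa [hA']) (by rw [hA']; push_cast at hk; omega) (f * Y) (w * (X - x * f * Y)) Z
      convert this using 1
      have h2 : x * (f * Y) + f * (w * (X - x * f * Y)) = X := by
        linear_combination (X - x * f * Y) * hef
      have h3 : w * (f * Y) = Y := by linear_combination Y * hef
      have h4 : ∀ P Q : ZP, tern (a * x ^ 2 + 2 * b * x * w + c * w ^ 2) (f * (x * a + w * b)) (f ^ 2 * a)
          (x * d + w * e) (f * d) g P Q Z = tern a b c d e g (x * P + f * Q) (w * P) Z := by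
        intro P Q; simp only [tern]; ring
      rw [h4, h2, h3]
    · by_cases h2 : 4 * nm a ≤ nm (a * c - b ^ 2) ^ 2
      · have hB : (a * c - b ^ 2) * (a * g - d ^ 2) - (a * e - b * d) ^ 2 = a := by
          have : (a * c - b ^ 2) * (a * g - d ^ 2) - (a * e - b * d) ^ 2 = a * ternDet a b c d e g := by
            simp only [ternDet]; ring
          rw [this, hdet, mul_one]
        obtain ⟨x, ε, ht, hlt⟩ := binary_reduce (b := a * e - b * d) (c := a * g - d ^ 2) hA
          (by rwa [hB]) (by rwa [hB])
        set f : ZP := ((ε⁻¹ : ZPˣ) : ZP) with hf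
        have hef : (ε : ZP) * f = 1 := Units.mul_inv ε
        generalize (ε : ZP) = w at *
        have hA' : a * (c * x ^ 2 + 2 * e * x * w + g * w ^ 2) - (x * b + w * d) ^ 2 =
          (a * c - b ^ 2) * x ^ 2 + 2 * (a * e - b * d) * x * w + (a * g - d ^ 2) * w ^ 2 := by ring
        have hd' : ternDet a (x * b + w * d) (c * x ^ 2 + 2 * e * x * w + g * w ^ 2) (f * b)
            (f * (x * c + w * e)) (f ^ 2 * c) = 1 := by
          have : ternDet a (x * b + w * d) (c * x ^ 2 + 2 * e * x * w + g * w ^ 2) (f * b)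
            (f * (x * c + w * e)) (f ^ 2 * c) = (w * f) ^ 2 * ternDet a b c d e g := by
            simp only [ternDet]; ring
          rw [this, hef, hdet]; ring
        have := ih hd' ha (by rwa [hA']) (by rw [hA']; push_cast at hk; omega) X (f * Z) (w * (Y - x * f * Z))
        convert this using 1
        have h2 : x * (f * Z) + f * (w * (Y - x * f * Z)) = Y := by
          linear_combination (Y - x * f * Z) * hef
        have h3 : w * (f * Z) = Z := by linear_combination Z * hef
        have h4 : ∀ P Q : ZP, tern a (x * b + w * d) (c * x ^ 2 + 2 * e * x * w + g * w ^ 2) (f * b)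
            (f * (x * c + w * e)) (f ^ 2 * c) X P Q = tern a b c d e g X (x * P + f * Q) (w * P) := by
          intro P Q; simp only [tern]; ring
        rw [h4, h2, h3]
      · push Not at h1 h2
        have hna := ha.nm_pos
        have hnA := hA.nm_pos
        have l1 := small_norm hna hnA h1 h2
        have l2 := small_norm hnA hna h2 h1
        -- the only norms of absolute value less than `4` are `±1`
        have one_of : ∀ z : ZP, 0 < nm z → nm z < 4 → nm z = 1 := by
          intro z h h'; have := nm_mod_five z; omega
        obtain ⟨u, hu⟩ := unit_sq ha (one_of _ hna l1)
        obtain ⟨v, hv⟩ := unit_sq hA (one_of _ hnA l2)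
        have hu' : a * ((u⁻¹ : ZPˣ) : ZP) ^ 2 = 1 := by rw [hu, ← mul_pow, Units.mul_inv]; simp
        have hv' : (a * c - b ^ 2) * ((v⁻¹ : ZPˣ) : ZP) ^ 2 = 1 := by
          rw [hv, ← mul_pow, Units.mul_inv]; simp
        generalize ((u⁻¹ : ZPˣ) : ZP) = p at *
        generalize ((v⁻¹ : ZPˣ) : ZP) = q at *
        refine ⟨p * (a * X + b * Y + d * Z), p * q * ((a * c - b ^ 2) * Y + (a * e - b * d) * Z), q * Z, ?_⟩
        apply mul_left_cancel₀ (mul_ne_zero ha.ne_zero hA.ne_zero)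
        set A := a * c - b ^ 2 with hAd
        have : a * A * ((p * (a * X + b * Y + d * Z)) ^ 2 + (p * q * (A * Y + (a * e - b * d) * Z)) ^ 2 + (q * Z) ^ 2)
          = (a * p ^ 2) * A * (a * X + b * Y + d * Z) ^ 2 + (a * p ^ 2) * (A * q ^ 2) *
            (A * Y + (a * e - b * d) * Z) ^ 2 + (A * q ^ 2) * a * (ternDet a b c d e g) * Z ^ 2 := by
            rw [hdet]; ring
        rw [this, hu', hv', hAd]
        simp only [tern, ternDet]; ring

end Pyth5

/-! ### Square roots modulo inert primes -/

namespace Pyth5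
open QuadraticAlgebra
open NumberTheorySymbols

theorem S3.sq_mul {x : ZP} (h : S3 x) (c : ZP) : S3 (c ^ 2 * x) := by
  obtain ⟨p, q, r, rfl⟩ := h
  exact ⟨c * p, c * q, c * r, by ring⟩

/-- If `-D` is a square modulo `x` and `-x` is a square modulo `D`, where `D` and `x` are coprime and totally
positive, then `D` is represented by an explicit totally positive ternary form of determinant one. -/
theorem S3_of_dvd {D x s t u v : ZP} (hD : TP D) (hx : TP x) (hc : u * D + v * x = 1)
    (h1 : x ∣ s ^ 2 + D) (h2 : D ∣ t ^ 2 + x) : S3 D := by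
  obtain ⟨m, hm⟩ := h1
  obtain ⟨n, hn⟩ := h2
  obtain ⟨a, ha⟩ : ∃ a, D * a = 1 + t ^ 2 * v ^ 2 * x :=
    ⟨v ^ 2 * x * n + u * (1 + v * x), by linear_combination (-v ^ 2 * x) * hn + (1 + v * x) * hc⟩
  obtain ⟨c, hc'⟩ : ∃ c, x * c = 1 + s ^ 2 * u ^ 2 * D :=
    ⟨u ^ 2 * D * m + v * (1 + u * D), by linear_combination (-u ^ 2 * D) * hm + (1 + u * D) * hc⟩
  have hTx : TNN (t ^ 2 * v ^ 2 * x) := by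
    simp only [TNN, map_mul, map_pow]
    exact ⟨mul_nonneg (by positivity) hx.1.le, mul_nonneg (by positivity) hx.2.le⟩
  have hSD : TNN (s ^ 2 * u ^ 2 * D) := by
    simp only [TNN, map_mul, map_pow]
    exact ⟨mul_nonneg (by positivity) hD.1.le, mul_nonneg (by positivity) hD.2.le⟩
  have hta : TP a := by
    refine hD.of_mul ?_
    rw [ha]; exact TP_one.add_TNN hTx
  have hA : TP (a * c - (t * v * (s * u)) ^ 2) := by
    refine (hD.mul hx).of_mul ?_
    have : D * x * (a * c - (t * v * (s * u)) ^ 2) = 1 + t ^ 2 * v ^ 2 * x + s ^ 2 * u ^ 2 * D := by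
      linear_combination (x * c) * ha + (1 + t ^ 2 * v ^ 2 * x) * hc'
    rw [this]; exact (TP_one.add_TNN hTx).add_TNN hSD
  have hdet : ternDet a (t * v * (s * u)) c (t * v * x) (s * u * D) (D * x) = 1 := by
    simp only [ternDet]
    linear_combination (x * c - s ^ 2 * u ^ 2 * D) * ha + hc'
  have := tern_S3 (nm a + nm (a * c - (t * v * (s * u)) ^ 2)).toNat hdet hta hA
    (Int.self_le_toNat _) D 0 (-(t * v))
  convert this using 1
  simp only [tern]
  linear_combination (-D) * ha

/-- The special case of `S3_of_dvd` in which `x` and `t` are rational integers. -/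
theorem S3_of_int {D : ZP} (hD : TP D) {x : ℤ} (hx : 0 < x) (hc : IsCoprime (nm D) x) {t : ℤ}
    (ht : nm D ∣ t ^ 2 + x) {s : ZP} (hs : (x : ZP) ∣ s ^ 2 + D) : S3 D := by
  obtain ⟨u, v, huv⟩ := hc
  refine S3_of_dvd (u := u * cj D) (v := v) (s := s) (t := t) hD (TP_intCast hx) ?_ hs ?_
  · have := mul_cj D
    have h2 : ((u * nm D + v * x : ℤ) : ZP) = 1 := by rw [huv]; simp
    push_cast at h2
    linear_combination (u : ZP) * this + h2
  · refine (Dvd.intro _ (mul_cj D)).trans ?_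
    have := (Int.cast_dvd_cast (α := ZP) _ _ ht)
    simpa using this

/-- A form of the theorem on primes in arithmetic progressions, with the residue modulo `5` prescribed
separately. -/
theorem exists_prime_modEq {M : ℕ} (hM : M ≠ 0) (h5 : M.Coprime 5) {a : ℕ} (ha : a.Coprime M) {c : ℕ}
    (hc : c.Coprime 5) (N : ℕ) : ∃ p > N, p.Prime ∧ p ≡ a [MOD M] ∧ p ≡ c [MOD 5] := by
  obtain ⟨k, hk1, hk2⟩ := Nat.chineseRemainder h5 a c
  have hk : k.Coprime (M * 5) := by
    refine Nat.Coprime.mul_right ?_ ?_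
    · rw [Nat.Coprime, hk1.gcd_eq]; exact ha
    · rw [Nat.Coprime, hk2.gcd_eq]; exact hc
  obtain ⟨p, hpN, hp, hpk⟩ := Nat.forall_exists_prime_gt_and_modEq N (q := M * 5) (by omega) hk
  exact ⟨p, hpN, hp, (hpk.of_mul_right 5).trans hk1, (hpk.of_mul_left M).trans hk2⟩

/-- If `q ≡ -1` modulo `4 n`, then `J(n | q) = J(n | 4 n - 1) = J(4 n | 4 n - 1) = 1`. -/
theorem jacobi_of_dvd {n q : ℕ} (hn : 0 < n) (h : 4 * n ∣ q + 1) : J(n | q) = 1 := by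
  have hodd : Odd q := by
    obtain ⟨k, hk⟩ := h
    rw [← Nat.not_even_iff_odd, even_iff_two_dvd]
    have : q + 1 = 2 * (2 * (n * k)) := by rw [hk]; ring
    omega
  rw [jacobiSym.mod_right _ hodd, Int.natAbs_natCast]
  have hmod : q % (4 * n) = 4 * n - 1 := by
    obtain ⟨k, hk⟩ := h
    obtain ⟨k, rfl⟩ : ∃ k', k = k' + 1 := ⟨k - 1, by
      rcases k with _ | k
      · simp at hk
      · simp⟩
    have : q = (4 * n - 1) + 4 * n * k := by
      have : q + 1 = 4 * n * k + 4 * n := by rw [hk]; ring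
      omega
    rw [this, Nat.add_mul_mod_self_left, Nat.mod_eq_of_lt (by omega)]
  rw [hmod]
  have hodd' : Odd (4 * n - 1) := by rw [Nat.odd_iff]; omega
  have h4 : J((2 : ℤ) ^ 2 | 4 * n - 1) = 1 := by
    apply jacobiSym.sq_one'
    exact Nat.coprime_two_left.mpr hodd'
  have h1 : J((2 : ℤ) ^ 2 * n | 4 * n - 1) = 1 := by
    rw [jacobiSym.mod_left]
    have : ((2 : ℤ) ^ 2 * n) % ((4 * n - 1 : ℕ) : ℤ) = 1 := by
      have h2 : ((4 * n - 1 : ℕ) : ℤ) = 4 * n - 1 := by omega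
      rw [h2, show (2 : ℤ) ^ 2 * n = 1 + (4 * n - 1) by ring, Int.add_emod_right]
      exact Int.emod_eq_of_lt (by norm_num) (by omega)
    rw [this, jacobiSym.one_left]
  rwa [jacobiSym.mul_left, h4, one_mul] at h1

theorem jacobi_five {q : ℕ} (h2 : Odd q) (h5 : q % 5 = 2) : J(5 | q) = -1 := by
  have := jacobiSym.quadratic_reciprocity_one_mod_four (a := 5) (b := q) (by norm_num) h2
  have h : J((5 : ℕ) | q) = J(5 | q) := by norm_num
  rw [← h, this, jacobiSym.mod_left]
  have : ((q : ℤ) % (5 : ℕ)) = 2 := by omega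
  rw [this]; norm_num

theorem exists_int_inv {q : ℕ} [Fact q.Prime] {k : ℤ} (hk : ¬ (q : ℤ) ∣ k) : ∃ j B : ℤ, k * j = 1 + q * B := by
  have : IsCoprime (q : ℤ) k := (Nat.prime_iff_prime_int.mp Fact.out).coprime_iff_not_dvd.mpr hk
  obtain ⟨u, v, h⟩ := this
  exact ⟨v, -u, by linarith⟩

theorem exists_int_sqrt {q : ℕ} {k : ℤ} (hk : IsSquare (k : ZMod q)) : ∃ m C : ℤ, m ^ 2 = k + q * C := by
  obtain ⟨r, hr⟩ := hk
  obtain ⟨m, rfl⟩ := ZMod.intCast_surjective r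
  have : ((m ^ 2 - k : ℤ) : ZMod q) = 0 := by push_cast; rw [hr]; ring
  rw [ZMod.intCast_zmod_eq_zero_iff_dvd] at this
  obtain ⟨C, hC⟩ := this
  exact ⟨m, C, by linarith⟩

/-- Rational integers are squares modulo an inert prime: the integer or its product with `5` is a square
modulo `q`, and `5` is a square in `ℤ[φ]`. -/
theorem inert_int_sqrt {q : ℕ} [Fact q.Prime] (h2 : Odd q) (h5 : q % 5 = 2) {k : ℤ} (hk : ¬ (q : ℤ) ∣ k) :
    ∃ κ A : ZP, κ ^ 2 = k + q * A := by
  rcases jacobiSym.trichotomy k q with h | h | h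
  · exfalso
    rw [← jacobiSym.legendreSym.to_jacobiSym, legendreSym.eq_zero_iff, ZMod.intCast_zmod_eq_zero_iff_dvd] at h
    exact hk h
  · obtain ⟨m, C, hm⟩ := exists_int_sqrt (ZMod.isSquare_of_jacobiSym_eq_one h)
    exact ⟨m, C, by exact_mod_cast congrArg (Int.cast (R := ZP)) hm⟩
  · have : J(5 * k | q) = 1 := by rw [jacobiSym.mul_left, h, jacobi_five h2 h5]; norm_num
    obtain ⟨m, C, hm⟩ := exists_int_sqrt (ZMod.isSquare_of_jacobiSym_eq_one this)
    have hq5 : ¬ (q : ℤ) ∣ 5 := by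
      intro h
      have : q ∣ 5 := by exact_mod_cast h
      rcases (Nat.dvd_prime (by norm_num)).mp this with h | h <;> omega
    obtain ⟨j, B, hj⟩ := exists_int_inv hq5
    -- `k = (m √5 / 5)²` modulo `q`
    refine ⟨m * j * ⟨-1, 2⟩, 5 * C * j ^ 2 + k * B * (5 * j + 1), ?_⟩
    have hs : (⟨-1, 2⟩ : ZP) ^ 2 = 5 := by rw [sq]; ext <;> simp
    have hm' : (m : ZP) ^ 2 = 5 * k + q * C := by exact_mod_cast congrArg (Int.cast (R := ZP)) hm
    have hj' : (5 : ZP) * j = 1 + q * B := by exact_mod_cast congrArg (Int.cast (R := ZP)) hj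
    linear_combination (m ^ 2 * j ^ 2 : ZP) * hs + (5 * j ^ 2 : ZP) * hm' + (k * (5 * j + 1) : ZP) * hj'

/-- Modulo an inert prime `q`, an element `d` whose norm is a nonzero square `m²` is itself a square, because
`(d + m)² ≡ (tr d + 2 m) d` and `tr d + 2 m` is a square by `inert_int_sqrt`. -/
theorem inert_sqrt {q : ℕ} [Fact q.Prime] (h2 : Odd q) (h5 : q % 5 = 2) {d : ZP}
    (hN : J(nm d | q) = 1) : ∃ s : ZP, (q : ZP) ∣ s ^ 2 - d := by
  obtain ⟨m, C, hm⟩ := exists_int_sqrt (ZMod.isSquare_of_jacobiSym_eq_one hN)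
  have hqp : Prime (q : ℤ) := Nat.prime_iff_prime_int.mp Fact.out
  have hnd : ¬ (q : ℤ) ∣ m := by
    intro h
    have : (q : ℤ) ∣ nm d := by
      have h1 : nm d = m * m - q * C := by linarith
      rw [h1]; exact dvd_sub (Dvd.dvd.mul_left h m) (Dvd.intro _ rfl)
    rw [← ZMod.intCast_zmod_eq_zero_iff_dvd, ← legendreSym.eq_zero_iff, jacobiSym.legendreSym.to_jacobiSym, hN] at this
    exact one_ne_zero this
  have main : ∀ m : ℤ, m ^ 2 = nm d + q * C → ¬ (q : ℤ) ∣ tr d + 2 * m → ∃ s : ZP, (q : ZP) ∣ s ^ 2 - d := by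
    intro m hm hk
    obtain ⟨κ, A, hκ⟩ := inert_int_sqrt h2 h5 hk
    obtain ⟨j, B, hj⟩ := exists_int_inv hk
    have hm' : (m : ZP) ^ 2 = (nm d : ℤ) + q * C := by exact_mod_cast congrArg (Int.cast (R := ZP)) hm
    have hj' : ((tr d + 2 * m : ℤ) : ZP) * j = 1 + q * B := by exact_mod_cast congrArg (Int.cast (R := ZP)) hj
    have hd : (d + m) ^ 2 = ((tr d + 2 * m : ℤ) : ZP) * d + q * C := by
      push_cast
      linear_combination hm' + (d : ZP) * (add_cj d) - mul_cj d
    generalize ((tr d + 2 * m : ℤ) : ZP) = k at *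
    refine ⟨(d + m) * κ * j, C * (k + q * A) * j ^ 2 + k * d * A * j ^ 2 + B * (k * j + 1) * d, ?_⟩
    linear_combination (κ ^ 2 * j ^ 2 : ZP) * hd + ((k * d + q * C) * j ^ 2 : ZP) * hκ + (d * (k * j + 1) : ZP) * hj'
  -- the signs `±m` cannot both make `tr d + 2 m` divisible by `q`, as `q` does not divide `4 m`
  by_cases hk : (q : ℤ) ∣ tr d + 2 * m
  · refine main (-m) (by rw [neg_sq, hm]) fun hk' => ?_
    have h4 : (q : ℤ) ∣ 2 ^ 2 * m := by
      rw [show 2 ^ 2 * m = (tr d + 2 * m) - (tr d + 2 * -m) by ring]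
      exact dvd_sub hk hk'
    rcases hqp.dvd_or_dvd h4 with h | h
    · have := hqp.dvd_of_dvd_pow h
      have h' : q ∣ 2 := by exact_mod_cast this
      rcases (Nat.dvd_prime Nat.prime_two).mp h' with h | h
      · exact (Fact.out : q.Prime).one_lt.ne' h
      · rw [h] at h2; exact absurd h2 (by decide)
    · exact hnd h
  · exact main m hm hk

end Pyth5

/-! ### Auxiliary primes -/

namespace Pyth5
open QuadraticAlgebra
open NumberTheorySymbols

/-- The totally positive generator `2 + φ = √5 φ` of the prime ideal above `5`. -/
def pi5 : ZP := ⟨2, 1⟩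

theorem TP_pi5 : TP pi5 := by
  have : pi5 = 1 + (⟨0, 1⟩ : ZP) ^ 2 := by rw [sq]; ext <;> simp [pi5]
  rw [this]; exact TP_one.add_TNN (TNN_sq _)

theorem nm_pi5 : nm pi5 = 5 := by simp [nm, pi5]

theorem pi5_dvd {x : ZP} (h : (5 : ℤ) ∣ nm x) : pi5 ∣ x := by
  have h1 : (5 : ℤ) ∣ (x.re + 3 * x.im) ^ 2 := by
    have : (x.re + 3 * x.im) ^ 2 = nm x + 5 * (x.re * x.im + 2 * x.im ^ 2) := by simp only [nm]; ring
    rw [this]; exact dvd_add h (Dvd.intro _ rfl)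
  obtain ⟨c, hc⟩ := Int.Prime.dvd_pow' (by norm_num : Nat.Prime 5) h1
  push_cast at hc
  refine ⟨(x.im : ZP) + (c - x.im : ℤ) * ⟨3, -1⟩, ?_⟩
  ext <;> simp [pi5] <;> linarith

/-- The case in which the prime above `5` does not divide `D`: a prime `q` with `q ≡ -1` modulo `4 nm D` and
`q ≡ 2` modulo `5` serves as `x`. -/
theorem S3_of_not_five_dvd {D : ZP} (hD : TP D) (h5 : ¬ (5 : ℤ) ∣ nm D) : S3 D := by
  obtain ⟨n, hn⟩ := Int.eq_ofNat_of_zero_le hD.nm_pos.le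
  have hn0 : 0 < n := by have := hD.nm_pos; omega
  have h5n : (4 * n).Coprime 5 := by
    rw [Nat.coprime_comm, Nat.Prime.coprime_iff_not_dvd (by norm_num)]
    rw [hn] at h5; omega
  obtain ⟨q, -, hq, hq1, hq2⟩ := exists_prime_modEq (M := 4 * n) (by omega) h5n (a := 4 * n - 1)
    (by
      have := Nat.coprime_self_add_right (m := 4 * n - 1) (n := 1)
      rw [show 4 * n - 1 + 1 = 4 * n by omega] at this
      rw [this]; exact Nat.coprime_one_right _) (c := 2) (by norm_num) 0
  have : Fact q.Prime := ⟨hq⟩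
  have hdvd : 4 * n ∣ q + 1 := by
    have := (hq1.add_right 1)
    rw [show 4 * n - 1 + 1 = 4 * n by omega] at this
    exact (Nat.modEq_zero_iff_dvd).1 (this.trans (by simp [Nat.ModEq]))
  have hodd : Odd q := by
    obtain ⟨k, hk⟩ := hdvd
    rw [Nat.odd_iff]
    have : q + 1 = 2 * (2 * (n * k)) := by rw [hk]; ring
    omega
  obtain ⟨s, hs⟩ := inert_sqrt (d := -D) hodd (by have := hq2; simp [Nat.ModEq] at this; omega)
    (by rw [nm_neg, hn]; exact jacobi_of_dvd hn0 hdvd)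
  have hz : nm D ∣ (q : ℤ) + 1 := by
    rw [hn]; exact_mod_cast (Dvd.intro_left 4 rfl).trans hdvd
  refine S3_of_int hD (x := q) (by exact_mod_cast hq.pos) ?_ (t := 1) (s := s) ?_ ?_
  · obtain ⟨k, hk⟩ := hz
    exact ⟨k, -1, by linarith⟩
  · convert hz using 1; ring
  · simpa using hs

/-- Modulo a prime `p ≡ 1` modulo `5`, the element `-(2 + φ)` is a square: it is the square of `ζ - ζ⁻¹` for a
fifth root of unity `ζ`. -/
theorem exists_sqrt_neg_pi5 {p : ℕ} [Fact p.Prime] (h : p % 5 = 1) : ∃ η A : ZP, η ^ 2 = -pi5 + p * A := by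
  have : Fact (Nat.Prime 5) := ⟨by norm_num⟩
  obtain ⟨u, hu⟩ := exists_prime_orderOf_dvd_card (G := (ZMod p)ˣ) 5 (by
    rw [ZMod.card_units_eq_totient, Nat.totient_prime Fact.out]
    have := (Fact.out : p.Prime).pos
    omega)
  set z : ZMod p := (u : ZMod p) with hz
  have hz5 : z ^ 5 = 1 := by
    have := pow_orderOf_eq_one u
    rw [hu] at this
    rw [hz, ← Units.val_pow_eq_pow_val, this, Units.val_one]
  have hz1 : z - 1 ≠ 0 := by
    intro h
    have : u = 1 := Units.ext (by rw [Units.val_one]; exact sub_eq_zero.1 h)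
    rw [this, orderOf_one] at hu
    omega
  have hcyc : 1 + z + z ^ 2 + z ^ 3 + z ^ 4 = 0 := by
    apply mul_left_cancel₀ hz1
    linear_combination hz5
  have h5 : (5 : ZMod p) ≠ 0 := by
    intro h5
    have : ((5 : ℕ) : ZMod p) = 0 := by exact_mod_cast h5
    rw [ZMod.natCast_eq_zero_iff] at this
    rcases (Nat.dvd_prime (by norm_num)).mp this with h' | h'
    · exact (Fact.out : p.Prime).one_lt.ne' h'
    · omega
  obtain ⟨c, hc⟩ : ∃ c : ZMod p, 5 * c = 1 := ⟨5⁻¹, mul_inv_cancel₀ h5⟩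
  -- with `φ = -(z² + z³)` in the residue field, `A + B φ` reduces to a square root of `-(2 + φ)`
  -- at both places above `p`
  obtain ⟨A, hA⟩ := ZMod.intCast_surjective (c * (3 + 6 * z + 4 * z ^ 2 + 2 * z ^ 3))
  obtain ⟨B, hB⟩ := ZMod.intCast_surjective (c * (-z + 3 * z ^ 2 - 3 * z ^ 3 + z ^ 4))
  have e1 : ((A ^ 2 + B ^ 2 + 2 : ℤ) : ZMod p) = 0 := by
    push_cast; rw [hA, hB]
    linear_combination c ^ 2 * (59 - 23 * z + 25 * z ^ 2 - 7 * z ^ 3 + z ^ 4) * hcyc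
      - 2 * (5 * c + 1) * hc
  have e2 : ((2 * A * B + B ^ 2 + 1 : ℤ) : ZMod p) = 0 := by
    push_cast; rw [hA, hB]
    linear_combination c ^ 2 * (25 - 31 * z + 13 * z ^ 2 - 3 * z ^ 3 + z ^ 4) * hcyc
      - (5 * c + 1) * hc
  rw [ZMod.intCast_zmod_eq_zero_iff_dvd] at e1 e2
  obtain ⟨k, hk⟩ := e1
  obtain ⟨l, hl⟩ := e2
  refine ⟨⟨A, B⟩, ⟨k, l⟩, ?_⟩
  rw [sq]; ext <;> simp [pi5] <;> linarith

/-- As `2` is inert with norm `4`, the prime `2` occurs to an even power in every norm. -/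
theorem nm_odd_part (k : ℕ) : ∀ y : ZP, y ≠ 0 → (nm y).natAbs ≤ k → ∃ b a : ℕ, (nm y).natAbs = b ^ 2 * a ∧ Odd a := by
  induction k with
  | zero => intro y hy h; exact absurd (nm_eq_zero.1 (by omega)) hy
  | succ k ih =>
    intro y hy h
    by_cases h2 : (2 : ZP) ∣ y
    · obtain ⟨z, rfl⟩ := h2
      have hz : z ≠ 0 := right_ne_zero_of_mul hy
      have hz' : nm z ≠ 0 := mt nm_eq_zero.1 hz
      have h4 : nm (2 * z) = 4 * nm z := by rw [nm_mul]; congr 1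
      rw [h4] at h ⊢
      obtain ⟨b, a, hab, ha⟩ := ih z hz (by omega)
      exact ⟨2 * b, a, by rw [Int.natAbs_mul, hab]; simp; ring, ha⟩
    · rw [two_dvd_iff] at h2
      exact ⟨1, (nm y).natAbs, by simp, by rwa [Int.natAbs_odd, ← Int.not_even_iff_odd]⟩

/-- A nonsquare `n` prime to `5`, with `2` occurring to an even power, is a nonresidue modulo some inert
prime `r`. -/
theorem exists_prime_jacobi_neg {n : ℕ} (hn0 : n ≠ 0) (h5 : ¬ 5 ∣ n) (hsq : ¬ IsSquare n)
    (hodd : ∃ b a : ℕ, n = b ^ 2 * a ∧ Odd a) :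
    ∃ r : ℕ, r.Prime ∧ Odd r ∧ r % 5 = 2 ∧ J(n | r) = -1 := by
  obtain ⟨b', a', hn', ha'⟩ := hodd
  obtain ⟨a, b'', hb, hsf⟩ := Nat.sq_mul_squarefree a'
  obtain ⟨b, hn⟩ : ∃ b, n = b ^ 2 * a := ⟨b' * b'', by rw [hn', ← hb]; ring⟩
  have hao : Odd a := by rw [← hb] at ha'; exact (Nat.odd_mul.1 ha').2
  have ha1 : a ≠ 1 := by
    rintro rfl
    exact hsq ⟨b, by rw [hn]; ring⟩
  obtain ⟨l, hl, m, rfl⟩ := Nat.exists_prime_and_dvd ha1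
  have hlm : l.Coprime m := by
    rw [Nat.squarefree_mul_iff] at hsf; exact hsf.1
  have hlo : Odd l := (Nat.odd_mul.1 hao).1
  have hmo : Odd m := (Nat.odd_mul.1 hao).2
  have : Fact l.Prime := ⟨hl⟩
  have hl5 : l.Coprime 5 := by
    rw [Nat.coprime_comm, Nat.Prime.coprime_iff_not_dvd (by norm_num)]
    intro h; apply h5; rw [hn]; exact (h.mul_right m).mul_left _
  have hm5 : m.Coprime 5 := by
    rw [Nat.coprime_comm, Nat.Prime.coprime_iff_not_dvd (by norm_num)]
    intro h; apply h5; rw [hn]; exact (h.mul_left l).mul_left _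
  obtain ⟨c, hc⟩ := FiniteField.exists_nonsquare (F := ZMod l) (by
    rw [ZMod.ringChar_zmod_n]; rintro rfl; exact absurd hlo (by decide))
  have hl4m : l.Coprime (4 * m) := by
    refine Nat.Coprime.mul_right ?_ hlm
    exact Nat.Coprime.pow_right 2 (Nat.coprime_two_right.mpr hlo)
  obtain ⟨k, hk1, hk2⟩ := Nat.chineseRemainder hl4m c.val 1
  have hkl : k.Coprime l := by
    rw [Nat.coprime_comm, hl.coprime_iff_not_dvd]
    intro h
    have h1 : ((k : ℕ) : ZMod l) = c := by
      rw [(ZMod.natCast_eq_natCast_iff _ _ _).2 hk1]; simp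
    rw [(ZMod.natCast_eq_zero_iff _ _).2 h] at h1
    exact hc (h1 ▸ IsSquare.zero)
  have hk4m : k.Coprime (4 * m) := by
    rw [Nat.Coprime, hk2.gcd_eq]; simp
  have hm0 : m ≠ 0 := by rintro rfl; simp at hao
  obtain ⟨r, hrn, hr, hr1, hr2⟩ := exists_prime_modEq (M := l * (4 * m))
    (by have := hl.ne_zero; positivity)
    (Nat.Coprime.mul_left hl5 (Nat.Coprime.mul_left (by norm_num) hm5)) (Nat.Coprime.mul_right hkl hk4m)
    (c := 2) (by norm_num) n
  have hr4m : r ≡ 1 [MOD 4 * m] := (hr1.of_mul_left l).trans hk2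
  have hrl : r ≡ c.val [MOD l] := (hr1.of_mul_right _).trans hk1
  have hr4 : r % 4 = 1 := hr4m.of_mul_right m
  have hrm : r ≡ 1 [MOD m] := hr4m.of_mul_left 4
  refine ⟨r, hr, by rw [Nat.odd_iff]; omega, hr2, ?_⟩
  have hb0 : b ≠ 0 := by rintro rfl; simp at hn; exact hn0 hn
  have hbr : (b : ℤ).gcd r = 1 := by
    rw [Int.gcd_natCast_natCast, ← Nat.Coprime, Nat.coprime_comm, hr.coprime_iff_not_dvd]
    intro h
    have : b ∣ n := by rw [hn]; exact Dvd.dvd.mul_right (dvd_pow_self b two_ne_zero) _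
    have := Nat.le_of_dvd (Nat.pos_of_ne_zero hn0) (h.trans this)
    omega
  have h1 : J(((l * m : ℕ) : ℤ) | r) = -1 := by
    rw [← jacobiSym.quadratic_reciprocity_one_mod_four hr4 hao]
    have : NeZero l := ⟨hl.ne_zero⟩
    have : NeZero m := ⟨hm0⟩
    rw [jacobiSym.mul_right]
    have hjm : J(r | m) = 1 := by
      rw [jacobiSym.mod_left, show ((r : ℤ) % m) = ((1 : ℕ) : ℤ) % m by exact_mod_cast hrm, ← jacobiSym.mod_left]
      simp
    have hjl : J(r | l) = -1 := by
      rw [← jacobiSym.legendreSym.to_jacobiSym, legendreSym.eq_neg_one_iff]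
      rw [Int.cast_natCast, (ZMod.natCast_eq_natCast_iff _ _ _).2 hrl]
      simpa using hc
    rw [hjm, hjl]; norm_num
  rw [hn]
  push_cast at h1 ⊢
  rw [jacobiSym.mul_left, jacobiSym.sq_one' hbr, h1, one_mul]

end Pyth5

/-! ### The three-squares theorem over `ℤ[φ]` -/

namespace Pyth5
open QuadraticAlgebra
open NumberTheorySymbols

theorem coprime_of_dvd_succ {M p : ℕ} (h : M ∣ p + 1) : IsCoprime (M : ℤ) p := by
  obtain ⟨k, hk⟩ := h
  refine ⟨k, -1, ?_⟩
  have : (p : ℤ) + 1 = M * k := by exact_mod_cast hk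
  linarith

/-- When `nm D` is a square `m²`, `k D = (D + m)²` with `k = tr D + 2 m`. A prime `p ≡ 1` modulo `5` with
`p ≡ -1` modulo `4 k nm D` makes both `-pi5` and `D` squares modulo `p`. -/
theorem S3_pi5_mul_of_sq {D : ZP} (hD : TP D) (h5 : ¬ (5 : ℤ) ∣ nm D) {m₀ : ℤ} (hm₀ : nm D = m₀ ^ 2) :
    S3 (pi5 * D) := by
  have h5m : ¬ (5 : ℤ) ∣ m₀ := fun h => h5 (by rw [hm₀]; exact dvd_pow h two_ne_zero)
  -- `k D = (D + m)²` for `k = tr D + 2 m`; one of the two signs of `m` makes `k` prime to `5`.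
  obtain ⟨m, hm, hk5⟩ : ∃ m : ℤ, nm D = m ^ 2 ∧ ¬ (5 : ℤ) ∣ tr D + 2 * m := by
    by_cases h : (5 : ℤ) ∣ tr D + 2 * m₀
    · exact ⟨-m₀, by rw [hm₀]; ring, by omega⟩
    · exact ⟨m₀, hm₀, h⟩
  have hkD : (D + m) ^ 2 = ((tr D + 2 * m : ℤ) : ZP) * D := by
    have hm' : (m : ZP) ^ 2 = (nm D : ℤ) := by rw [hm]; push_cast; rfl
    push_cast
    linear_combination hm' + (D : ZP) * (add_cj D) - mul_cj D
  have hk0 : 0 < tr D + 2 * m := by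
    have h1 : 4 * nm D = tr D ^ 2 - 5 * D.im ^ 2 := by simp only [nm, tr]; ring
    have h2 : (2 * m) ^ 2 ≤ tr D ^ 2 := by nlinarith [sq_nonneg D.im]
    have h3 := abs_le_of_sq_le_sq' h2 hD.tr_pos.le
    omega
  obtain ⟨n, hn⟩ := Int.eq_ofNat_of_zero_le hD.nm_pos.le
  have hn0 : 0 < n := by have := hD.nm_pos; omega
  obtain ⟨k, hk⟩ := Int.eq_ofNat_of_zero_le hk0.le
  rw [hk] at hk0 hk5 hkD
  have hk0' : 0 < k := by exact_mod_cast hk0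
  have hn5 : n.Coprime 5 := by
    rw [Nat.coprime_comm, Nat.Prime.coprime_iff_not_dvd (by norm_num)]
    rw [hn] at h5; omega
  have hk5' : k.Coprime 5 := by
    rw [Nat.coprime_comm, Nat.Prime.coprime_iff_not_dvd (by norm_num)]
    omega
  have hM0 : 0 < 4 * k * n := by positivity
  obtain ⟨p, -, hp, hp1, hp2⟩ := exists_prime_modEq (M := 4 * k * n) (by omega)
    (Nat.Coprime.mul_left (Nat.Coprime.mul_left (by norm_num) hk5') hn5) (a := 4 * k * n - 1)
    (by
      have := Nat.coprime_self_add_right (m := 4 * k * n - 1) (n := 1)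
      rw [show 4 * k * n - 1 + 1 = 4 * k * n by omega] at this
      rw [this]; exact Nat.coprime_one_right _) (c := 1) (by norm_num) 0
  have : Fact p.Prime := ⟨hp⟩
  have hdvd : 4 * k * n ∣ p + 1 := by
    have := (hp1.add_right 1)
    rw [show 4 * k * n - 1 + 1 = 4 * k * n by omega] at this
    exact (Nat.modEq_zero_iff_dvd).1 (this.trans (by simp [Nat.ModEq]))
  have hp5 : p % 5 = 1 := hp2
  have hndvd : n ∣ p + 1 := (Dvd.intro_left _ rfl).trans hdvd
  have hkdvd : 4 * k ∣ p + 1 := (Dvd.intro _ rfl).trans hdvd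
  obtain ⟨κ, C, hκ⟩ := exists_int_sqrt (ZMod.isSquare_of_jacobiSym_eq_one (jacobi_of_dvd hk0' hkdvd))
  obtain ⟨j, B, hj⟩ : ∃ j B : ℤ, (k : ℤ) * j = 1 + p * B := by
    obtain ⟨u, v, h⟩ := coprime_of_dvd_succ ((Dvd.intro_left 4 rfl).trans hkdvd)
    exact ⟨u, -v, by linarith⟩
  obtain ⟨η, A, hη⟩ := exists_sqrt_neg_pi5 hp5
  obtain ⟨t, ht1, ht2⟩ := Nat.chineseRemainder hn5 1 2
  have hnm : nm (pi5 * D) = 5 * n := by rw [nm_mul, nm_pi5, hn]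
  have hn5' : IsCoprime (5 : ℤ) n := by
    have := (Nat.isCoprime_iff_coprime.2 hn5).symm; exact_mod_cast this
  refine S3_of_int (TP_pi5.mul hD) (x := p) (by exact_mod_cast hp.pos) ?_ (t := t)
    (s := η * (D + m) * κ * j) ?_ ?_
  · rw [hnm]
    refine IsCoprime.mul_left ⟨-((p / 5 : ℕ) : ℤ), 1, by omega⟩ (coprime_of_dvd_succ hndvd)
  · rw [hnm]
    apply hn5'.mul_dvd
    · have : (5 : ℕ) ∣ t ^ 2 + p := by
        have : t ^ 2 + p ≡ 2 ^ 2 + 1 [MOD 5] := (ht2.pow 2).add hp2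
        exact (Nat.modEq_zero_iff_dvd).1 (this.trans (by decide))
      exact_mod_cast this
    · have : n ∣ t ^ 2 + p := by
        have : t ^ 2 + p ≡ 1 ^ 2 + p [MOD n] := (ht1.pow 2).add_right p
        refine (Nat.modEq_zero_iff_dvd).1 (this.trans ((Nat.modEq_zero_iff_dvd).2 ?_))
        rwa [one_pow, add_comm]
      exact_mod_cast this
  · refine ⟨-pi5 * D * B * (k * j + 1) + A * k * D * (k + p * C) * j ^ 2 - pi5 * k * D * C * j ^ 2, ?_⟩
    have hκ' : (κ : ZP) ^ 2 = k + p * C := by exact_mod_cast congrArg (Int.cast (R := ZP)) hκ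
    have hj' : (k : ZP) * j = 1 + p * B := by exact_mod_cast congrArg (Int.cast (R := ZP)) hj
    push_cast at hkD ⊢
    linear_combination ((D + m) ^ 2 * κ ^ 2 * j ^ 2 : ZP) * hη + ((-pi5 + p * A) * κ ^ 2 * j ^ 2 : ZP) * hkD
      + ((-pi5 + p * A) * k * D * j ^ 2 : ZP) * hκ' - (pi5 * D * (k * j + 1) : ZP) * hj'

theorem dvd_sq_add {r s D z : ZP} (h : r ∣ s ^ 2 + D) : r ∣ (s + r * z) ^ 2 + D := by
  have : (s + r * z) ^ 2 + D = s ^ 2 + D + r * (2 * s * z + r * z ^ 2) := by ring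
  rw [this]; exact dvd_add h (Dvd.intro _ rfl)

/-- When `nm D` is not a square, a product `r q` of two inert primes serves as `x`. The norm of `pi5 * D` is
`5 nm D`, and both `5` and `nm D` are nonresidues modulo `r` and modulo `q`. -/
theorem S3_pi5_mul_of_not_sq {D : ZP} (hD : TP D) (h5 : ¬ (5 : ℤ) ∣ nm D) (hns : ¬ IsSquare (nm D)) :
    S3 (pi5 * D) := by
  obtain ⟨n, hn⟩ := Int.eq_ofNat_of_zero_le hD.nm_pos.le
  have hn0 : 0 < n := by have := hD.nm_pos; omega
  have hnm : nm (pi5 * D) = 5 * n := by rw [nm_mul, nm_pi5, hn]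
  have hn5 : n.Coprime 5 := by
    rw [Nat.coprime_comm, Nat.Prime.coprime_iff_not_dvd (by norm_num)]
    rw [hn] at h5; omega
  obtain ⟨r, hr, hro, hr5, hJr⟩ := exists_prime_jacobi_neg hn0.ne' (by rw [hn] at h5; omega)
    (by rintro ⟨c, hc⟩; exact hns ⟨c, by rw [hn, hc]; simp⟩)
    (by
      have := nm_odd_part _ D hD.ne_zero le_rfl
      rwa [hn] at this)
  have hr4n : r.Coprime (4 * n) := by
    refine Nat.Coprime.mul_right ?_ ?_
    · exact Nat.Coprime.pow_right 2 (Nat.coprime_two_right.mpr hro)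
    · have : NeZero r := ⟨hr.ne_zero⟩
      by_contra h
      have h2 : J(n | r) = 0 := by
        rw [jacobiSym.eq_zero_iff_not_coprime, Int.gcd_natCast_natCast]
        exact fun h' => h (Nat.coprime_comm.1 h')
      rw [h2] at hJr; norm_num at hJr
  obtain ⟨a, ha⟩ : ∃ a : ℕ, 4 * n ∣ r * a + 1 := by
    obtain ⟨u, v, huv⟩ := Nat.isCoprime_iff_coprime.2 hr4n
    refine ⟨((-u) % ((4 * n : ℕ) : ℤ)).toNat, ?_⟩
    have h1 := Int.emod_nonneg (-u) (show ((4 * n : ℕ) : ℤ) ≠ 0 by positivity)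
    have h2 := Int.emod_add_mul_ediv (-u) ((4 * n : ℕ) : ℤ)
    push_cast at h1
    zify
    rw [Int.toNat_of_nonneg h1]
    refine ⟨v - r * (-u / ((4 * n : ℕ) : ℤ)), ?_⟩
    push_cast at h2 huv ⊢
    linear_combination (r : ℤ) * h2 - huv
  have haM : a.Coprime (4 * n) := by
    have := coprime_of_dvd_succ ha
    push_cast at this
    have := this.of_mul_right_right
    exact (Nat.isCoprime_iff_coprime.1 (by exact_mod_cast this)).symm
  obtain ⟨q, hqr, hq, hq1, hq2⟩ := exists_prime_modEq (M := 4 * n) (by omega)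
    (Nat.Coprime.mul_left (by norm_num) hn5) haM (c := 2) (by norm_num) r
  have hq5 : q % 5 = 2 := hq2
  have hdvd : 4 * n ∣ r * q + 1 := by
    have : r * q + 1 ≡ r * a + 1 [MOD 4 * n] := (hq1.mul_left r).add_right 1
    exact (Nat.modEq_zero_iff_dvd).1 (this.trans ((Nat.modEq_zero_iff_dvd).2 ha))
  have hrqo : Odd (r * q) := by
    obtain ⟨k, hk⟩ := hdvd
    rw [Nat.odd_iff]
    have : r * q + 1 = 2 * (2 * (n * k)) := by rw [hk]; ring
    omega
  have hqo : Odd q := (Nat.odd_mul.1 hrqo).2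
  have : NeZero r := ⟨hr.ne_zero⟩
  have : NeZero q := ⟨hq.ne_zero⟩
  have : Fact r.Prime := ⟨hr⟩
  have : Fact q.Prime := ⟨hq⟩
  have hJq : J(n | q) = -1 := by
    have := jacobi_of_dvd hn0 hdvd
    rw [jacobiSym.mul_right, hJr] at this
    linarith
  obtain ⟨s₁, hs₁⟩ := inert_sqrt (d := -(pi5 * D)) hro hr5 (by
    rw [nm_neg, hnm, jacobiSym.mul_left, jacobi_five hro hr5, hJr]; norm_num)
  obtain ⟨s₂, hs₂⟩ := inert_sqrt (d := -(pi5 * D)) hqo hq5 (by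
    rw [nm_neg, hnm, jacobiSym.mul_left, jacobi_five hqo hq5, hJq]; norm_num)
  rw [sub_neg_eq_add] at hs₁ hs₂
  obtain ⟨u, v, huv⟩ := Nat.isCoprime_iff_coprime.2 ((Nat.coprime_primes hr hq).2 hqr.ne)
  have huv' : (u * r + v * q : ZP) = 1 := by exact_mod_cast congrArg (Int.cast (R := ZP)) huv
  have hdvd5 : (5 * n : ℕ) ∣ r * q + 1 := by
    refine Nat.Coprime.mul_dvd_of_dvd_of_dvd hn5.symm ?_ ((Dvd.intro_left 4 rfl).trans hdvd)
    apply Nat.dvd_of_mod_eq_zero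
    rw [Nat.add_mod, Nat.mul_mod, hr5, hq5]
  refine S3_of_int (TP_pi5.mul hD) (x := ((r * q : ℕ) : ℤ)) (by have := hr.pos; have := hq.pos; positivity) ?_ (t := 1)
    (s := s₁ * v * q + s₂ * u * r) ?_ ?_
  · rw [hnm]; exact_mod_cast coprime_of_dvd_succ hdvd5
  · rw [hnm, one_pow, add_comm]; exact_mod_cast hdvd5
  · push_cast
    refine IsCoprime.mul_dvd ⟨u, v, huv'⟩ ?_ ?_
    · rw [show s₁ * v * q + s₂ * u * r = s₁ + r * (u * (s₂ - s₁)) by linear_combination s₁ * huv']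
      exact dvd_sq_add hs₁
    · rw [show s₁ * v * q + s₂ * u * r = s₂ + q * (v * (s₁ - s₂)) by linear_combination s₂ * huv']
      exact dvd_sq_add hs₂

/-- Induction on the norm, removing factors `pi5²`. -/
theorem three_squares_aux (k : ℕ) : ∀ D : ZP, TP D → nm D ≤ k → S3 D := by
  induction k with
  | zero => intro D hD h; have := hD.nm_pos; push_cast at h; omega
  | succ k ih =>
    intro D hD hk
    by_cases h5 : (5 : ℤ) ∣ nm D
    · obtain ⟨E, rfl⟩ := pi5_dvd h5
      have hE : TP E := TP_pi5.of_mul hD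
      by_cases h5' : (5 : ℤ) ∣ nm E
      · obtain ⟨F, rfl⟩ := pi5_dvd h5'
        have hF : TP F := TP_pi5.of_mul hE
        rw [← mul_assoc, ← sq]
        refine (ih F hF ?_).sq_mul pi5
        have := hF.nm_pos
        rw [nm_mul, nm_mul, nm_pi5] at hk
        push_cast at hk; omega
      · by_cases hsq : IsSquare (nm E)
        · obtain ⟨m, hm⟩ := hsq
          exact S3_pi5_mul_of_sq hE h5' (m₀ := m) (by rw [hm]; ring)
        · exact S3_pi5_mul_of_not_sq hE h5' hsq
    · exact S3_of_not_five_dvd hD h5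

/-- Every totally nonnegative element of `ℤ[φ]` is a sum of three squares, a theorem of Maass. -/
theorem three_squares {D : ZP} (hD : TNN D) : S3 D := by
  rcases hD.eq_zero_or_TP with rfl | h
  · exact ⟨0, 0, 0, by simp⟩
  · exact three_squares_aux (nm D).toNat D h (Int.self_le_toNat _)

end Pyth5

/-! ### The ring of icosians -/

namespace Pyth5
open QuadraticAlgebra Quaternion
local notation "φ" => Real.goldenRatio

/-- The element `φ` of `ℤ[φ]`. -/
def gz : ZP := ⟨0, 1⟩

theorem e1_gz : e1 gz = φ := by simp [e1_apply, gz]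

theorem gz_sq : gz ^ 2 = gz + 1 := by
  ext <;> simp [gz, pow_two]

theorem e1_injective : Function.Injective e1 :=
  (injective_iff_map_eq_zero e1).2 fun _ h => e1_eq_zero.1 h

/-- The real quaternion `p + q i + s (1 + i + j + k) / 2 + t (i + φ j + φ² k) / 2`, under the embedding `e1`. -/
noncomputable def ic (p q s t : ZP) : ℍ[ℝ] :=
  ⟨e1 p + e1 s / 2, e1 q + (e1 s + e1 t) / 2, (e1 s + φ * e1 t) / 2, (e1 s + (φ + 1) * e1 t) / 2⟩

theorem ic_re (p q s t : ZP) : (ic p q s t).re = e1 p + e1 s / 2 := rfl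
theorem ic_imI (p q s t : ZP) : (ic p q s t).imI = e1 q + (e1 s + e1 t) / 2 := rfl
theorem ic_imJ (p q s t : ZP) : (ic p q s t).imJ = (e1 s + φ * e1 t) / 2 := rfl
theorem ic_imK (p q s t : ZP) : (ic p q s t).imK = (e1 s + (φ + 1) * e1 t) / 2 := rfl

theorem ic_mul (p q s t p' q' s' t' : ZP) : ic p q s t * ic p' q' s' t' =
    ic (p * p' - q * q' + gz * (q * s') + (1 + 2 * gz) * (q * t') - (1 + gz) * (s * q') - s * s'
        - (2 + 2 * gz) * (t * q') - (1 + gz) * (t * s') - (1 + gz) * (t * t'))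
      (p * q' + q * p' + gz * (q * s') + (1 + gz) * (q * t') + (1 - gz) * (s * q') + s * t'
        - (1 + gz) * (t * q') - t * s')
      (p * s' + s * p' - (1 + 2 * gz) * (q * s') - (3 + 4 * gz) * (q * t') + (1 + 2 * gz) * (s * q')
        + s * s' - (1 + gz) * (s * t') + (3 + 4 * gz) * (t * q') + (1 + gz) * (t * s'))
      (p * t' + t * p' + 2 * (q * s') + (1 + 2 * gz) * (q * t') - 2 * (s * q') + gz * (s * t')
        - (1 + 2 * gz) * (t * q') + (1 - gz) * (t * s')) := by
  have h := Real.goldenRatio_sq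
  ext <;> simp only [ic_re, ic_imI, ic_imJ, ic_imK, Quaternion.re_mul, Quaternion.imI_mul, Quaternion.imJ_mul,
    Quaternion.imK_mul, map_add, map_sub, map_mul, map_one, map_ofNat, e1_gz] <;>
    generalize Real.goldenRatio = g at h ⊢ <;> grind

theorem ic_injective {p q s t p' q' s' t' : ZP} (h : ic p q s t = ic p' q' s' t') :
    p = p' ∧ q = q' ∧ s = s' ∧ t = t' := by
  have h0 := congrArg QuaternionAlgebra.re h
  have h1 := congrArg QuaternionAlgebra.imI h
  have h2 := congrArg QuaternionAlgebra.imJ h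
  have h3 := congrArg QuaternionAlgebra.imK h
  simp only [ic_re, ic_imI, ic_imJ, ic_imK] at h0 h1 h2 h3
  have ht : e1 t = e1 t' := by linear_combination 2 * h3 - 2 * h2
  rw [ht] at h1 h2
  have hs : e1 s = e1 s' := by linear_combination 2 * h2
  rw [hs] at h0 h1
  refine ⟨e1_injective ?_, e1_injective ?_, e1_injective hs, e1_injective ht⟩
  · linear_combination h0
  · linear_combination h1

theorem ic_add (p q s t p' q' s' t' : ZP) : ic p q s t + ic p' q' s' t' =
    ic (p + p') (q + q') (s + s') (t + t') := by
  ext <;> simp only [ic_re, ic_imI, ic_imJ, ic_imK, Quaternion.re_add, Quaternion.imI_add, Quaternion.imJ_add,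
    Quaternion.imK_add, map_add] <;> ring

theorem ic_neg (p q s t : ZP) : -ic p q s t = ic (-p) (-q) (-s) (-t) := by
  ext <;> simp only [ic_re, ic_imI, ic_imJ, ic_imK, Quaternion.re_neg, Quaternion.imI_neg, Quaternion.imJ_neg,
    Quaternion.imK_neg, map_neg] <;> ring

theorem ic_coe (p : ZP) : ic p 0 0 0 = ((e1 p : ℝ) : ℍ[ℝ]) := by
  ext <;> simp [ic]

theorem ic_star (p q s t : ZP) : star (ic p q s t) = ic (p + s) (-q) (-s) (-t) := by
  ext <;> simp only [ic_re, ic_imI, ic_imJ, ic_imK, Quaternion.re_star, Quaternion.imI_star, Quaternion.imJ_star,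
    Quaternion.imK_star, map_neg, map_add] <;> ring

/-- The ring of icosians, a maximal order in the Hamilton quaternions over `ℚ(√5)`, realized inside the real
quaternions. -/
noncomputable def ico : Subring ℍ[ℝ] where
  carrier := {z | ∃ p q s t, z = ic p q s t}
  mul_mem' := by
    rintro _ _ ⟨p, q, s, t, rfl⟩ ⟨p', q', s', t', rfl⟩
    exact ⟨_, _, _, _, ic_mul ..⟩
  one_mem' := ⟨1, 0, 0, 0, by simp [ic_coe]⟩
  add_mem' := by
    rintro _ _ ⟨p, q, s, t, rfl⟩ ⟨p', q', s', t', rfl⟩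
    exact ⟨_, _, _, _, ic_add ..⟩
  zero_mem' := ⟨0, 0, 0, 0, by simp [ic_coe]⟩
  neg_mem' := by
    rintro _ ⟨p, q, s, t, rfl⟩
    exact ⟨_, _, _, _, ic_neg ..⟩

/-- The icosian with coordinates `p, q, s, t` in the basis of `ic`. -/
noncomputable def mk (p q s t : ZP) : ico := ⟨ic p q s t, p, q, s, t, rfl⟩

theorem exists_mk (z : ico) : ∃ p q s t, z = mk p q s t := by
  obtain ⟨_, p, q, s, t, rfl⟩ := z
  exact ⟨p, q, s, t, rfl⟩

theorem mk_injective {p q s t p' q' s' t' : ZP} (h : mk p q s t = mk p' q' s' t') :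
    p = p' ∧ q = q' ∧ s = s' ∧ t = t' := ic_injective (congrArg Subtype.val h)

theorem mk_add (p q s t p' q' s' t' : ZP) : mk p q s t + mk p' q' s' t' =
    mk (p + p') (q + q') (s + s') (t + t') := Subtype.ext (ic_add ..)
theorem mk_neg (p q s t : ZP) : -mk p q s t = mk (-p) (-q) (-s) (-t) := Subtype.ext (ic_neg ..)
theorem mk_sub (p q s t p' q' s' t' : ZP) : mk p q s t - mk p' q' s' t' =
    mk (p - p') (q - q') (s - s') (t - t') := by
  rw [sub_eq_add_neg, mk_neg, mk_add]; simp only [← sub_eq_add_neg]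

/-- Quaternion conjugation on the icosians. -/
noncomputable def conj (z : ico) : ico :=
  ⟨star (z : ℍ[ℝ]), by
    obtain ⟨_, p, q, s, t, rfl⟩ := z
    exact ⟨_, _, _, _, ic_star ..⟩⟩

theorem conj_mk (p q s t : ZP) : conj (mk p q s t) = mk (p + s) (-q) (-s) (-t) :=
  Subtype.ext (ic_star ..)
theorem conj_mul (x y : ico) : conj (x * y) = conj y * conj x := Subtype.ext (star_mul _ _)
theorem conj_conj (x : ico) : conj (conj x) = x := Subtype.ext (star_star _)
theorem conj_add (x y : ico) : conj (x + y) = conj x + conj y := Subtype.ext (star_add _ _)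

/-- The inclusion of the centre `ℤ[φ]` into the icosians. -/
noncomputable def cZ : ZP →+* ico where
  toFun x := mk x 0 0 0
  map_zero' := Subtype.ext (by simp [mk, ic_coe])
  map_one' := Subtype.ext (by simp [mk, ic_coe])
  map_add' x y := by simp [mk_add]
  map_mul' x y := Subtype.ext (by simp [mk, ic_coe])

theorem cZ_apply (x : ZP) : cZ x = mk x 0 0 0 := rfl
theorem coe_cZ (x : ZP) : ((cZ x : ico) : ℍ[ℝ]) = ((e1 x : ℝ) : ℍ[ℝ]) := ic_coe x

theorem cZ_comm (x : ZP) (z : ico) : cZ x * z = z * cZ x :=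
  Subtype.ext (by simpa [coe_cZ] using Quaternion.coe_commutes (e1 x) (z : ℍ[ℝ]))

theorem cZ_mul_mk (x p q s t : ZP) : cZ x * mk p q s t = mk (x * p) (x * q) (x * s) (x * t) := by
  refine Subtype.ext ?_
  change ic x 0 0 0 * ic p q s t = _
  rw [ic_mul]; simp [mk]

theorem cZ_injective : Function.Injective cZ := fun _ _ h => (mk_injective h).1

theorem conj_cZ (x : ZP) : conj (cZ x) = cZ x := by simp [cZ_apply, conj_mk]

theorem cZ_dvd {x n : ZP} {w : ico} (h : cZ n = cZ x * w) : x ∣ n := by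
  obtain ⟨p, q, s, t, rfl⟩ := exists_mk w
  rw [cZ_mul_mk] at h
  exact ⟨p, (mk_injective h).1⟩

/-- The reduced norm in the coordinates of `ic`. -/
def nmI (p q s t : ZP) : ZP :=
  p ^ 2 + q ^ 2 + p * s + q * s + q * t + s ^ 2 + (gz + 1) * (s * t) + (gz + 1) * t ^ 2

theorem four_nmI (p q s t : ZP) : 4 * nmI p q s t =
    (2 * p + s) ^ 2 + (2 * q + s + t) ^ 2 + (s + gz * t) ^ 2 + (s + (gz + 1) * t) ^ 2 := by
  simp only [nmI]; linear_combination (-2 * t ^ 2) * gz_sq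

theorem TNN_nmI (p q s t : ZP) : TNN (nmI p q s t) := by
  have h := (((TNN_sq (2 * p + s)).add (TNN_sq (2 * q + s + t))).add (TNN_sq (s + gz * t))).add
    (TNN_sq (s + (gz + 1) * t))
  rw [← four_nmI] at h
  simp only [TNN, map_mul, map_ofNat] at h ⊢
  constructor <;> linarith [h.1, h.2]

theorem normSq_ic (p q s t : ZP) : normSq (ic p q s t) = e1 (nmI p q s t) := by
  have h4 := congrArg e1 (four_nmI p q s t)
  simp only [map_mul, map_ofNat, map_add, map_pow, e1_gz, map_one] at h4
  rw [Quaternion.normSq_def']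
  simp only [ic_re, ic_imI, ic_imJ, ic_imK]
  linarith

theorem exists_norm (z : ico) : ∃ n : ZP, normSq (z : ℍ[ℝ]) = e1 n := by
  obtain ⟨_, p, q, s, t, rfl⟩ := z
  exact ⟨_, normSq_ic ..⟩

/-- The reduced norm of an icosian, as the element of `ℤ[φ]` that `e1` maps to the quaternion norm. -/
noncomputable def N (z : ico) : ZP := (exists_norm z).choose
theorem e1_N (z : ico) : e1 (N z) = normSq (z : ℍ[ℝ]) := (exists_norm z).choose_spec.symm

theorem N_mk (p q s t : ZP) : N (mk p q s t) = nmI p q s t :=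
  e1_injective (by rw [e1_N]; exact normSq_ic ..)

theorem N_mul (x y : ico) : N (x * y) = N x * N y :=
  e1_injective (by simp [e1_N, map_mul])
theorem N_one : N 1 = 1 := e1_injective (by simp [e1_N])
theorem N_conj (x : ico) : N (conj x) = N x := e1_injective (by simp [e1_N, conj])
theorem N_cZ (x : ZP) : N (cZ x) = x ^ 2 := by rw [cZ_apply, N_mk]; simp [nmI]
theorem TNN_N (x : ico) : TNN (N x) := by
  obtain ⟨p, q, s, t, rfl⟩ := exists_mk x
  rw [N_mk]; exact TNN_nmI ..
theorem N_eq_zero {x : ico} : N x = 0 ↔ x = 0 := by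
  rw [← e1_eq_zero, e1_N, Quaternion.normSq_eq_zero]; simp
theorem mul_conj (x : ico) : x * conj x = cZ (N x) :=
  Subtype.ext (by rw [coe_cZ, e1_N]; exact Quaternion.self_mul_star _)
theorem conj_mul_self (x : ico) : conj x * x = cZ (N x) :=
  Subtype.ext (by rw [coe_cZ, e1_N]; exact Quaternion.star_mul_self _)

end Pyth5

/-! ### Covering by the icosian lattice -/

namespace Pyth5
open QuadraticAlgebra
open scoped Quaternion

/-- The sign `(-1) ^ b` as a real number. -/
def sgn (b : Bool) : ℝ := bif b then -1 else 1

/-- The two integers next to `x`, one even (`y false`) and one odd (`y true`). With the even one lying at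
distance `|1 - s| / 2` and the odd one at distance `|1 + s| / 2`, both squared distances have a common shape. -/
theorem exists_near (x : ℝ) : ∃ (s : ℝ) (y : Bool → ℤ), s ^ 2 ≤ 1 ∧
    (∀ b, y b % 2 = bif b then 1 else 0) ∧
    ∀ b, (x - y b) ^ 2 = (1 - 2 * (sgn b * s) + s ^ 2) / 4 := by
  have h0 := Int.fract_nonneg x
  have h1 := Int.fract_lt_one x
  have hx : x = ⌊x⌋ + Int.fract x := (Int.floor_add_fract x).symm
  generalize Int.fract x = f at *
  generalize ⌊x⌋ = n at *
  subst hx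
  rcases Int.emod_two_eq_zero_or_one n with hn | hn
  · refine ⟨1 - 2 * f, fun b => bif b then n + 1 else n, by nlinarith, ?_, ?_⟩
    · rintro (_ | _) <;> simp <;> omega
    · rintro (_ | _) <;> simp [sgn] <;> ring
  · refine ⟨2 * f - 1, fun b => bif b then n else n + 1, by nlinarith, ?_, ?_⟩
    · rintro (_ | _) <;> simp <;> omega
    · rintro (_ | _) <;> simp [sgn] <;> ring

theorem sq_add_sq_lt {P Q K : ℝ} (h1 : 2 * (P + Q) < K) (h2 : 2 * (P - Q) < K)
    (h3 : 2 * (-P + Q) < K) (h4 : 2 * (-P - Q) < K) : 4 * (P ^ 2 + Q ^ 2) < K ^ 2 := by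
  have a := sq_lt_sq' (a := 2 * (P + Q)) (b := K) (by linarith) h1
  have b := sq_lt_sq' (a := 2 * (P - Q)) (b := K) (by linarith) h2
  nlinarith

/-- Covering property of the extended Hamming code, whose words are parametrized by the four bits
`σ, τ, t₀, t₁`. If all words failed, summing squares over the four choices of `(t₀, t₁)` would give
`16 S < 4 (S - 4)²` for the total `S ≤ 8` of all squares, which is impossible for `S > 4`. -/
theorem exists_codeword (x w : Fin 4 → ℝ) (hx : ∀ i, x i ^ 2 ≤ 1) (hw : ∀ i, w i ^ 2 ≤ 1) :
    ∃ σ τ t₀ t₁ : Bool,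
      x 0 ^ 2 + x 1 ^ 2 + x 2 ^ 2 + x 3 ^ 2 + (w 0 ^ 2 + w 1 ^ 2 + w 2 ^ 2 + w 3 ^ 2) - 4 ≤
      2 * (sgn σ * x 0 + sgn (xor σ (xor t₀ t₁)) * x 1 + sgn (xor σ t₀) * x 2 + sgn (xor σ t₁) * x 3 +
       (sgn τ * w 0 + sgn (xor τ t₁) * w 1 + sgn (xor τ (xor t₀ t₁)) * w 2 + sgn (xor τ t₀) * w 3)) := by
  by_contra! h
  have key : ∀ t₀ t₁, 4 * ((x 0 + sgn (xor t₀ t₁) * x 1 + sgn t₀ * x 2 + sgn t₁ * x 3) ^ 2 +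
      (w 0 + sgn t₁ * w 1 + sgn (xor t₀ t₁) * w 2 + sgn t₀ * w 3) ^ 2) <
      (x 0 ^ 2 + x 1 ^ 2 + x 2 ^ 2 + x 3 ^ 2 + (w 0 ^ 2 + w 1 ^ 2 + w 2 ^ 2 + w 3 ^ 2) - 4) ^ 2 := by
    intro t₀ t₁
    have hs : ∀ b, sgn (!b) = - sgn b := by rintro (_ | _) <;> simp [sgn]
    have a := h false false t₀ t₁
    have b := h false true t₀ t₁
    have c := h true false t₀ t₁
    have d := h true true t₀ t₁
    simp only [Bool.false_xor, Bool.true_xor, hs, show sgn false = 1 from rfl,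
      show sgn true = -1 from rfl] at a b c d
    apply sq_add_sq_lt <;> linarith
  have k1 := key false false
  have k2 := key false true
  have k3 := key true false
  have k4 := key true true
  have a := h false false false false
  have b := h true true false false
  simp only [sgn, Bool.xor_false, Bool.xor_true, Bool.not_false, Bool.not_true, cond_true,
    cond_false] at k1 k2 k3 k4 a b
  have q0 := hx 0; have q1 := hx 1; have q2 := hx 2; have q3 := hx 3
  have r0 := hw 0; have r1 := hw 1; have r2 := hw 2; have r3 := hw 3
  clear h key hx hw
  generalize x 0 = x0, x 1 = x1, x 2 = x2, x 3 = x3, w 0 = w0, w 1 = w1, w 2 = w2, w 3 = w3 at *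
  obtain ⟨S, hS⟩ : ∃ S, S = x0 ^ 2 + x1 ^ 2 + x2 ^ 2 + x3 ^ 2 + (w0 ^ 2 + w1 ^ 2 + w2 ^ 2 + w3 ^ 2) :=
    ⟨_, rfl⟩
  rw [← hS] at a b k1 k2 k3 k4
  have hK : 0 < S - 4 := by linarith
  have h8 : S ≤ 8 := by linarith
  have h9 := mul_nonneg hK.le (sub_nonneg.2 h8)
  linarith

/-- The parity checks satisfied by words of the code, in the form used to recognize icosians. -/
theorem even_of_code {u0 u1 u2 u3 v0 v1 v2 v3 : ℤ} {σ τ t₀ t₁ : Bool}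
    (e0 : u0 % 2 = bif σ then 1 else 0) (e1 : u1 % 2 = bif xor σ (xor t₀ t₁) then 1 else 0)
    (e2 : u2 % 2 = bif xor σ t₀ then 1 else 0) (e3 : u3 % 2 = bif xor σ t₁ then 1 else 0)
    (f0 : v0 % 2 = bif τ then 1 else 0) (f1 : v1 % 2 = bif xor τ t₁ then 1 else 0)
    (f2 : v2 % 2 = bif xor τ (xor t₀ t₁) then 1 else 0) (f3 : v3 % 2 = bif xor τ t₀ then 1 else 0) :
    (u0 + u2 + v0 + v3) % 2 = 0 ∧ (v0 + v2 + u3 + u2) % 2 = 0 ∧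
    (u1 + u3 + v1 + v2) % 2 = 0 ∧ (u2 + u3 + v1 + v3) % 2 = 0 := by
  cases σ <;> cases τ <;> cases t₀ <;> cases t₁ <;>
    simp only [Bool.xor_false, Bool.xor_true, Bool.not_false, Bool.not_true, cond_true,
      cond_false] at e0 e1 e2 e3 f0 f1 f2 f3 <;> omega

/-- The linear form `a + b φ ↦ a + b`. On squares it takes the positive definite value `(a + b)² + b²`, so
`hgt ∘ N` is a Euclidean norm on the icosians. -/
def hgt (x : ZP) : ℤ := x.re + x.im

theorem hgt_sq (x : ZP) : hgt (x ^ 2) = hgt x ^ 2 + x.im ^ 2 := by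
  simp [hgt, pow_two]; ring

theorem hgt_add (x y : ZP) : hgt (x + y) = hgt x + hgt y := by
  simp [hgt]; ring

theorem four_nm_le (x : ZP) : 4 * nm x ≤ 5 * hgt x ^ 2 := by
  simp only [nm, hgt]; nlinarith [sq_nonneg (x.re + 3 * x.im)]

/-- In doubled coordinates, every point of the quaternions over `ℚ(√5)`, here `c / m`, is within squared
distance `3` of an icosian with respect to `hgt`. -/
theorem exists_icosian_near (c : Fin 4 → ZP) {m : ℤ} (hm : 0 < m) : ∃ p q s t : ZP,
    hgt ((c 0 - m * (2 * p + s)) ^ 2 + (c 1 - m * (2 * q + s + t)) ^ 2 + (c 2 - m * (s + gz * t)) ^ 2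
      + (c 3 - m * (s + (gz + 1) * t)) ^ 2) ≤ 3 * m ^ 2 := by
  choose x y hx hy hxy using fun i => exists_near (hgt (c i) / m : ℝ)
  choose w z hw hz hwz using fun i => exists_near ((c i).im / m : ℝ)
  obtain ⟨σ, τ, t₀, t₁, hC⟩ := exists_codeword x w hx hw
  set u0 := y 0 σ with hu0
  set u1 := y 1 (xor σ (xor t₀ t₁)) with hu1
  set u2 := y 2 (xor σ t₀) with hu2
  set u3 := y 3 (xor σ t₁) with hu3
  set v0 := z 0 τ with hv0
  set v1 := z 1 (xor τ t₁) with hv1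
  set v2 := z 2 (xor τ (xor t₀ t₁)) with hv2
  set v3 := z 3 (xor τ t₀) with hv3
  have hm' : (0 : ℝ) < m := by exact_mod_cast hm
  have cost : (hgt (c 0) - m * u0) ^ 2 + (hgt (c 1) - m * u1) ^ 2 + (hgt (c 2) - m * u2) ^ 2 +
      (hgt (c 3) - m * u3) ^ 2 + (((c 0).im - m * v0) ^ 2 + ((c 1).im - m * v1) ^ 2 +
      ((c 2).im - m * v2) ^ 2 + ((c 3).im - m * v3) ^ 2) ≤ 3 * m ^ 2 := by
    have hsc : ∀ a b : ℤ, ((a : ℝ) - m * b) ^ 2 = m ^ 2 * (a / m - b) ^ 2 := by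
      intro a b; field_simp
    rw [← Int.cast_le (R := ℝ)]
    push_cast
    simp only [hsc]
    simp only [hu0, hu1, hu2, hu3, hv0, hv1, hv2, hv3, hxy, hwz]
    have := mul_le_mul_of_nonneg_left hC (sq_nonneg (m : ℝ))
    nlinarith
  -- the doubled coordinates of the chosen lattice point
  have e0 := hy 0 σ; have e1 := hy 1 (xor σ (xor t₀ t₁))
  have e2 := hy 2 (xor σ t₀); have e3 := hy 3 (xor σ t₁)
  have f0 := hz 0 τ; have f1 := hz 1 (xor τ t₁)
  have f2 := hz 2 (xor τ (xor t₀ t₁)); have f3 := hz 3 (xor τ t₀)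
  rw [← hu0] at e0; rw [← hu1] at e1; rw [← hu2] at e2; rw [← hu3] at e3
  rw [← hv0] at f0; rw [← hv1] at f1; rw [← hv2] at f2; rw [← hv3] at f3
  obtain ⟨o1, o2, o3, o4⟩ := even_of_code e0 e1 e2 e3 f0 f1 f2 f3
  clear_value u0 u1 u2 u3 v0 v1 v2 v3
  let a0 : ZP := ⟨u0 - v0, v0⟩
  let a1 : ZP := ⟨u1 - v1, v1⟩
  let a2 : ZP := ⟨u2 - v2, v2⟩
  let a3 : ZP := ⟨u3 - v3, v3⟩
  let t : ZP := a3 - a2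
  let s : ZP := a2 - gz * t
  have d0 : (2 : ZP) ∣ a0 - s := by
    rw [two_dvd_iff']
    simp only [s, t, a0, a2, a3, gz, re_sub, im_sub, re_mul, im_mul]
    omega
  have d1 : (2 : ZP) ∣ a1 - s - t := by
    rw [two_dvd_iff']
    simp only [s, t, a1, a2, a3, gz, re_sub, im_sub, re_mul, im_mul]
    omega
  obtain ⟨p, hp⟩ := d0
  obtain ⟨q, hq⟩ := d1
  refine ⟨p, q, s, t, ?_⟩
  have E0 : 2 * p + s = a0 := by rw [← hp]; ring
  have E1 : 2 * q + s + t = a1 := by rw [← hq]; ring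
  have E2 : s + gz * t = a2 := by simp only [s]; ring
  have E3 : s + (gz + 1) * t = a3 := by simp only [s, t]; ring
  rw [E0, E1, E2, E3]
  simp only [hgt_add, hgt_sq]
  simp only [a0, a1, a2, a3, hgt, re_sub, im_sub, re_mul, im_mul, re_intCast, im_intCast] at cost ⊢
  simp only [Int.cast_id, zero_mul, mul_zero, add_zero] at cost ⊢
  convert cost using 1
  ring

end Pyth5

/-! ### Factorization of icosians -/

namespace Pyth5
open QuadraticAlgebra
open scoped Quaternion

theorem nm_N_nonneg (z : ico) : 0 ≤ nm (N z) := by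
  rcases (TNN_N z).eq_zero_or_TP with h | h
  · rw [h, nm_zero]
  · exact h.nm_pos.le

theorem TP_N {z : ico} (hz : z ≠ 0) : TP (N z) :=
  (TNN_N z).eq_zero_or_TP.resolve_left fun h => hz (N_eq_zero.1 h)

theorem nm_cj (x : ZP) : nm (cj x) = nm x := by simp only [nm, cj]; ring

/-- Division with remainder: the remainder has norm at most `45/64` of that of the divisor. -/
theorem exists_quot (α : ico) {ρ : ico} (hρ : ρ ≠ 0) :
    ∃ γ : ico, nm (N (α - γ * ρ)) < nm (N ρ) := by
  set n := N ρ with hn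
  have hm : 0 < nm n := (TP_N hρ).nm_pos
  set m := nm n with hmdef
  obtain ⟨p, q, s, t, hz⟩ := exists_mk (α * conj ρ * cZ (cj n))
  obtain ⟨p', q', s', t', hh⟩ := exists_icosian_near
    ![2 * p + s, 2 * q + s + t, s + gz * t, s + (gz + 1) * t] hm
  refine ⟨mk p' q' s' t', ?_⟩
  set γ := mk p' q' s' t' with hγ
  have e : (α - γ * ρ) * conj ρ * cZ (cj n) = α * conj ρ * cZ (cj n) - cZ (m : ZP) * γ := by
    rw [sub_mul, sub_mul, mul_assoc γ, mul_conj, mul_assoc γ, ← map_mul, ← hn, mul_cj, cZ_comm]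
  have hN : nm (N (α * conj ρ * cZ (cj n) - cZ (m : ZP) * γ)) = nm (N (α - γ * ρ)) * m ^ 3 := by
    rw [← e, N_mul, N_mul, N_conj, N_cZ, nm_mul, nm_mul, nm_pow, nm_cj, ← hn, ← hmdef]; ring
  rw [hz, hγ, cZ_mul_mk, mk_sub, N_mk, ← hγ] at hN
  have h4 := four_nmI (p - m * p') (q - m * q') (s - m * s') (t - m * t')
  have h5 : 4 * nmI (p - m * p') (q - m * q') (s - m * s') (t - m * t') =
      (2 * p + s - m * (2 * p' + s')) ^ 2 + (2 * q + s + t - m * (2 * q' + s' + t')) ^ 2 +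
      (s + gz * t - m * (s' + gz * t')) ^ 2 + (s + (gz + 1) * t - m * (s' + (gz + 1) * t')) ^ 2 := by
    rw [h4]; ring
  simp only [Matrix.cons_val] at hh
  rw [← h5] at hh
  have h0 : 0 ≤ hgt (4 * nmI (p - m * p') (q - m * q') (s - m * s') (t - m * t')) := by
    rw [h5]; simp only [hgt_add, hgt_sq]; positivity
  have h6 := four_nm_le (4 * nmI (p - m * p') (q - m * q') (s - m * s') (t - m * t'))
  rw [nm_mul, hN, show nm (4 : ZP) = 16 by simp [nm]] at h6
  have h7 := pow_le_pow_left₀ h0 hh 2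
  have h8 : m ^ 3 * (64 * nm (N (α - γ * ρ))) ≤ m ^ 3 * (45 * m) := by nlinarith
  have h9 := le_of_mul_le_mul_left h8 (by positivity)
  linarith

/-- The left ideal generated by `a` and `b` is principal. -/
theorem exists_gen {a : ico} (ha : a ≠ 0) (b : ico) :
    ∃ ρ x y u v : ico, ρ = x * a + y * b ∧ a = u * ρ ∧ b = v * ρ := by
  classical
  have hex : ∃ k : ℕ, ∃ x y : ico, x * a + y * b ≠ 0 ∧ (nm (N (x * a + y * b))).toNat = k :=
    ⟨_, 1, 0, by simpa using ha, rfl⟩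
  obtain ⟨x, y, h0, hk⟩ := Nat.find_spec hex
  have hmin : ∀ x' y' : ico, ∃ u, x' * a + y' * b = u * (x * a + y * b) := by
    intro x' y'
    obtain ⟨γ, hγ⟩ := exists_quot (x' * a + y' * b) h0
    refine ⟨γ, ?_⟩
    by_contra hne
    have e : x' * a + y' * b - γ * (x * a + y * b) = (x' - γ * x) * a + (y' - γ * y) * b := by
      noncomm_ring
    have h1 : (x' - γ * x) * a + (y' - γ * y) * b ≠ 0 := by rw [← e]; exact sub_ne_zero.2 hne
    rw [e] at hγ
    have := Nat.find_min' hex ⟨_, _, h1, rfl⟩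
    have := nm_N_nonneg ((x' - γ * x) * a + (y' - γ * y) * b)
    omega
  obtain ⟨u, hu⟩ := hmin 1 0
  obtain ⟨v, hv⟩ := hmin 0 1
  exact ⟨_, x, y, u, v, rfl, by simpa using hu, by simpa using hv⟩

/-- The generator `ρ` of the left ideal `(π, β)` has norm dividing `π²` and divisible by `π`; the two
alternatives are `N ρ ~ π` and `N ρ ~ π²`. -/
theorem prime_step {π : ZP} (hπ : Prime π) {β : ico} (h : π ∣ N β) :
    (∃ β' u ρ, β = β' * ρ ∧ cZ π = u * ρ ∧ Associated (N ρ) π) ∨ ∃ β', β = β' * cZ π := by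
  have hπ0 : cZ π ≠ 0 := fun h0 => hπ.ne_zero (cZ_injective (by rw [h0, map_zero]))
  obtain ⟨ρ, x, y, u, v, h1, h2, h3⟩ := exists_gen hπ0 β
  obtain ⟨k, hk⟩ := h
  have hd : π ∣ N ρ := by
    refine cZ_dvd (w := x * conj ρ + y * β * conj x + y * cZ k * conj y) ?_
    have e : conj ρ = cZ π * conj x + conj β * conj y := by
      rw [h1, conj_add, conj_mul, conj_mul, conj_cZ]
    calc cZ (N ρ) = ρ * conj ρ := (mul_conj ρ).symm
      _ = x * cZ π * conj ρ + y * β * (cZ π * conj x + conj β * conj y) := by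
        rw [← e]; nth_rw 1 [h1]; rw [add_mul]
      _ = cZ π * (x * conj ρ) + cZ π * (y * β * conj x) + y * (β * conj β) * conj y := by
        rw [← cZ_comm, mul_add, ← mul_assoc (y * β) (cZ π), ← cZ_comm]; noncomm_ring
      _ = _ := by
        rw [mul_conj, hk, map_mul, ← mul_assoc y, ← cZ_comm π y]; noncomm_ring
  have hNN : N u * N ρ = π ^ 2 := by rw [← N_mul, ← h2, N_cZ]
  obtain ⟨l, hl⟩ := hd
  have hul : N u * l = π := by
    apply mul_left_cancel₀ hπ.ne_zero
    rw [← pow_two, ← hNN, hl]; ring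
  rcases (hπ.irreducible.isUnit_or_isUnit hul.symm) with hu | hu
  · right
    obtain ⟨w, hw⟩ := hu.exists_left_inv
    refine ⟨v * cZ w * conj u, ?_⟩
    have : cZ w * conj u * cZ π = ρ := by
      rw [h2, mul_assoc, ← mul_assoc (conj u), conj_mul_self, ← mul_assoc, ← map_mul, hw, map_one,
        one_mul]
    rw [mul_assoc, mul_assoc, ← mul_assoc (cZ w), this, ← h3]
  · left
    refine ⟨v, u, ρ, h3, h2, ?_⟩
    rw [hl]
    exact associated_mul_unit_left π l hu

/-- The icosian `a + b i + c j + d k` with coordinates in `ℤ[φ]` (a Lipschitz icosian). -/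
noncomputable def lip (a b c d : ZP) : ico :=
  mk (a - c + gz * (d - c)) (b - c + gz * (d - c) - (d - c)) (2 * (c - gz * (d - c))) (2 * (d - c))

theorem lip_re (a b c d : ZP) : (lip a b c d : ℍ[ℝ]).re = e1 a := by
  simp only [lip, mk, ic_re, map_add, map_sub, map_mul, e1_gz, map_ofNat]; ring
theorem lip_imI (a b c d : ZP) : (lip a b c d : ℍ[ℝ]).imI = e1 b := by
  simp only [lip, mk, ic_imI, map_add, map_sub, map_mul, e1_gz, map_ofNat]; ring
theorem lip_imJ (a b c d : ZP) : (lip a b c d : ℍ[ℝ]).imJ = e1 c := by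
  simp only [lip, mk, ic_imJ, map_sub, map_mul, e1_gz, map_ofNat]; ring
theorem lip_imK (a b c d : ZP) : (lip a b c d : ℍ[ℝ]).imK = e1 d := by
  simp only [lip, mk, ic_imK, map_sub, map_mul, e1_gz, map_ofNat]; ring

theorem N_lip (a b c d : ZP) : N (lip a b c d) = a ^ 2 + b ^ 2 + c ^ 2 + d ^ 2 :=
  e1_injective (by
    rw [e1_N, Quaternion.normSq_def', lip_re, lip_imI, lip_imJ, lip_imK]; simp)

theorem exists_rat_prime {π : ZP} (hπ : Prime π) : ∃ p : ℕ, p.Prime ∧ π ∣ (p : ZP) := by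
  have key : ∀ n : ℕ, n ≠ 0 → π ∣ (n : ZP) → ∃ p : ℕ, p.Prime ∧ π ∣ (p : ZP) := by
    intro n
    induction n using Nat.recOnMul with
    | zero => intro h; exact absurd rfl h
    | one => intro _ h; exact absurd (isUnit_of_dvd_one (by simpa using h)) hπ.not_isUnit
    | prime p hp => intro _ h; exact ⟨p, hp, h⟩
    | mul a b iha ihb =>
      intro h0 h
      rw [Nat.cast_mul] at h
      rcases hπ.dvd_or_dvd h with h | h
      · exact iha (fun h' => h0 (by simp [h'])) h
      · exact ihb (fun h' => h0 (by simp [h'])) h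
  refine key (nm π).natAbs (by simpa [nm_eq_zero] using hπ.ne_zero) ?_
  have h : π ∣ ((nm π : ℤ) : ZP) := ⟨cj π, (mul_cj π).symm⟩
  rw [← Int.cast_natCast]
  rcases Int.natAbs_eq (nm π) with e | e
  · rwa [← e]
  · rw [e, Int.cast_neg, dvd_neg] at h; exact h

theorem exists_sq_add_sq {π : ZP} (hπ : Prime π) : ∃ x y : ZP, π ∣ 1 + x ^ 2 + y ^ 2 := by
  obtain ⟨p, hp, hd⟩ := exists_rat_prime hπ
  have := Fact.mk hp
  obtain ⟨a, b, hab⟩ := ZMod.sq_add_sq p (-1)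
  obtain ⟨x, rfl⟩ := ZMod.intCast_surjective a
  obtain ⟨y, rfl⟩ := ZMod.intCast_surjective b
  have h : (p : ℤ) ∣ 1 + x ^ 2 + y ^ 2 := by
    rw [← ZMod.intCast_zmod_eq_zero_iff_dvd]
    push_cast
    linear_combination hab
  refine ⟨x, y, hd.trans ?_⟩
  obtain ⟨k, hk⟩ := h
  exact ⟨k, by exact_mod_cast congrArg (Int.cast : ℤ → ZP) hk⟩

/-- For `π` prime to `2`, if `β` is divisible by `π` itself, then `π` still splits off a right factor of norm `π`,
obtained from an icosian `1 + x i + y j` of norm divisible by `π`. -/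
theorem prime_step' {π : ZP} (hπ : Prime π) (h2 : ¬ π ∣ 2) {β : ico} (h : π ∣ N β) :
    ∃ β' ρ, β = β' * ρ ∧ Associated (N ρ) π := by
  rcases prime_step hπ h with ⟨β', _, ρ, h1, -, h3⟩ | ⟨β', h1⟩
  · exact ⟨β', ρ, h1, h3⟩
  obtain ⟨x, y, hxy⟩ := exists_sq_add_sq hπ
  have hN : π ∣ N (lip 1 x y 0) := by rw [N_lip]; simpa using hxy
  rcases prime_step hπ hN with ⟨_, u, ρ, -, h3, h4⟩ | ⟨γ, hγ⟩
  · exact ⟨β' * u, ρ, by rw [h1, h3, mul_assoc], h4⟩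
  · exfalso
    apply h2
    refine cZ_dvd (w := γ + conj γ) ?_
    have e : lip 1 x y 0 + conj (lip 1 x y 0) = cZ 2 := by
      apply Subtype.ext
      rw [coe_cZ]
      change (lip 1 x y 0 : ℍ[ℝ]) + star (lip 1 x y 0 : ℍ[ℝ]) = _
      rw [Quaternion.self_add_star, lip_re, map_one, Quaternion.coe_one, mul_one, map_ofNat]; rfl
    rw [← e, hγ, conj_mul, conj_cZ, mul_add, cZ_comm π γ]

theorem factor_aux (a : ZP) : a ≠ 0 → ¬ (2 : ZP) ∣ a → ∀ β : ico, a ∣ N β →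
    ∃ β' ρ, β = β' * ρ ∧ Associated (N ρ) a := by
  induction a using UniqueFactorizationMonoid.induction_on_prime with
  | h₁ => intro h; exact absurd rfl h
  | h₂ x hx =>
    intro _ _ β _
    exact ⟨β, 1, by simp, by rw [N_one]; exact (associated_one_iff_isUnit.2 hx).symm⟩
  | h₃ a p ha hp ih =>
    intro _ h2 β hβ
    have hp2 : ¬ p ∣ 2 := fun h => h2 (((hp.associated_of_dvd prime_two h).symm.dvd).mul_right a)
    obtain ⟨β', ρ, rfl, h3⟩ := prime_step' hp hp2 ((dvd_mul_right p a).trans hβ)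
    have h4 : a ∣ N β' := by
      rw [N_mul, mul_comm (N β')] at hβ
      exact (mul_dvd_mul_iff_left hp.ne_zero).1 (hβ.trans (mul_dvd_mul_right h3.dvd _))
    obtain ⟨β₁, ρ₁, rfl, h5⟩ := ih ha (fun h => h2 (h.mul_left p)) β' h4
    refine ⟨β₁, ρ₁ * ρ, by rw [mul_assoc], ?_⟩
    rw [N_mul, mul_comm]
    exact h3.mul_mul h5

/-- If an odd totally positive `a` divides `N β`, then `β` has a right factor of norm exactly `a`. The unit
ambiguity is removed because totally positive units are squares. -/
theorem factor {a : ZP} (ha : TP a) (h2 : ¬ (2 : ZP) ∣ a) {β : ico} (h : a ∣ N β) :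
    ∃ β' ρ, β = β' * ρ ∧ N ρ = a := by
  obtain ⟨β', ρ, rfl, u, hu⟩ := factor_aux a ha.ne_zero h2 β h
  have hρ : TP (N ρ) := (TNN_N ρ).eq_zero_or_TP.resolve_left fun h0 => by
    rw [h0, zero_mul] at hu; exact ha.ne_zero hu.symm
  have hu1 : TP (u : ZP) := hρ.of_mul (hu ▸ ha)
  have hu2 : nm (u : ZP) = 1 := by
    rcases isUnit_iff_nm.1 u.isUnit with h | h
    · exact h
    · have := hu1.nm_pos; omega
  obtain ⟨v, hv⟩ := unit_sq hu1 hu2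
  refine ⟨β' * cZ ((v⁻¹ : ZPˣ) : ZP), cZ (v : ZP) * ρ, ?_, ?_⟩
  · rw [mul_assoc, ← mul_assoc (cZ _), ← map_mul, Units.inv_mul, map_one, one_mul]
  · rw [N_mul, N_cZ, ← hv, mul_comm, hu]

end Pyth5

/-! ### Icosians of odd norm modulo two -/

namespace Pyth5
open QuadraticAlgebra
open scoped Quaternion

/-- The coordinate `s` of a product of icosians, see `ic_mul`. -/
def mulS (p q s t p' q' s' t' : ZP) : ZP :=
  p * s' + s * p' - (1 + 2 * gz) * (q * s') - (3 + 4 * gz) * (q * t') + (1 + 2 * gz) * (s * q')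
    + s * s' - (1 + gz) * (s * t') + (3 + 4 * gz) * (t * q') + (1 + gz) * (t * s')

/-- The coordinate `t` of a product of icosians, see `ic_mul`. -/
def mulT (p q s t p' q' s' t' : ZP) : ZP :=
  p * t' + t * p' + 2 * (q * s') + (1 + 2 * gz) * (q * t') - 2 * (s * q') + gz * (s * t')
    - (1 + 2 * gz) * (t * q') + (1 - gz) * (t * s')

theorem mk_mul (p q s t p' q' s' t' : ZP) : ∃ P Q, mk p q s t * mk p' q' s' t' =
    mk P Q (mulS p q s t p' q' s' t') (mulT p q s t p' q' s' t') :=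
  ⟨_, _, Subtype.ext (ic_mul ..)⟩

/-- Coordinates of fifteen icosian units that suffice to move every icosian of odd norm into the Lipschitz
icosians. -/
def unitTab : List (ZP × ZP × ZP × ZP) :=
  [(⟨1, 0⟩, ⟨0, 0⟩, ⟨0, 0⟩, ⟨0, 0⟩), (⟨0, 0⟩, ⟨0, 0⟩, ⟨1, 0⟩, ⟨0, 0⟩),
   (⟨1, 0⟩, ⟨0, 0⟩, ⟨-1, 0⟩, ⟨0, 0⟩), (⟨0, 0⟩, ⟨0, 0⟩, ⟨1, 0⟩, ⟨-1, 0⟩),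
   (⟨0, 0⟩, ⟨0, 0⟩, ⟨0, 1⟩, ⟨-1, 0⟩), (⟨0, 0⟩, ⟨0, 0⟩, ⟨0, 0⟩, ⟨1, -1⟩),
   (⟨0, 1⟩, ⟨0, 0⟩, ⟨0, -1⟩, ⟨1, 0⟩), (⟨0, 0⟩, ⟨0, 0⟩, ⟨0, 1⟩, ⟨1, -1⟩),
   (⟨1, 0⟩, ⟨0, 0⟩, ⟨-1, -1⟩, ⟨1, 0⟩), (⟨1, 0⟩, ⟨0, 0⟩, ⟨-1, -1⟩, ⟨0, 1⟩),
   (⟨0, 1⟩, ⟨0, 0⟩, ⟨0, -1⟩, ⟨-1, 1⟩), (⟨0, 1⟩, ⟨0, 0⟩, ⟨0, -2⟩, ⟨0, 1⟩),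
   (⟨0, 1⟩, ⟨0, 0⟩, ⟨-1, -1⟩, ⟨0, 1⟩), (⟨0, 0⟩, ⟨1, 0⟩, ⟨0, 0⟩, ⟨-2, 1⟩),
   (⟨0, 0⟩, ⟨1, 0⟩, ⟨0, -1⟩, ⟨-1, 1⟩)]

theorem N_unitTab : ∀ w ∈ unitTab, nmI w.1 w.2.1 w.2.2.1 w.2.2.2 = 1 := by
  simp only [unitTab, List.forall_mem_cons, List.not_mem_nil, IsEmpty.forall_iff, implies_true,
    and_true, nmI, gz, pow_two]
  refine ⟨?_, ?_, ?_, ?_, ?_, ?_, ?_, ?_, ?_, ?_, ?_, ?_, ?_, ?_, ?_⟩ <;>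
    ext <;> simp

/-- Representatives of `ℤ[φ]` modulo `2`. -/
def ofBits (b : Bool × Bool) : ZP := ⟨bif b.1 then 1 else 0, bif b.2 then 1 else 0⟩

theorem exists_ofBits (x : ZP) : ∃ b y, x = ofBits b + 2 * y := by
  have h : ∀ n : ℤ, ∃ (b : Bool) (m : ℤ), n = (bif b then 1 else 0) + 2 * m := fun n => by
    rcases Int.emod_two_eq_zero_or_one n with h | h
    · exact ⟨false, n / 2, by simp; omega⟩
    · exact ⟨true, n / 2, by simp; omega⟩
  obtain ⟨b, m, h1⟩ := h x.re
  obtain ⟨c, k, h2⟩ := h x.im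
  refine ⟨(b, c), ⟨m, k⟩, ?_⟩
  ext
  · simp [ofBits, h1]
  · simp [ofBits, h2]

/-- A finite check over all `256` classes of icosians modulo `2`. -/
theorem unitTab_bits : ∀ p q s t : Bool × Bool,
    nm (nmI (ofBits p) (ofBits q) (ofBits s) (ofBits t)) % 2 = 0 ∨
    ∃ w ∈ unitTab,
      ((mulS w.1 w.2.1 w.2.2.1 w.2.2.2 (ofBits p) (ofBits q) (ofBits s) (ofBits t)).re % 2 = 0 ∧
       (mulS w.1 w.2.1 w.2.2.1 w.2.2.2 (ofBits p) (ofBits q) (ofBits s) (ofBits t)).im % 2 = 0) ∧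
      ((mulT w.1 w.2.1 w.2.2.1 w.2.2.2 (ofBits p) (ofBits q) (ofBits s) (ofBits t)).re % 2 = 0 ∧
       (mulT w.1 w.2.1 w.2.2.1 w.2.2.2 (ofBits p) (ofBits q) (ofBits s) (ofBits t)).im % 2 = 0) := by
  decide +kernel
end Pyth5

/-! ### Gram matrices of pairs of vectors -/

namespace Pyth5
open QuadraticAlgebra
open scoped Quaternion

theorem mk_two_mul (p q s t : ZP) : mk p q (2 * s) (2 * t) =
    lip (p + s) (q + s + t) (s + gz * t) (s + (gz + 1) * t) := by
  unfold lip
  congr 1 <;> ring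

theorem mk_eq_lip {p q s t : ZP} (hs : (2 : ZP) ∣ s) (ht : (2 : ZP) ∣ t) :
    ∃ a b c d, mk p q s t = lip a b c d := by
  obtain ⟨s, rfl⟩ := hs
  obtain ⟨t, rfl⟩ := ht
  exact ⟨_, _, _, _, mk_two_mul ..⟩

/-- An icosian is Lipschitz when its coordinates `s, t` are even; this depends only on its class modulo `2`. -/
theorem exists_unit_mul_eq_lip {ξ : ico} (h : ¬ (2 : ZP) ∣ N ξ) :
    ∃ w : ico, N w = 1 ∧ ∃ a b c d, w * ξ = lip a b c d := by
  obtain ⟨p, q, s, t, rfl⟩ := exists_mk ξ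
  obtain ⟨bp, p', rfl⟩ := exists_ofBits p
  obtain ⟨bq, q', rfl⟩ := exists_ofBits q
  obtain ⟨bs, s', rfl⟩ := exists_ofBits s
  obtain ⟨bt, t', rfl⟩ := exists_ofBits t
  -- reduction modulo `2`, where `simp` can discard the even parts
  have h2 : Ideal.Quotient.mk (Ideal.span {(2 : ZP)}) 2 = 0 :=
    (Ideal.Quotient.eq_zero_iff_dvd _ _).2 dvd_rfl
  rw [N_mk] at h
  rcases unitTab_bits bp bq bs bt with h0 | ⟨w, hw, hS, hT⟩
  · exfalso
    apply h
    have h1 := two_dvd_iff.2 (Int.even_iff.2 h0)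
    rw [← Ideal.Quotient.eq_zero_iff_dvd] at h1 ⊢
    rw [← h1]
    simp only [nmI, map_add, map_mul, map_pow, h2, zero_mul, add_zero]
  · refine ⟨mk w.1 w.2.1 w.2.2.1 w.2.2.2, by rw [N_mk, N_unitTab w hw], ?_⟩
    obtain ⟨P, Q, e⟩ := mk_mul w.1 w.2.1 w.2.2.1 w.2.2.2 (ofBits bp + 2 * p') (ofBits bq + 2 * q')
      (ofBits bs + 2 * s') (ofBits bt + 2 * t')
    rw [e]
    have hS' := two_dvd_iff'.2 ⟨Int.dvd_of_emod_eq_zero hS.1, Int.dvd_of_emod_eq_zero hS.2⟩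
    have hT' := two_dvd_iff'.2 ⟨Int.dvd_of_emod_eq_zero hT.1, Int.dvd_of_emod_eq_zero hT.2⟩
    apply mk_eq_lip
    · rw [← Ideal.Quotient.eq_zero_iff_dvd] at hS' ⊢
      rw [← hS']
      simp only [mulS, map_add, map_sub, map_mul, h2, zero_mul, add_zero]
    · rw [← Ideal.Quotient.eq_zero_iff_dvd] at hT' ⊢
      rw [← hT']
      simp only [mulT, map_add, map_sub, map_mul, h2, zero_mul, add_zero]

theorem lip_mul (a b c d a' b' c' d' : ZP) : lip a b c d * lip a' b' c' d' =
    lip (a * a' - b * b' - c * c' - d * d') (a * b' + b * a' + c * d' - d * c')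
      (a * c' - b * d' + c * a' + d * b') (a * d' + b * c' - c * b' + d * a') := by
  apply Subtype.ext
  rw [Subring.coe_mul]
  apply Quaternion.ext <;> simp only [Quaternion.re_mul, Quaternion.imI_mul, Quaternion.imJ_mul,
    Quaternion.imK_mul, lip_re, lip_imI, lip_imJ, lip_imK, map_add, map_sub, map_mul]

theorem conj_lip (a b c d : ZP) : conj (lip a b c d) = lip a (-b) (-c) (-d) := by
  apply Subtype.ext
  change star (lip a b c d : ℍ[ℝ]) = _
  apply Quaternion.ext <;> simp only [Quaternion.re_star, Quaternion.imI_star, Quaternion.imJ_star,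
    Quaternion.imK_star, lip_re, lip_imI, lip_imJ, lip_imK, map_neg]

theorem lip_injective_re {a b c d a' b' c' d' : ZP} (h : lip a b c d = lip a' b' c' d') : a = a' :=
  e1_injective (by rw [← lip_re a b c d, h, lip_re])

/-- A totally positive semidefinite binary form with odd leading coefficient is a sum of four squares of linear
forms. -/
theorem four_of_odd {a b c : ZP} (ha : TP a) (h2 : ¬ (2 : ZP) ∣ a) (hD : TNN (a * c - b ^ 2)) :
    ∃ f g : Fin 4 → ZP, ∑ i, f i ^ 2 = a ∧ ∑ i, f i * g i = b ∧ ∑ i, g i ^ 2 = c := by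
  obtain ⟨μ₁, μ₂, μ₃, hμ⟩ := three_squares hD
  have hN : N (lip b μ₁ μ₂ μ₃) = a * c := by rw [N_lip]; linear_combination -hμ
  obtain ⟨η, ξ, hβ, hξ⟩ := factor ha h2 (Dvd.intro _ hN.symm)
  obtain ⟨w, hw, l₀, l₁, l₂, l₃, hl⟩ := exists_unit_mul_eq_lip (ξ := ξ) (by rwa [hξ])
  have hNl : N (lip l₀ l₁ l₂ l₃) = a := by rw [← hl, N_mul, hw, hξ, one_mul]
  obtain ⟨κ, hκ⟩ : ∃ κ, κ = η * conj w := ⟨_, rfl⟩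
  have hκl : κ * lip l₀ l₁ l₂ l₃ = lip b μ₁ μ₂ μ₃ := by
    rw [← hl, hκ, hβ, mul_assoc, ← mul_assoc (conj w), conj_mul_self, hw, map_one, one_mul]
  have hlip : ∃ k₀ k₁ k₂ k₃, κ = lip k₀ k₁ k₂ k₃ := by
    -- `a κ` is Lipschitz and `a` is odd, so the last two coordinates of `κ` are even
    have e : cZ a * κ = lip b μ₁ μ₂ μ₃ * conj (lip l₀ l₁ l₂ l₃) := by
      rw [← hκl, mul_assoc, mul_conj, hNl, cZ_comm]
    obtain ⟨p, q, s, t, rfl⟩ := exists_mk κ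
    rw [conj_lip, lip_mul, cZ_mul_mk] at e
    obtain ⟨-, -, hs, ht⟩ := mk_injective e
    exact mk_eq_lip ((prime_two.dvd_or_dvd (Dvd.intro _ hs.symm)).resolve_left h2)
      ((prime_two.dvd_or_dvd (Dvd.intro _ ht.symm)).resolve_left h2)
  obtain ⟨k₀, k₁, k₂, k₃, rfl⟩ := hlip
  have hc : N (lip k₀ k₁ k₂ k₃) = c := by
    apply mul_right_cancel₀ ha.ne_zero
    rw [← hNl, ← N_mul, hκl, hN, hNl, mul_comm]
  rw [lip_mul] at hκl
  have hb := lip_injective_re hκl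
  rw [N_lip] at hNl hc
  refine ⟨![l₀, -l₁, -l₂, -l₃], ![k₀, k₁, k₂, k₃], ?_, ?_, ?_⟩ <;>
    simp only [Fin.sum_univ_four, Matrix.cons_val]
  · rw [← hNl]; ring
  · rw [← hb]; ring
  · exact hc

theorem TNN_sum_sq {ι : Type*} (s : Finset ι) (x : ι → ZP) : TNN (∑ i ∈ s, x i ^ 2) := by
  constructor <;> simp only [map_sum, map_pow] <;> positivity

theorem TNN_gram {ι : Type*} (s : Finset ι) (x y : ι → ZP) :
    TNN ((∑ i ∈ s, x i ^ 2) * (∑ i ∈ s, y i ^ 2) - (∑ i ∈ s, x i * y i) ^ 2) := by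
  constructor <;> simp only [map_sub, map_sum, map_mul, map_pow, sub_nonneg] <;>
    exact Finset.sum_mul_sq_le_sq_mul_sq ..

/-- By symmetry it is enough that one of the two diagonal entries is odd. -/
theorem four_of_odd_gram {ι : Type*} (s : Finset ι) (x y : ι → ZP)
    (h : ¬ ((2 : ZP) ∣ ∑ i ∈ s, x i ^ 2) ∨ ¬ ((2 : ZP) ∣ ∑ i ∈ s, y i ^ 2)) :
    ∃ f g : Fin 4 → ZP, ∑ i, f i ^ 2 = ∑ i ∈ s, x i ^ 2 ∧ ∑ i, f i * g i = ∑ i ∈ s, x i * y i ∧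
      ∑ i, g i ^ 2 = ∑ i ∈ s, y i ^ 2 := by
  have hTP : ∀ z : ι → ZP, ¬ ((2 : ZP) ∣ ∑ i ∈ s, z i ^ 2) → TP (∑ i ∈ s, z i ^ 2) := fun z hz =>
    (TNN_sum_sq s z).eq_zero_or_TP.resolve_left fun h0 => hz (h0 ▸ dvd_zero _)
  rcases h with h | h
  · exact four_of_odd (hTP x h) h (TNN_gram s x y)
  · obtain ⟨g, f, h1, h2, h3⟩ := four_of_odd (hTP y h) h (TNN_gram s y x)
    refine ⟨f, g, h3, ?_, h1⟩
    simpa only [mul_comm] using h2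

/-- Two vectors over `ℤ[φ]` may be replaced by vectors of length `5` with the same Gram matrix. The number `k` is
the trace of the Gram matrix, on which the induction runs. -/
theorem five_gram {ι : Type*} [Fintype ι] (k : ℕ) : ∀ x y : ι → ZP,
    (tr (∑ i, x i ^ 2 + ∑ i, y i ^ 2)).toNat = k →
    ∃ f g : Fin 5 → ZP, ∑ i, f i ^ 2 = ∑ i, x i ^ 2 ∧ ∑ i, f i * g i = ∑ i, x i * y i ∧
      ∑ i, g i ^ 2 = ∑ i, y i ^ 2 := by
  classical
  induction k using Nat.strong_induction_on with
  | _ k ih =>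
  intro x y hk
  by_cases hall : ∀ i, (2 : ZP) ∣ x i ∧ (2 : ZP) ∣ y i
  · choose hx hy using hall
    choose x' hx using hx
    choose y' hy using hy
    have ex : ∑ i, x i ^ 2 = 4 * ∑ i, x' i ^ 2 := by
      rw [Finset.mul_sum]; exact Finset.sum_congr rfl fun i _ => by rw [hx]; ring
    have ey : ∑ i, y i ^ 2 = 4 * ∑ i, y' i ^ 2 := by
      rw [Finset.mul_sum]; exact Finset.sum_congr rfl fun i _ => by rw [hy]; ring
    have exy : ∑ i, x i * y i = 4 * ∑ i, x' i * y' i := by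
      rw [Finset.mul_sum]; exact Finset.sum_congr rfl fun i _ => by rw [hx, hy]; ring
    have hT := (TNN_sum_sq Finset.univ x').add (TNN_sum_sq Finset.univ y')
    rcases hT.eq_zero_or_TP with h0 | h0
    · have hx0 := TNN_sum_sq Finset.univ x'
      have hy0 := TNN_sum_sq Finset.univ y'
      have hx1 : ∑ i, x' i ^ 2 = 0 := by
        refine hx0.eq_zero_or_TP.resolve_right fun h => ?_
        exact (h.add_TNN hy0).ne_zero h0
      have hy1 : ∑ i, y' i ^ 2 = 0 := by
        rwa [hx1, zero_add] at h0
      have hxy := (TNN_gram Finset.univ x' y').1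
      rw [hx1, zero_mul, zero_sub, map_neg, map_pow] at hxy
      have hxy1 : ∑ i, x' i * y' i = 0 := by
        rw [← e1_eq_zero, ← sq_eq_zero_iff]
        exact le_antisymm (by linarith) (sq_nonneg _)
      exact ⟨0, 0, by simp [ex, hx1], by simp [exy, hxy1], by simp [ey, hy1]⟩
    · have h4 : tr (∑ i, x i ^ 2 + ∑ i, y i ^ 2) = 4 * tr (∑ i, x' i ^ 2 + ∑ i, y' i ^ 2) := by
        rw [ex, ey, ← mul_add]
        generalize ∑ i, x' i ^ 2 + ∑ i, y' i ^ 2 = z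
        simp [tr]; ring
      have hpos := h0.tr_pos
      obtain ⟨f, g, h1, h2, h3⟩ := ih _ (by omega) x' y' rfl
      refine ⟨fun i => 2 * f i, fun i => 2 * g i, ?_, ?_, ?_⟩
      · rw [ex, ← h1, Finset.mul_sum]; exact Finset.sum_congr rfl fun i _ => by ring
      · rw [exy, ← h2, Finset.mul_sum]; exact Finset.sum_congr rfl fun i _ => by ring
      · rw [ey, ← h3, Finset.mul_sum]; exact Finset.sum_congr rfl fun i _ => by ring
  · push Not at hall
    obtain ⟨j, hj⟩ := hall
    have hs : ∀ z : ι → ZP, ∑ i, z i = z j + ∑ i ∈ Finset.univ.erase j, z i := fun z =>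
      (Finset.add_sum_erase _ _ (Finset.mem_univ j)).symm
    -- remove the `j`-th term if the remaining Gram matrix has an odd diagonal entry
    by_cases hodd : ¬ ((2 : ZP) ∣ ∑ i ∈ Finset.univ.erase j, x i ^ 2) ∨
        ¬ ((2 : ZP) ∣ ∑ i ∈ Finset.univ.erase j, y i ^ 2)
    · obtain ⟨f, g, h1, h2, h3⟩ := four_of_odd_gram _ x y hodd
      refine ⟨Fin.cons (x j) f, Fin.cons (y j) g, ?_, ?_, ?_⟩
      · rw [Fin.sum_univ_succ, hs, ← h1]; simp
      · rw [Fin.sum_univ_succ, hs, ← h2]; simp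
      · rw [Fin.sum_univ_succ, hs, ← h3]; simp
    · push Not at hodd
      have hodd' : ¬ ((2 : ZP) ∣ ∑ i, x i ^ 2) ∨ ¬ ((2 : ZP) ∣ ∑ i, y i ^ 2) := by
        by_contra! hcon
        rw [hs, hs (fun i => y i ^ 2), dvd_add_left hodd.1, dvd_add_left hodd.2] at hcon
        exact hj (prime_two.dvd_of_dvd_pow hcon.1) (prime_two.dvd_of_dvd_pow hcon.2)
      obtain ⟨f, g, h1, h2, h3⟩ := four_of_odd_gram _ x y hodd'
      refine ⟨Fin.cons 0 f, Fin.cons 0 g, ?_, ?_, ?_⟩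
      · rw [Fin.sum_univ_succ, ← h1]; simp
      · rw [Fin.sum_univ_succ, ← h2]; simp
      · rw [Fin.sum_univ_succ, ← h3]; simp

end Pyth5

/-! ### Orders containing the golden ratio -/

namespace Pyth5

/-- An order of rank `4` over `ℤ` containing `φ` is free over the principal ideal domain `ℤ[φ]`, of rank `2`. -/
theorem exists_two_generators (O : Subring ℝ) (hfree : Module.Free ℤ O)
    (hrank : Module.finrank ℤ O = 4)
    (hphi : Real.goldenRatio ∈ O) :
    ∃ b c : ℝ, b ∈ O ∧ c ∈ O ∧ ∀ z ∈ O, ∃ x y : ZP, z = e1 x * b + e1 y * c := by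
  have hmem : ∀ x : ZP, e1 x ∈ O := fun x => by
    rw [e1_apply]
    exact add_mem (intCast_mem O _) (mul_mem (intCast_mem O _) hphi)
  let j : ZP →+* O := e1.codRestrict O hmem
  let _ : Algebra ZP O := j.toAlgebra
  have hsmul : ∀ (x : ZP) (z : O), ((x • z : O) : ℝ) = e1 x * z := fun x z => rfl
  have : IsScalarTower ℤ ZP O := ⟨fun n x z => by
    apply Subtype.ext
    rw [hsmul, map_zsmul]
    simp [hsmul]; ring⟩
  have : Module.IsTorsionFree ZP O := by
    rw [Module.isTorsionFree_iff_smul_eq_zero]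
    intro x z h
    have h' : e1 x * (z : ℝ) = 0 := by rw [← hsmul, h]; rfl
    rcases mul_eq_zero.mp h' with h' | h'
    · exact Or.inl (e1_eq_zero.mp h')
    · exact Or.inr (Subtype.ext h')
  have : Module.Finite ℤ O := Module.finite_of_finrank_pos (by omega)
  have : Module.Finite ZP O := Module.Finite.of_restrictScalars_finite ℤ ZP O
  have : Module.Free ZP O := Module.free_of_finite_type_torsion_free'
  have h2 : Module.finrank ZP O = 2 := by
    have h := Module.finrank_mul_finrank ℤ ZP O
    rw [QuadraticAlgebra.finrank_eq_two, hrank] at h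
    omega
  let B := Module.finBasisOfFinrankEq ZP O h2
  refine ⟨B 0, B 1, (B 0).2, (B 1).2, fun z hz => ⟨B.repr ⟨z, hz⟩ 0, B.repr ⟨z, hz⟩ 1, ?_⟩⟩
  have h := congrArg (Subtype.val) (B.sum_repr ⟨z, hz⟩)
  rw [Fin.sum_univ_two, Subring.coe_add, hsmul, hsmul] at h
  exact h.symm

theorem sum_sq_binary {n : ℕ} (x y : Fin n → ZP) (b c : ℝ) :
    ∑ i, (e1 (x i) * b + e1 (y i) * c) ^ 2 = e1 (∑ i, x i ^ 2) * b ^ 2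
      + 2 * e1 (∑ i, x i * y i) * (b * c) + e1 (∑ i, y i ^ 2) * c ^ 2 := by
  simp only [map_sum, Finset.mul_sum, Finset.sum_mul, ← Finset.sum_add_distrib]
  exact Finset.sum_congr rfl fun i _ => by simp only [map_pow, map_mul]; ring

end Pyth5

/-- Let `K ⊆ ℝ` be a quartic number field containing `√5` (hence a
quadratic extension of `ℚ(√5)`), and let `O` be an order in `K` (a subring of the ring of
integers of `K` that is a free `ℤ`-module of rank `4`) containing `(1+√5)/2`. Then every
element of `O` that is a sum of squares of elements of `O` is a sum of `5` such squares. -/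
theorem pythagoras_order_sqrt5_le_five
    (K : IntermediateField ℚ ℝ) (h5 : Real.sqrt 5 ∈ K)
    (hdeg : Module.finrank ℚ K = 4)
    (O : Subring ℝ) (hOK : ∀ x ∈ O, x ∈ ringOfInt K)
    (hfree : Module.Free ℤ O) (hrank : Module.finrank ℤ O = 4)
    (hphi : (1 + Real.sqrt 5) / 2 ∈ O) :
    ∀ α ∈ (O : Set ℝ), IsSumOfSquaresIn (O : Set ℝ) α →
      SumOfNSquaresIn (O : Set ℝ) 5 α := by
  rintro α - ⟨n, z, hz, rfl⟩
  obtain ⟨b, c, hb, hc, hbc⟩ := Pyth5.exists_two_generators O hfree hrank hphi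
  choose x y hxy using fun i => hbc (z i) (hz i)
  obtain ⟨f, g, h1, h2, h3⟩ := Pyth5.five_gram _ x y rfl
  have hmem : ∀ w : Pyth5.ZP, Pyth5.e1 w ∈ O := fun w =>
    add_mem (intCast_mem O _) (mul_mem (intCast_mem O _) hphi)
  refine ⟨fun i => Pyth5.e1 (f i) * b + Pyth5.e1 (g i) * c, fun i => ?_, ?_⟩
  · exact add_mem (mul_mem (hmem _) hb) (mul_mem (hmem _) hc)
  · rw [Pyth5.sum_sq_binary f g b c, h1, h2, h3, ← Pyth5.sum_sq_binary]
    exact Finset.sum_congr rfl fun i _ => by rw [hxy i]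
end
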